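/- arXiv:2204.05974 — 11 statements merged into one kernel-verified Lean document; each statement's English description precedes it below -/
import Mathlib

section
/- Let X be a totally disconnected Tychonoff space. Then the following are equivalent: (a) C_p(X, 𝔻) is non-meager; (b) C_p(X, 𝔻) is a Baire space; (c) X has the B_𝔻-property. -/
open Set Topology

/-- `Cp X Y` : continuous functions from `X` to `Y` with the topology of pointwise
convergence, i.e. the subspace topology inherited from the product space `Y^X`. -/
abbrev Cp (X Y : Type*) [TopologicalSpace X] [TopologicalSpace Y] : Type _ :=
  {f : X → Y // Continuous f}

/-- The `B_𝔻`-property: for every pairwise disjoint family `{Δ n = A n ∪ B n}` of nonempty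
finite subsets of `X` with `A n ∩ B n = ∅`, there is a strictly increasing sequence `nk`
and a clopen set `W` with `⋃ k, A (nk k) ⊆ W ⊆ (⋃ k, B (nk k))ᶜ`. -/
def BDProperty (X : Type*) [TopologicalSpace X] : Prop :=
  ∀ A B : ℕ → Set X,
    (∀ n, (A n ∪ B n).Finite) →
    (∀ n, (A n ∪ B n).Nonempty) →
    (∀ n, A n ∩ B n = ∅) →
    (∀ m n, m ≠ n → (A m ∪ B m) ∩ (A n ∪ B n) = ∅) →
    ∃ nk : ℕ → ℕ, StrictMono nk ∧
      ∃ W : Set X, IsClopen W ∧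
        (⋃ k, A (nk k)) ⊆ W ∧ W ⊆ (⋃ k, B (nk k))ᶜ


namespace CpAux

variable {X : Type*} [TopologicalSpace X]

lemma exists_clopen [TotallySeparatedSpace X] (a : X) (F : Finset X) (ha : a ∉ F) :
    ∃ V : Set X, IsClopen V ∧ a ∈ V ∧ ∀ x ∈ F, x ∉ V := by
  classical
  induction F using Finset.induction_on with
  | empty => exact ⟨univ, isClopen_univ, mem_univ _, by simp⟩
  | insert b F hb ih =>
    simp only [Finset.mem_insert, not_or] at ha
    obtain ⟨V, hV, haV, hF⟩ := ih ha.2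
    obtain ⟨U, hU, haU, hbU⟩ := exists_isClopen_of_totally_separated ha.1
    refine ⟨V ∩ U, hV.inter hU, ⟨haV, haU⟩, ?_⟩
    intro x hx
    rcases Finset.mem_insert.1 hx with rfl | hx
    · exact fun h => hbU h.2
    · exact fun h => hF x hx h.1

/-- pointwise exclusive or -/
def xo (f g : Cp X Bool) : Cp X Bool :=
  ⟨fun x => xor (f.1 x) (g.1 x),
    (continuous_of_discreteTopology (f := fun p : Bool × Bool => xor p.1 p.2)).comp
      (f.2.prodMk g.2)⟩

lemma xo_xo (f g : Cp X Bool) : xo (xo f g) g = f := by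
  apply Subtype.ext; funext x; simp [xo]

lemma continuous_xo (g : Cp X Bool) : Continuous (fun f : Cp X Bool => xo f g) := by
  refine Continuous.subtype_mk (continuous_pi fun x => ?_) _
  exact (continuous_of_discreteTopology (f := fun b : Bool => xor b (g.1 x))).comp
    ((continuous_apply x).comp continuous_subtype_val)

/-- translation homeomorphism -/
def xoHomeo (g : Cp X Bool) : Cp X Bool ≃ₜ Cp X Bool where
  toFun f := xo f g
  invFun f := xo f g
  left_inv f := xo_xo f g
  right_inv f := xo_xo f g
  continuous_toFun := continuous_xo g
  continuous_invFun := continuous_xo g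

lemma exists_ext [TotallySeparatedSpace X] (s : X → Bool) (F : Finset X) :
    ∃ f : Cp X Bool, ∀ x ∈ F, f.1 x = s x := by
  classical
  induction F using Finset.induction_on with
  | empty => exact ⟨⟨fun _ => false, continuous_const⟩, by simp⟩
  | insert a F ha ih =>
    obtain ⟨f, hf⟩ := ih
    obtain ⟨V, hV, haV, hVF⟩ := exists_clopen a F ha
    by_cases h : f.1 a = s a
    · refine ⟨f, fun x hx => ?_⟩
      rcases Finset.mem_insert.1 hx with rfl | hx
      · exact h
      · exact hf x hx
    · refine ⟨xo f ⟨V.boolIndicator, (continuous_boolIndicator_iff_isClopen V).2 hV⟩, ?_⟩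
      intro x hx
      rcases Finset.mem_insert.1 hx with rfl | hx
      · have : V.boolIndicator x = true := (V.mem_iff_boolIndicator x).1 haV
        simp only [xo, this]
        revert h
        cases f.1 x <;> cases s x <;> simp
      · have : V.boolIndicator x = false := (V.notMem_iff_boolIndicator x).1 (hVF x hx)
        simp only [xo, this]
        simp [hf x hx]

lemma isOpen_cyl (s : X → Bool) (F : Finset X) :
    IsOpen {f : Cp X Bool | ∀ x ∈ F, f.1 x = s x} := by
  have : {f : Cp X Bool | ∀ x ∈ F, f.1 x = s x} = ⋂ x ∈ F, {f : Cp X Bool | f.1 x = s x} := by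
    ext; simp
  rw [this]
  refine isOpen_biInter_finset fun x _ => ?_
  have hc : Continuous (fun f : Cp X Bool => f.1 x) :=
    (continuous_apply x).comp continuous_subtype_val
  exact (isOpen_discrete {s x}).preimage hc

lemma exists_cyl {U : Set (Cp X Bool)} (hU : IsOpen U) {f : Cp X Bool} (hf : f ∈ U) :
    ∃ F : Finset X, ∀ g : Cp X Bool, (∀ x ∈ F, g.1 x = f.1 x) → g ∈ U := by
  obtain ⟨V, hV, rfl⟩ := isOpen_induced_iff.1 hU
  obtain ⟨F, u, hu, hs⟩ := isOpen_pi_iff.1 hV f.1 hf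
  refine ⟨F, fun g hg => hs ?_⟩
  intro x hx
  rw [hg x hx]
  exact (hu x hx).2

lemma step_aux [TotallySeparatedSpace X] {G : Set (Cp X Bool)} (hG : IsOpen G) (hd : Dense G)
    (F : Finset X) (S : Finset (X → Bool)) :
    ∃ (E : Finset X) (t : X → Bool), Disjoint E F ∧
      ∀ s ∈ S, ∀ f : Cp X Bool, (∀ x ∈ F, f.1 x = s x) → (∀ x ∈ E, f.1 x = t x) → f ∈ G := by
  classical
  induction S using Finset.induction_on with
  | empty => exact ⟨∅, fun _ => false, by simp, by simp⟩
  | insert s S hs ih =>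
    obtain ⟨E, t, hE, h⟩ := ih
    obtain ⟨k, hk⟩ := exists_ext (fun x => if x ∈ F then s x else t x) (F ∪ E)
    obtain ⟨h', hh', hG'⟩ := hd.inter_open_nonempty _ (isOpen_cyl k.1 (F ∪ E)) ⟨k, fun _ _ => rfl⟩
    have e1 : ∀ x ∈ F, h'.1 x = s x := fun x hx => by
      have hx' : x ∈ F ∪ E := Finset.mem_union_left _ hx
      rw [hh' x hx', hk x hx', if_pos hx]
    have e2 : ∀ x ∈ E, h'.1 x = t x := fun x hx => by
      have hx' : x ∈ F ∪ E := Finset.mem_union_right _ hx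
      rw [hh' x hx', hk x hx', if_neg (Finset.disjoint_left.1 hE hx)]
    obtain ⟨E', hE'⟩ := exists_cyl hG hG'
    refine ⟨E ∪ (E' \ F), h'.1, ?_, ?_⟩
    · rw [Finset.disjoint_union_left]
      exact ⟨hE, Finset.sdiff_disjoint⟩
    · intro s' hs' f hf1 hf2
      rcases Finset.mem_insert.1 hs' with rfl | hs'
      · apply hE'
        intro x hx
        by_cases hxF : x ∈ F
        · rw [hf1 x hxF, e1 x hxF]
        · exact hf2 x (by simp [hx, hxF])
      · refine h s' hs' f hf1 fun x hx => ?_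
        rw [hf2 x (by simp [hx]), e2 x hx]

lemma step [TotallySeparatedSpace X] [Infinite X] {G : Set (Cp X Bool)} (hG : IsOpen G)
    (hd : Dense G) (F : Finset X) :
    ∃ (E : Finset X) (t : X → Bool), E.Nonempty ∧ Disjoint E F ∧
      ∀ f : Cp X Bool, (∀ x ∈ E, f.1 x = t x) → f ∈ G := by
  classical
  obtain ⟨E, t, hE, h⟩ := step_aux hG hd F (Finset.univ.image
    (fun (g : F → Bool) (x : X) => if hx : x ∈ F then g ⟨x, hx⟩ else false))
  obtain ⟨a, ha⟩ := Infinite.exists_notMem_finset F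
  refine ⟨insert a E, t, Finset.insert_nonempty _ _, ?_, ?_⟩
  · rw [Finset.disjoint_insert_left]
    exact ⟨ha, hE⟩
  · intro f hf
    refine h _ (Finset.mem_image.2 ⟨fun x => f.1 x.1, Finset.mem_univ _, rfl⟩) f ?_ ?_
    · intro x hx
      simp [hx]
    · intro x hx
      exact hf x (by simp [hx])

lemma inter_nonempty [TotallySeparatedSpace X] [Infinite X] (hB : BDProperty X)
    (G : ℕ → Set (Cp X Bool)) (hG : ∀ n, IsOpen (G n)) (hd : ∀ n, Dense (G n)) :
    (⋂ n, G n).Nonempty := by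
  classical
  let G' : ℕ → Set (Cp X Bool) := fun n => ⋂ i ∈ Finset.range (n + 1), G i
  have hG' : ∀ n, IsOpen (G' n) := fun n => isOpen_biInter_finset fun i _ => hG i
  have hd' : ∀ n, Dense (G' n) := by
    intro n
    induction n with
    | zero => simpa [G'] using hd 0
    | succ n ih =>
      have : G' (n + 1) = G (n + 1) ∩ G' n := by
        simp only [G']
        rw [Finset.range_add_one (n := n + 1), Finset.set_biInter_insert]
      rw [this]
      exact (hd (n + 1)).inter_of_isOpen_left ih (hG _)
  choose E t hne hdis hmem using fun n F => step (hG' n) (hd' n) F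
  let F : ℕ → Finset X := fun n => Nat.rec ∅ (fun n F => F ∪ E n F) n
  have hFs : ∀ n, F (n + 1) = F n ∪ E n (F n) := fun n => rfl
  have hFm : Monotone F := monotone_nat_of_le_succ fun n => by
    rw [hFs]; exact Finset.subset_union_left
  have hlt : ∀ m n, m < n → Disjoint (E m (F m)) (E n (F n)) := by
    intro m n hmn
    have h1 : E m (F m) ⊆ F n :=
      (by rw [hFs]; exact Finset.subset_union_right : E m (F m) ⊆ F (m + 1)).trans (hFm hmn)
    exact (Finset.disjoint_of_subset_right h1 (hdis n (F n))).symm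
  let A : ℕ → Set X := fun n => {x | x ∈ E n (F n) ∧ t n (F n) x = true}
  let B : ℕ → Set X := fun n => {x | x ∈ E n (F n) ∧ t n (F n) x = false}
  have hAB : ∀ n, A n ∪ B n = E n (F n) := by
    intro n; ext x
    simp only [A, B, mem_union, mem_setOf_eq, Finset.mem_coe]
    cases t n (F n) x <;> simp
  obtain ⟨nk, hnk, W, hW, hAW, hWB⟩ := hB A B
    (fun n => by rw [hAB]; exact Finset.finite_toSet _)
    (fun n => by rw [hAB]; exact hne n (F n))
    (fun n => by
      ext x
      simp only [A, B, mem_inter_iff, mem_setOf_eq, mem_empty_iff_false, iff_false]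
      rintro ⟨⟨_, h⟩, ⟨_, h'⟩⟩
      simp [h] at h')
    (fun m n hmn => by
      rw [hAB, hAB, ← Set.disjoint_iff_inter_eq_empty, Finset.disjoint_coe]
      rcases lt_or_gt_of_ne hmn with h | h
      · exact hlt m n h
      · exact (hlt n m h).symm)
  refine ⟨⟨W.boolIndicator, (continuous_boolIndicator_iff_isClopen W).2 hW⟩, ?_⟩
  rw [mem_iInter]
  intro i
  have key := hmem (nk i) (F (nk i))
    ⟨W.boolIndicator, (continuous_boolIndicator_iff_isClopen W).2 hW⟩ (by
      intro x hx
      cases hx' : t (nk i) (F (nk i)) x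
      · refine (W.notMem_iff_boolIndicator x).1 fun hxW => hWB hxW ?_
        exact mem_iUnion.2 ⟨i, hx, hx'⟩
      · exact (W.mem_iff_boolIndicator x).1 (hAW (mem_iUnion.2 ⟨i, hx, hx'⟩)))
  simp only [G', mem_iInter] at key
  exact key i (Finset.mem_range.2 (Nat.lt_succ_of_le (hnk.le_apply)))

lemma baire_of_bd [T1Space X] [TotallySeparatedSpace X] (hB : BDProperty X) :
    BaireSpace (Cp X Bool) := by
  classical
  rcases finite_or_infinite X with hX | hX
  · haveI : Finite (Cp X Bool) := Subtype.finite
    infer_instance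
  refine ⟨fun G hG hd => ?_⟩
  rw [dense_iff_inter_open]
  rintro U hU ⟨f0, hf0⟩
  obtain ⟨F, hF⟩ := exists_cyl hU hf0
  have hext : ∀ g : F → Bool, ∃ f : Cp X Bool, ∀ x : F, f.1 x = g x := by
    intro g
    obtain ⟨f, hf⟩ := exists_ext (fun x => if hx : x ∈ F then g ⟨x, hx⟩ else false) F
    exact ⟨f, fun x => by simp [hf x.1 x.2]⟩
  choose e he using hext
  obtain ⟨d, hdsurj⟩ := exists_surjective_nat (ℕ × (F → Bool))
  obtain ⟨f, hf⟩ := inter_nonempty hB (fun k => xoHomeo (e (d k).2) ⁻¹' G (d k).1)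
    (fun k => (hG _).preimage (xoHomeo _).continuous)
    (fun k => (hd _).preimage (xoHomeo _).isOpenMap)
  rw [mem_iInter] at hf
  let g : F → Bool := fun x => xor (f.1 x) (f0.1 x)
  refine ⟨xo f (e g), hF _ ?_, ?_⟩
  · intro x hx
    have := he g ⟨x, hx⟩
    simp only [xo, this, g]
    cases f.1 x <;> cases f0.1 x <;> rfl
  · rw [mem_iInter]
    intro n
    obtain ⟨k, hk⟩ := hdsurj (n, g)
    have := hf k
    rw [hk] at this
    exact this

lemma bd_of_nonmeagre [TotallySeparatedSpace X]
    (h : ¬ IsMeagre (Set.univ : Set (Cp X Bool))) : BDProperty X := by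
  classical
  intro A B hfin _ hAB hdis
  let P : ℕ → Set (Cp X Bool) := fun m =>
    {f | ∀ x ∈ (hfin m).toFinset, f.1 x = (A m).boolIndicator x}
  have hopen : ∀ n, IsOpen (⋃ m ≥ n, P m) := fun n =>
    isOpen_biUnion fun m _ => isOpen_cyl _ _
  have hdense : ∀ n, Dense (⋃ m ≥ n, P m) := by
    intro n
    rw [dense_iff_inter_open]
    rintro U hU ⟨f0, hf0⟩
    obtain ⟨F, hF⟩ := exists_cyl hU hf0
    have hm : ∃ m ≥ n, Disjoint (hfin m).toFinset F := by
      by_contra! hcon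
      have : ∀ k : ℕ, ∃ x ∈ F, x ∈ A (n + k) ∪ B (n + k) := by
        intro k
        obtain ⟨x, hx1, hx2⟩ := Finset.not_disjoint_iff.1 (hcon (n + k) (Nat.le_add_right _ _))
        exact ⟨x, hx2, (hfin _).mem_toFinset.1 hx1⟩
      choose p hpF hp using this
      have hinj : Function.Injective (fun k => (⟨p k, hpF k⟩ : F)) := by
        intro a b hab
        by_contra hne
        have hpab : p a = p b := congrArg Subtype.val hab
        have := hdis (n + a) (n + b) (by omega)
        have hmem : p a ∈ (A (n + a) ∪ B (n + a)) ∩ (A (n + b) ∪ B (n + b)) :=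
          ⟨hp a, hpab ▸ hp b⟩
        rw [this] at hmem
        exact hmem
      exact not_injective_infinite_finite _ hinj
    obtain ⟨m, hmn, hmF⟩ := hm
    obtain ⟨f, hf⟩ := exists_ext (fun x => if x ∈ F then f0.1 x else (A m).boolIndicator x)
      (F ∪ (hfin m).toFinset)
    refine ⟨f, hF f fun x hx => ?_, mem_iUnion₂.2 ⟨m, hmn, fun x hx => ?_⟩⟩
    · rw [hf x (Finset.mem_union_left _ hx), if_pos hx]
    · rw [hf x (Finset.mem_union_right _ hx), if_neg (Finset.disjoint_left.1 hmF hx)]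
  have hne : (⋂ n, ⋃ m ≥ n, P m).Nonempty := by
    by_contra hemp
    rw [not_nonempty_iff_eq_empty] at hemp
    apply h
    rw [IsMeagre, compl_univ, ← hemp]
    exact countable_iInter_mem.2 fun n => residual_of_dense_open (hopen n) (hdense n)
  obtain ⟨f, hf⟩ := hne
  have hfreq : ∀ n, ∃ m > n, f ∈ P m := by
    intro n
    obtain ⟨m, hm, hfm⟩ := mem_iUnion₂.1 (mem_iInter.1 hf (n + 1))
    exact ⟨m, hm, hfm⟩
  obtain ⟨nk, hnk, hP⟩ := Filter.extraction_of_frequently_atTop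
    (Filter.frequently_atTop'.2 hfreq)
  refine ⟨nk, hnk, f.1 ⁻¹' {true}, (isClopen_discrete _).preimage f.2, ?_, ?_⟩
  · intro x hx
    obtain ⟨k, hk⟩ := mem_iUnion.1 hx
    have := hP k x ((hfin _).mem_toFinset.2 (Or.inl hk))
    rw [mem_preimage, mem_singleton_iff, this]
    exact (mem_iff_boolIndicator _ _).1 hk
  · intro x hx hxB
    obtain ⟨k, hk⟩ := mem_iUnion.1 hxB
    have h1 := hP k x ((hfin _).mem_toFinset.2 (Or.inr hk))
    have hxA : x ∉ A (nk k) := fun hA => by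
      have : x ∈ A (nk k) ∩ B (nk k) := ⟨hA, hk⟩
      rw [hAB] at this
      exact this
    rw [(notMem_iff_boolIndicator _ _).1 hxA] at h1
    rw [mem_preimage, mem_singleton_iff, h1] at hx
    exact Bool.false_ne_true hx

end CpAux

/-- For a totally disconnected (totally separated) Tychonoff space `X`, the space
`C_p(X, 𝔻)` is non-meager iff it is Baire iff `X` has the `B_𝔻`-property.
Here `𝔻 = {0,1}` is the two-point discrete space, realized as `Bool`. -/
theorem statement0 (X : Type*) [TopologicalSpace X] [T1Space X] [CompletelyRegularSpace X]
    [TotallySeparatedSpace X] :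
    List.TFAE
      [¬ IsMeagre (Set.univ : Set (Cp X Bool)),
       BaireSpace (Cp X Bool),
       BDProperty X] := by
  tfae_have 1 → 3 := CpAux.bd_of_nonmeagre
  tfae_have 3 → 2 := CpAux.baire_of_bd
  tfae_have 2 → 1 := by
    intro hb hm
    rw [IsMeagre, compl_univ] at hm
    have hd := dense_of_mem_residual hm
    obtain ⟨x, hx⟩ := (dense_iff_inter_open.1 hd) univ isOpen_univ
      ⟨⟨fun _ => false, continuous_const⟩, mem_univ _⟩
    exact hx.2
  tfae_finish
end

section
/- Let X be a totally disconnected Tychonoff space. Then the following are equivalent: (a) C_p(X, ℕ) is non-meager; (b) C_p(X, ℕ) is a Baire space; (c) X has the B_ℕ-property. -/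
open Set Topology

/-- The `B_ℕ`-property: for every pairwise disjoint family `{Δ n}` of nonempty finite
subsets of `X` there are a strictly increasing sequence `nk` and a discrete family
`{W k}` of clopen subsets of `X` with `Δ (nk k) ⊆ W k` for every `k`. -/
def BNProperty (X : Type*) [TopologicalSpace X] : Prop :=
  ∀ Δ : ℕ → Set X,
    (∀ n, (Δ n).Finite) →
    (∀ n, (Δ n).Nonempty) →
    (∀ m n, m ≠ n → Δ m ∩ Δ n = ∅) →
    ∃ nk : ℕ → ℕ, StrictMono nk ∧
      ∃ W : ℕ → Set X,
        (∀ k, IsClopen (W k)) ∧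
        (∀ k, Δ (nk k) ⊆ W k) ∧
        -- the family `{W k}` is discrete: every point has a neighborhood meeting
        -- at most one member of the family
        (∀ x : X, ∃ U ∈ 𝓝 x, {k : ℕ | (W k ∩ U).Nonempty}.Subsingleton)


theorem aux_ext {X : Type*} [TopologicalSpace X] [TotallySeparatedSpace X]
    (F : Finset X) (p : X → ℕ) : ∃ g : X → ℕ, Continuous g ∧ (∀ x ∈ F, g x = p x) ∧
      ∀ b, (∀ x ∈ F, p x ≤ b) → ∀ x, g x ≤ b := by
  classical
  induction F using Finset.induction_on with
  | empty => exact ⟨fun _ => 0, continuous_const, by simp, by simp⟩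
  | insert a F ha ih =>
    obtain ⟨g, hg, hgF, hgb⟩ := ih
    have hW : ∃ W : Set X, IsClopen W ∧ a ∈ W ∧ ∀ x ∈ F, x ∉ W := by
      have h1 : ∀ x : X, ∃ W : Set X, IsClopen W ∧ a ∈ W ∧ (x ≠ a → x ∉ W) := by
        intro x
        by_cases hx : x = a
        · exact ⟨univ, isClopen_univ, mem_univ _, fun h => absurd hx h⟩
        · obtain ⟨W, hW, h1, h2⟩ := exists_isClopen_of_totally_separated (Ne.symm hx)
          exact ⟨W, hW, h1, fun _ => h2⟩
      choose W hW1 hW2 hW3 using h1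
      refine ⟨⋂ x ∈ F, W x, isClopen_biInter_finset (fun x _ => hW1 x), ?_, ?_⟩
      · simp [hW2]
      · intro x hx h
        simp only [mem_iInter] at h
        exact hW3 x (fun e => ha (e ▸ hx)) (h x hx)
    obtain ⟨W, hWc, haW, hFW⟩ := hW
    refine ⟨fun x => if x ∈ W then p a else g x, ?_, ?_, ?_⟩
    · refine continuous_const.if ?_ hg
      intro x hx
      have : frontier {x | x ∈ W} = ∅ := hWc.frontier_eq
      rw [this] at hx
      exact absurd hx (notMem_empty _)
    · intro x hx
      rcases Finset.mem_insert.1 hx with rfl | hx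
      · simp [haW]
      · simp [hFW x hx, hgF x hx]
    · intro b hb x
      have h1 := hb a (Finset.mem_insert_self _ _)
      have h2 := hgb b (fun x hx => hb x (Finset.mem_insert_of_mem hx)) x
      dsimp only
      split_ifs <;> assumption

theorem aux_sep {X : Type*} [TopologicalSpace X] [TotallySeparatedSpace X]
    (D A : Finset X) (h : Disjoint D A) : ∃ W : Set X, IsClopen W ∧ (∀ x ∈ D, x ∈ W) ∧
      ∀ x ∈ A, x ∉ W := by
  classical
  obtain ⟨g, hg, hgF, -⟩ := aux_ext (D ∪ A) (fun x => if x ∈ D then 1 else 0)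
  refine ⟨g ⁻¹' {1}, (isClopen_discrete _).preimage hg, ?_, ?_⟩
  · intro x hx
    simp [hgF x (Finset.mem_union_left _ hx), hx]
  · intro x hx
    have : x ∉ D := fun h' => Finset.disjoint_left.1 h h' hx
    simp [hgF x (Finset.mem_union_right _ hx), this]

theorem aux_nhd {X : Type*} [TopologicalSpace X] (U : Set (Cp X ℕ)) (hU : IsOpen U)
    (f : Cp X ℕ) (hf : f ∈ U) : ∃ F : Finset X, ∀ g : Cp X ℕ, (∀ x ∈ F, g.1 x = f.1 x) → g ∈ U := by
  obtain ⟨V, hV, rfl⟩ := isOpen_induced_iff.1 hU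
  obtain ⟨I, u, h1, h2⟩ := isOpen_pi_iff.1 hV f.1 hf
  refine ⟨I, fun g hg => h2 ?_⟩
  intro x hx
  rw [hg x hx]
  exact (h1 x hx).2

theorem aux_open {X : Type*} [TopologicalSpace X] (F : Finset X) (p : X → ℕ) :
    IsOpen {f : Cp X ℕ | ∀ x ∈ F, f.1 x = p x} := by
  have : {f : Cp X ℕ | ∀ x ∈ F, f.1 x = p x} = ⋂ x ∈ F, (fun f : Cp X ℕ => f.1 x) ⁻¹' {p x} := by
    ext f; simp
  rw [this]
  refine isOpen_biInter_finset fun x _ => (isOpen_discrete _).preimage ?_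
  exact (continuous_apply x).comp continuous_subtype_val

theorem aux_step0 {X : Type*} [TopologicalSpace X] [TotallySeparatedSpace X]
    (U : Set (Cp X ℕ)) (hU : IsOpen U) (hd : Dense U) (A : Finset X) (T : Finset (X → ℕ)) :
    ∃ (D : Finset X) (h : X → ℕ), Disjoint D A ∧ ∀ s ∈ T, ∀ f : Cp X ℕ,
      (∀ x ∈ A, f.1 x = s x) → (∀ x ∈ D, f.1 x = h x) → f ∈ U := by
  classical
  induction T using Finset.induction_on with
  | empty => exact ⟨∅, fun _ => 0, by simp, by simp⟩
  | insert s T hs ih =>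
    obtain ⟨D, h, hD, hT⟩ := ih
    obtain ⟨g, hg, hgF, -⟩ := aux_ext (A ∪ D) (fun x => if x ∈ A then s x else h x)
    have hV : IsOpen ({f : Cp X ℕ | ∀ x ∈ A ∪ D, f.1 x = g x}) := aux_open _ _
    obtain ⟨f0, hf0, hf0U⟩ := hd.inter_open_nonempty _ hV ⟨⟨g, hg⟩, fun x _ => rfl⟩
    obtain ⟨F, hF⟩ := aux_nhd U hU f0 hf0U
    have hA : ∀ x ∈ A, f0.1 x = s x := by
      intro x hx
      rw [hf0 x (Finset.mem_union_left _ hx), hgF x (Finset.mem_union_left _ hx), if_pos hx]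
    have hDD : ∀ x ∈ D, f0.1 x = h x := by
      intro x hx
      rw [hf0 x (Finset.mem_union_right _ hx), hgF x (Finset.mem_union_right _ hx),
        if_neg (Finset.disjoint_left.1 hD hx)]
    refine ⟨D ∪ (F \ A), f0.1, ?_, ?_⟩
    · rw [Finset.disjoint_union_left]
      exact ⟨hD, Finset.sdiff_disjoint⟩
    · intro t ht f hfA hfD
      rcases Finset.mem_insert.1 ht with rfl | ht
      · apply hF
        intro x hx
        by_cases hxA : x ∈ A
        · rw [hfA x hxA, hA x hxA]
        · exact hfD x (Finset.mem_union_right _ (Finset.mem_sdiff.2 ⟨hx, hxA⟩))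
      · refine hT t ht f hfA fun x hx => ?_
        rw [hfD x (Finset.mem_union_left _ hx), hDD x hx]

theorem aux_step {X : Type*} [TopologicalSpace X] [TotallySeparatedSpace X] [Infinite X]
    (U : Set (Cp X ℕ)) (hU : IsOpen U) (hd : Dense U) (A : Finset X) (b : ℕ) :
    ∃ (D : Finset X) (h : X → ℕ), Disjoint D A ∧ D.Nonempty ∧ ∀ f : Cp X ℕ,
      (∀ x ∈ A, f.1 x ≤ b) → (∀ x ∈ D, f.1 x = h x) → f ∈ U := by
  classical
  let T : Finset (X → ℕ) := Finset.univ.image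
    (fun (s : A → Fin (b+1)) => fun x => if h : x ∈ A then (s ⟨x, h⟩ : ℕ) else 0)
  obtain ⟨D, h, hD, hT⟩ := aux_step0 U hU hd A T
  obtain ⟨a, ha⟩ := Infinite.exists_notMem_finset A
  refine ⟨insert a D, h, ?_, Finset.insert_nonempty _ _, ?_⟩
  · rw [Finset.disjoint_insert_left]; exact ⟨ha, hD⟩
  · intro f hfA hfD
    refine hT (fun x => if h : x ∈ A then f.1 x else 0) ?_ f ?_ ?_
    · refine Finset.mem_image.2 ⟨fun x => ⟨f.1 x.1, Nat.lt_succ_of_le (hfA x.1 x.2)⟩,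
        Finset.mem_univ _, rfl⟩
    · intro x hx; simp [hx]
    · intro x hx; exact hfD x (Finset.mem_insert_of_mem hx)

theorem aux_glue {X : Type*} [TopologicalSpace X] (W : ℕ → Set X) (hW : ∀ k, IsClopen (W k))
    (hd : ∀ x : X, ∃ U ∈ 𝓝 x, {k : ℕ | (W k ∩ U).Nonempty}.Subsingleton)
    (g : X → ℕ) (hg : Continuous g) (h : ℕ → X → ℕ) (hh : ∀ k, Continuous (h k)) :
    ∃ f : X → ℕ, Continuous f ∧ (∀ k, ∀ x ∈ W k, f x = h k x) ∧
      (∀ x, (∀ k, x ∉ W k) → f x = g x) := by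
  classical
  have huniq : ∀ x j k, x ∈ W j → x ∈ W k → j = k := by
    intro x j k hj hk
    obtain ⟨U, hU, hs⟩ := hd x
    exact hs ⟨x, hj, mem_of_mem_nhds hU⟩ ⟨x, hk, mem_of_mem_nhds hU⟩
  let f : X → ℕ := fun x => if e : ∃ k, x ∈ W k then h e.choose x else g x
  have f1 : ∀ k, ∀ x ∈ W k, f x = h k x := by
    intro k x hx
    have e : ∃ k, x ∈ W k := ⟨k, hx⟩
    have : f x = h e.choose x := dif_pos e
    rw [this, huniq x _ _ e.choose_spec hx]
  have f2 : ∀ x, (∀ k, x ∉ W k) → f x = g x := by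
    intro x hx
    exact dif_neg (fun ⟨k, hk⟩ => hx k hk)
  refine ⟨f, ?_, f1, f2⟩
  rw [continuous_iff_continuousAt]
  intro x
  by_cases e : ∃ k, x ∈ W k
  · obtain ⟨k, hk⟩ := e
    refine (hh k).continuousAt.congr ?_
    filter_upwards [(hW k).isOpen.mem_nhds hk] with y hy
    exact (f1 k y hy).symm
  · push Not at e
    obtain ⟨U, hU, hs⟩ := hd x
    refine hg.continuousAt.congr ?_
    by_cases e' : ∃ k, (W k ∩ U).Nonempty
    · obtain ⟨k, hk⟩ := e'
      filter_upwards [hU, (hW k).compl.isOpen.mem_nhds (e k)] with y hy hyk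
      refine (f2 y fun j hj => ?_).symm
      have : j = k := hs ⟨y, hj, hy⟩ hk
      exact hyk (this ▸ hj)
    · filter_upwards [hU] with y hy
      exact (f2 y fun j hj => e' ⟨j, y, hj, hy⟩).symm

theorem aux_ac {X : Type*} [TopologicalSpace X] [TotallySeparatedSpace X]
    (hm : ¬ IsMeagre (Set.univ : Set (Cp X ℕ))) : BNProperty X := by
  classical
  intro Δ hfin hne hdisj
  let U : ℕ → Set (Cp X ℕ) := fun N => {f | ∃ n, N ≤ n ∧ ∀ x ∈ Δ n, f.1 x = n}
  have hUo : ∀ N, IsOpen (U N) := by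
    intro N
    have : U N = ⋃ n ∈ Ici N, {f : Cp X ℕ | ∀ x ∈ (hfin n).toFinset, f.1 x = (fun _ => n) x} := by
      ext f; simp [U]
    rw [this]
    exact isOpen_biUnion fun n _ => aux_open _ _
  have hUd : ∀ N, Dense (U N) := by
    intro N
    rw [dense_iff_inter_open]
    rintro V hV ⟨f, hf⟩
    obtain ⟨F, hF⟩ := aux_nhd V hV f hf
    have hn : ∃ n, N ≤ n ∧ ∀ x ∈ F, x ∉ Δ n := by
      by_contra hcon
      push Not at hcon
      have : Nonempty X := ⟨(hne 0).some⟩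
      choose! y hy1 hy2 using hcon
      have hinj : InjOn y (Ici N) := by
        intro m hm n hn hmn
        by_contra hne'
        have : y m ∈ Δ m ∩ Δ n := ⟨hy2 m hm, hmn ▸ hy2 n hn⟩
        rw [hdisj m n hne'] at this
        exact this
      exact (Set.infinite_of_injOn_mapsTo hinj (t := (F : Set X)) (fun n hn => hy1 n hn)
        (Set.Ici_infinite N)) F.finite_toSet
    obtain ⟨n, hNn, hn⟩ := hn
    obtain ⟨g, hg, hgF, -⟩ := aux_ext (F ∪ (hfin n).toFinset)
      (fun x => if x ∈ F then f.1 x else n)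
    refine ⟨⟨g, hg⟩, hF _ ?_, n, hNn, ?_⟩
    · intro x hx
      simp [hgF x (Finset.mem_union_left _ hx), hx]
    · intro x hx
      have hx' : x ∉ F := fun h => hn x h hx
      simp [hgF x (Finset.mem_union_right _ ((hfin n).mem_toFinset.2 hx)), hx']
  have hne' : (⋂ N, U N).Nonempty := by
    by_contra hcon
    rw [not_nonempty_iff_eq_empty] at hcon
    apply hm
    have : (⋂ N, U N) ∈ residual (Cp X ℕ) :=
      countable_iInter_mem.2 fun N => residual_of_dense_open (hUo N) (hUd N)
    rw [hcon] at this
    rw [IsMeagre, compl_univ]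
    exact this
  obtain ⟨f, hf⟩ := hne'
  rw [mem_iInter] at hf
  have hfreq : ∃ᶠ n in Filter.atTop, ∀ x ∈ Δ n, f.1 x = n := by
    rw [Filter.frequently_atTop]
    exact fun N => hf N
  obtain ⟨nk, hnk, hnk'⟩ := Filter.extraction_of_frequently_atTop hfreq
  refine ⟨nk, hnk, fun k => f.1 ⁻¹' {nk k}, fun k => (isClopen_discrete _).preimage f.2,
    fun k x hx => hnk' k x hx, fun x => ⟨f.1 ⁻¹' {f.1 x},
      ((isOpen_discrete _).preimage f.2).mem_nhds rfl, ?_⟩⟩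
  rintro j ⟨y, hy1, hy2⟩ k ⟨z, hz1, hz2⟩
  simp only [mem_preimage, mem_singleton_iff] at hy1 hy2 hz1 hz2
  exact hnk.injective (by rw [← hy1, ← hz1, hy2, hz2])

theorem aux_cb {X : Type*} [TopologicalSpace X] [TotallySeparatedSpace X] [Infinite X]
    (hB : BNProperty X) : BaireSpace (Cp X ℕ) := by
  classical
  refine ⟨fun U0 hU0 hd0 => ?_⟩
  let U : ℕ → Set (Cp X ℕ) := fun n => ⋂ i ∈ Finset.range (n+1), U0 i
  have hUo : ∀ n, IsOpen (U n) := fun n => isOpen_biInter_finset fun i _ => hU0 i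
  have hUd : ∀ n, Dense (U n) := by
    intro n
    induction n with
    | zero => simpa [U] using hd0 0
    | succ n ih =>
      have : U (n+1) = U0 (n+1) ∩ U n := by
        simp only [U]
        rw [Finset.range_add_one, Finset.set_biInter_insert]
      rw [this]
      exact (hd0 _).inter_of_isOpen_left ih (hU0 _)
  rw [dense_iff_inter_open]
  rintro V hV ⟨v, hv⟩
  obtain ⟨A0, hA0⟩ := aux_nhd V hV v hv
  obtain ⟨g, hg, hgF, hgb⟩ := aux_ext A0 v.1
  choose D H hD1 hD2 hD3 using fun n A b => aux_step (U n) (hUo n) (hUd n) A b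
  let st : ℕ → Finset X × ℕ := fun n => Nat.rec (A0, A0.sup v.1)
    (fun n s => (s.1 ∪ D n s.1 s.2, max s.2 ((D n s.1 s.2).sup (H n s.1 s.2)))) n
  let A : ℕ → Finset X := fun n => (st n).1
  let b : ℕ → ℕ := fun n => (st n).2
  let E : ℕ → Finset X := fun n => D n (A n) (b n)
  let h : ℕ → X → ℕ := fun n => H n (A n) (b n)
  have hAs : ∀ n, A (n+1) = A n ∪ E n := fun n => rfl
  have hbs : ∀ n, b (n+1) = max (b n) ((E n).sup (h n)) := fun n => rfl
  have hAm : Monotone A := monotone_nat_of_le_succ fun n => by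
    rw [hAs]; exact Finset.subset_union_left
  have hbm : Monotone b := monotone_nat_of_le_succ fun n => by
    rw [hbs]; exact le_max_left _ _
  have hEA : ∀ n, Disjoint (E n) (A n) := fun n => hD1 _ _ _
  have hEE : ∀ m n, m < n → Disjoint (E n) (E m) := by
    intro m n hmn
    refine (hEA n).mono_right (le_trans ?_ (hAm (Nat.succ_le_of_lt hmn)))
    show E m ⊆ A (m+1)
    rw [hAs]; exact Finset.subset_union_right
  obtain ⟨nk, hnk, W, hWc, hWE, hWd⟩ := hB (fun n => (E n : Set X)) (fun n => (E n).finite_toSet)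
    (fun n => Finset.coe_nonempty.2 (hD2 _ _ _)) (by
      intro m n hmn
      rw [← disjoint_iff_inter_eq_empty, Finset.disjoint_coe]
      rcases lt_or_gt_of_ne hmn with h | h
      · exact (hEE _ _ h).symm
      · exact hEE _ _ h)
  choose C hC1 hC2 hC3 using fun k => aux_sep (E (nk k)) (A (nk k)) (hEA _)
  choose t ht1 ht2 ht3 using fun k => aux_ext (E (nk k)) (h (nk k))
  obtain ⟨f, hf, hfW, hfg⟩ := aux_glue (fun k => W k ∩ C k) (fun k => (hWc k).inter (hC1 k))
    (by
      intro x
      obtain ⟨O, hO, hs⟩ := hWd x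
      refine ⟨O, hO, hs.anti ?_⟩
      rintro k ⟨y, hy1, hy2⟩
      exact ⟨y, hy1.1, hy2⟩) g hg t ht1
  have hfU : ∀ k, (⟨f, hf⟩ : Cp X ℕ) ∈ U (nk k) := by
    intro k
    apply hD3 (nk k) (A (nk k)) (b (nk k))
    · intro x hx
      show f x ≤ b (nk k)
      by_cases e : ∃ j, x ∈ W j ∩ C j
      · obtain ⟨j, hj⟩ := e
        rw [hfW j x hj]
        have hjk : nk j < nk k := by
          by_contra hcon
          exact hC3 j x (hAm (not_lt.1 hcon) hx) hj.2
        refine le_trans (ht3 j (b (nk j + 1)) ?_ x) (hbm hjk)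
        intro y hy
        rw [hbs]
        exact le_max_of_le_right (Finset.le_sup (f := h (nk j)) hy)
      · push Not at e
        rw [hfg x e]
        refine le_trans (hgb (b 0) ?_ x) (hbm (Nat.zero_le _))
        intro y hy
        exact Finset.le_sup (f := v.1) hy
    · intro x hx
      show f x = _
      rw [hfW k x ⟨hWE k hx, hC2 k x hx⟩, ht2 k x hx]
  refine ⟨⟨f, hf⟩, hA0 _ ?_, ?_⟩
  · intro x hx
    show f x = _
    rw [hfg x, hgF x hx]
    intro k hk
    exact hC3 k x (hAm (Nat.zero_le _) hx) hk.2
  · rw [mem_iInter]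
    intro i
    have := hfU i
    simp only [U, mem_iInter] at this
    exact this i (Finset.mem_range.2 (Nat.lt_succ_of_le (hnk.id_le i)))

theorem aux_fin {X : Type*} [TopologicalSpace X] [Finite X] : BaireSpace (Cp X ℕ) := by
  have : DiscreteTopology (Cp X ℕ) := inferInstance
  refine ⟨fun U0 _ hd0 => ?_⟩
  have : ∀ n, U0 n = univ := fun n => dense_discrete.1 (hd0 n)
  simp [this]

/-- For a totally disconnected (totally separated) Tychonoff space `X`, the space
`C_p(X, ℕ)` is non-meager iff it is Baire iff `X` has the `B_ℕ`-property.
Here `ℕ` carries the discrete topology. -/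
theorem statement1 (X : Type*) [TopologicalSpace X] [T1Space X] [CompletelyRegularSpace X]
    [TotallySeparatedSpace X] :
    List.TFAE
      [¬ IsMeagre (Set.univ : Set (Cp X ℕ)),
       BaireSpace (Cp X ℕ),
       BNProperty X] := by
  tfae_have 1 → 3 := aux_ac
  tfae_have 3 → 2 := by
    intro h
    rcases finite_or_infinite X with hX | hX
    · exact aux_fin
    · exact aux_cb h
  tfae_have 2 → 1 := by
    intro h hm
    have : Nonempty (Cp X ℕ) := ⟨⟨fun _ => 0, continuous_const⟩⟩
    rw [IsMeagre, compl_univ] at hm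
    have := dense_of_mem_residual hm
    exact this.nonempty.ne_empty rfl
  tfae_finish
end

section
/- Let ψ : K → M be a surjective continuous almost open map between topological spaces, and let X be a Tychonoff space such that C_p(X,K) is a dense subspace of the product space K^X. If C_p(X,K) is a Baire space then C_p(X,M) is a Baire space, and if C_p(X,K) is non-meager then C_p(X,M) is non-meager. -/
open Set Topology Function

/-- A map is almost open if the image of every nonempty open set has nonempty interior. -/
def AlmostOpenMap {K M : Type*} [TopologicalSpace K] [TopologicalSpace M] (ψ : K → M) : Prop :=
  ∀ U : Set K, IsOpen U → U.Nonempty → (interior (ψ '' U)).Nonempty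

/-- Let `ψ : K → M` be a surjective continuous almost open map and let `X` be a Tychonoff
space such that `C_p(X,K)` is dense in `K^X`. If `C_p(X,K)` is Baire then so is `C_p(X,M)`,
and if `C_p(X,K)` is non-meager then so is `C_p(X,M)`. -/
theorem statement3 (X K M : Type*) [TopologicalSpace X] [T1Space X] [CompletelyRegularSpace X]
    [TopologicalSpace K] [TopologicalSpace M]
    (ψ : K → M) (hsurj : Surjective ψ) (hcont : Continuous ψ) (hao : AlmostOpenMap ψ)
    (hdense : Dense (Set.range (Subtype.val : Cp X K → X → K))) :
    (BaireSpace (Cp X K) → BaireSpace (Cp X M)) ∧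
    (¬ IsMeagre (Set.univ : Set (Cp X K)) → ¬ IsMeagre (Set.univ : Set (Cp X M))) := by
  classical
  -- density, pointwise
  have key : ∀ S : Set (X → K), IsOpen S → S.Nonempty → ∃ f : Cp X K, f.1 ∈ S := by
    intro S hS hne
    obtain ⟨y, hy, ⟨f, rfl⟩⟩ := hdense.inter_open_nonempty S hS hne
    exact ⟨f, hy⟩
  let Φ : (X → K) → (X → M) := fun h x => ψ (h x)
  have hΦ : Continuous Φ := by
    refine continuous_pi fun x => hcont.comp (continuous_apply x)
  let P : Cp X K → Cp X M := fun f => ⟨fun x => ψ (f.1 x), hcont.comp f.2⟩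
  have hP : Continuous P := Continuous.subtype_mk (hΦ.comp continuous_subtype_val) _
  have hrange : ∀ W : Set (Cp X M), IsOpen W → W.Nonempty → (P ⁻¹' W).Nonempty := by
    intro W hW hne
    obtain ⟨W', hW', rfl⟩ := isOpen_induced_iff.1 hW
    obtain ⟨g, hg⟩ := hne
    obtain ⟨f, hf⟩ := key (Φ ⁻¹' W') (hW'.preimage hΦ)
      ⟨fun x => surjInv hsurj (g.1 x), by
        have : Φ (fun x => surjInv hsurj (g.1 x)) = g.1 := by
          funext x; exact surjInv_eq hsurj (g.1 x)
        simpa [mem_preimage, this] using hg⟩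
    exact ⟨f, hf⟩
  have hpre : ∀ U : Set (Cp X M), IsOpen U → Dense U → Dense (P ⁻¹' U) := by
    intro U hU hUd
    obtain ⟨U', hU', rfl⟩ := isOpen_induced_iff.1 hU
    rw [dense_iff_inter_open]
    intro W hW hne
    obtain ⟨W', hW', rfl⟩ := isOpen_induced_iff.1 hW
    obtain ⟨f0, hf0⟩ := hne
    obtain ⟨F, u, hu, hsub⟩ := isOpen_pi_iff.1 hW' f0.1 hf0
    have hV : ∀ x : X, ∃ k : K, x ∈ F → ψ k ∈ interior (ψ '' u x) := by
      intro x
      by_cases hx : x ∈ F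
      · obtain ⟨m, hm⟩ := hao (u x) (hu x hx).1 ⟨_, (hu x hx).2⟩
        obtain ⟨k, rfl⟩ := hsurj m
        exact ⟨k, fun _ => hm⟩
      · exact ⟨f0.1 x, fun h => absurd h hx⟩
    choose h0 hh0 using hV
    have hbox : IsOpen ((F : Set X).pi fun x => interior (ψ '' u x)) :=
      isOpen_set_pi F.finite_toSet fun x _ => isOpen_interior
    obtain ⟨f1, hf1⟩ := key (Φ ⁻¹' _) (hbox.preimage hΦ) ⟨h0, fun x hx => hh0 x hx⟩
    obtain ⟨g, hgV, hgU⟩ := hUd.inter_open_nonempty _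
      (hbox.preimage (continuous_subtype_val (p := fun f : X → M => Continuous f)))
      ⟨P f1, hf1⟩
    have hk : ∀ x : X, ∃ k : K, ψ k = g.1 x ∧ (x ∈ F → k ∈ u x) := by
      intro x
      by_cases hx : x ∈ F
      · obtain ⟨k, hk, hk'⟩ := interior_subset (hgV x hx)
        exact ⟨k, hk', fun _ => hk⟩
      · obtain ⟨k, hk⟩ := hsurj (g.1 x)
        exact ⟨k, hk, fun h => absurd h hx⟩
    choose h hh1 hh2 using hk
    obtain ⟨f, hfW, hfU⟩ := key (((F : Set X).pi u) ∩ Φ ⁻¹' U')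
      ((isOpen_set_pi F.finite_toSet fun x hx => (hu x hx).1).inter (hU'.preimage hΦ))
      ⟨h, fun x hx => hh2 x hx, by
        have : Φ h = g.1 := funext hh1
        simpa [mem_preimage, this] using hgU⟩
    exact ⟨f, hsub hfW, hfU⟩
  constructor
  · intro hB
    refine ⟨fun U hUo hUd => ?_⟩
    rw [dense_iff_inter_open]
    intro W hW hne
    have hd : Dense (⋂ n, P ⁻¹' U n) :=
      dense_iInter_of_isOpen_nat (fun n => (hUo n).preimage hP) fun n => hpre _ (hUo n) (hUd n)
    obtain ⟨f, hfW, hf⟩ := hd.inter_open_nonempty _ (hW.preimage hP) (hrange W hW hne)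
    exact ⟨P f, hfW, mem_iInter.2 fun n => mem_iInter.1 hf n⟩
  · intro hn hm
    apply hn
    rw [isMeagre_iff_countable_union_isNowhereDense] at hm ⊢
    obtain ⟨S, hS, hSc, hSu⟩ := hm
    refine ⟨(fun s => P ⁻¹' closure s) '' S, ?_, hSc.image _, ?_⟩
    · rintro _ ⟨s, hs, rfl⟩
      have hc : IsClosed (P ⁻¹' closure s) := isClosed_closure.preimage hP
      have := hpre (closure s)ᶜ isClosed_closure.isOpen_compl
        (interior_eq_empty_iff_dense_compl.1 (hS s hs))
      rw [preimage_compl] at this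
      rw [IsNowhereDense, hc.closure_eq]
      exact interior_eq_empty_iff_dense_compl.2 this
    · intro f _
      obtain ⟨s, hs, hfs⟩ := hSu (mem_univ (P f))
      exact ⟨_, ⟨s, hs, rfl⟩, subset_closure hfs⟩
end

section
/- Let ψ : P → L be a surjective continuous almost open map between topological spaces and let E ⊆ P be a dense subset of P. If E (with the subspace topology) is a Baire space then ψ(E) (with the subspace topology of L) is a Baire space, and if E is non-meager then ψ(E) is non-meager. -/
open Set Topology Function

theorem preimage_dense_aux {P L : Type*} [TopologicalSpace P] [TopologicalSpace L]
    (ψ : P → L) (hsurj : Surjective ψ) (hcont : Continuous ψ) (hao : AlmostOpenMap ψ)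
    (E : Set P) (hdense : Dense E) (V : Set (ψ '' E)) (hV : IsOpen V) (hVd : Dense V) :
    Dense ((E.imageFactorization ψ) ⁻¹' V) := by
  obtain ⟨W, hW, rfl⟩ := isOpen_induced_iff.1 hV
  have hED : Dense (ψ '' E) := hsurj.denseRange.dense_image hcont hdense
  rw [dense_iff_inter_open]
  rintro U' hU' ⟨x, hx⟩
  obtain ⟨U, hU, rfl⟩ := isOpen_induced_iff.1 hU'
  have hne : (interior (ψ '' U)).Nonempty := hao U hU ⟨x, hx⟩
  obtain ⟨y, hy, hyE⟩ := hED.inter_open_nonempty _ isOpen_interior hne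
  obtain ⟨z, hz, hzW⟩ := hVd.inter_open_nonempty
    (Subtype.val ⁻¹' interior (ψ '' U)) (isOpen_interior.preimage continuous_subtype_val)
    ⟨⟨y, hyE⟩, hy⟩
  obtain ⟨p, hpU, hp⟩ := interior_subset hz
  obtain ⟨q, ⟨hqU, hqW⟩, hqE⟩ := hdense.inter_open_nonempty (U ∩ ψ ⁻¹' W)
    (hU.inter (hW.preimage hcont)) ⟨p, hpU, by
      change ψ p ∈ W
      rw [hp]; exact hzW⟩
  exact ⟨⟨q, hqE⟩, hqU, hqW⟩

/-- Let `ψ : P → L` be a surjective continuous almost open map and let `E ⊆ P` be dense.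
If `E` is Baire then `ψ(E)` is Baire, and if `E` is non-meager then `ψ(E)` is non-meager
(both with the subspace topology). -/
theorem statement4 (P L : Type*) [TopologicalSpace P] [TopologicalSpace L]
    (ψ : P → L) (hsurj : Surjective ψ) (hcont : Continuous ψ) (hao : AlmostOpenMap ψ)
    (E : Set P) (hdense : Dense E) :
    (BaireSpace E → BaireSpace (ψ '' E)) ∧
    (¬ IsMeagre (Set.univ : Set E) → ¬ IsMeagre (Set.univ : Set (ψ '' E))) := by
  have hf : Continuous (E.imageFactorization ψ) :=
    (hcont.comp continuous_subtype_val).subtype_mk _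
  have hs : Surjective (E.imageFactorization ψ) := imageFactorization_surjective
  have key := preimage_dense_aux ψ hsurj hcont hao E hdense
  constructor
  · intro hB
    refine ⟨fun g ho hd => ?_⟩
    have h := dense_iInter_of_isOpen_nat (fun n => (ho n).preimage hf)
      (fun n => key _ (ho n) (hd n))
    rw [← preimage_iInter] at h
    have h2 := hs.denseRange.dense_image hf h
    rwa [image_preimage_eq _ hs] at h2
  · intro h hm
    apply h
    unfold IsMeagre at hm ⊢
    rw [mem_residual_iff] at hm ⊢
    obtain ⟨S, ho, hd, hc, hsub⟩ := hm
    refine ⟨(fun t => (E.imageFactorization ψ) ⁻¹' t) '' S, ?_, ?_, hc.image _, ?_⟩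
    · rintro _ ⟨t, ht, rfl⟩
      exact (ho t ht).preimage hf
    · rintro _ ⟨t, ht, rfl⟩
      exact key t (ho t ht) (hd t ht)
    · intro x hx
      have : E.imageFactorization ψ x ∈ (univ : Set (ψ '' E))ᶜ :=
        hsub fun t ht => hx _ ⟨t, ht, rfl⟩
      exact absurd (mem_univ _) this
end

section
/- Let L be a nonempty metrizable compact Hausdorff space without isolated points and let C = {0,1}^ℕ denote the Cantor space. Then there exists a surjective continuous irreducible map ψ : C → L. -/
open Set Topology Function

/-- A surjective map `f : X → Y` is irreducible if no proper closed subset of `X`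
maps onto `Y`. -/
def IrreducibleMap {X Y : Type*} [TopologicalSpace X] [TopologicalSpace Y] (f : X → Y) : Prop :=
  ∀ Z : Set X, IsClosed Z → f '' Z = Set.univ → Z = Set.univ

theorem aux_dense {L : Type*} [TopologicalSpace L] (O V : Set L) (hO : IsOpen O) :
    O ⊆ closure ((O ∩ V) ∪ (O \ closure V)) := by
  intro x hx
  by_cases h : x ∈ closure V
  · exact closure_mono subset_union_left (hO.inter_closure ⟨hx, h⟩)
  · exact subset_closure (Or.inr ⟨hx, h⟩)

theorem aux_split {L : Type*} [TopologicalSpace L] [T2Space L]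
    (hni : ∀ x : L, ¬ IsOpen ({x} : Set L)) (O : Set L) (hO : IsOpen O) (hne : O.Nonempty) :
    ∃ A B : Set L, (IsOpen A ∧ A.Nonempty) ∧ (IsOpen B ∧ B.Nonempty) ∧ Disjoint A B ∧
      A ⊆ O ∧ B ⊆ O ∧ O ⊆ closure (A ∪ B) := by
  obtain ⟨x, hx⟩ := hne
  have : ∃ y ∈ O, y ≠ x := by
    by_contra! h
    apply hni x
    have : O = {x} := Set.eq_singleton_iff_unique_mem.2 ⟨hx, h⟩
    rwa [← this]
  obtain ⟨y, hy, hyx⟩ := this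
  obtain ⟨V, W, hV, hW, hxV, hyW, hd⟩ := t2_separation hyx.symm
  refine ⟨O ∩ V, O \ closure V, ⟨hO.inter hV, x, hx, hxV⟩,
    ⟨hO.sdiff isClosed_closure, y, hy, ?_⟩, ?_, inter_subset_left, sdiff_subset,
    aux_dense O V hO⟩
  · exact fun h => Set.disjoint_left.1 (hd.closure_left hW) h hyW
  · exact Set.disjoint_left.2 fun z hz hz' => hz'.2 (subset_closure hz.2)

theorem aux_split2 {L : Type*} [TopologicalSpace L] [T2Space L]
    (hni : ∀ x : L, ¬ IsOpen ({x} : Set L)) (O : Set L) (hO : IsOpen O) (hne : O.Nonempty)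
    (U : Set L) (hU : IsOpen U) :
    ∃ A B : Set L, (IsOpen A ∧ A.Nonempty) ∧ (IsOpen B ∧ B.Nonempty) ∧ Disjoint A B ∧
      A ⊆ O ∧ B ⊆ O ∧ O ⊆ closure (A ∪ B) ∧ (A ⊆ U ∨ Disjoint A U) ∧ (B ⊆ U ∨ Disjoint B U) := by
  by_cases h1 : (O ∩ U).Nonempty
  · by_cases h2 : (O \ closure U).Nonempty
    · refine ⟨O ∩ U, O \ closure U, ⟨hO.inter hU, h1⟩, ⟨hO.sdiff isClosed_closure, h2⟩, ?_,
        inter_subset_left, sdiff_subset, aux_dense O U hO, Or.inl inter_subset_right, Or.inr ?_⟩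
      · exact Set.disjoint_left.2 fun z hz hz' => hz'.2 (subset_closure hz.2)
      · exact Set.disjoint_left.2 fun z hz hz' => hz.2 (subset_closure hz')
    · obtain ⟨A, B, hA, hB, hd, hAO, hBO, hc⟩ := aux_split hni (O ∩ U) (hO.inter hU) h1
      refine ⟨A, B, hA, hB, hd, hAO.trans inter_subset_left, hBO.trans inter_subset_left, ?_,
        Or.inl (hAO.trans inter_subset_right), Or.inl (hBO.trans inter_subset_right)⟩
      have h3 := aux_dense O U hO
      rw [Set.not_nonempty_iff_eq_empty.1 h2, union_empty] at h3
      exact h3.trans (closure_minimal hc isClosed_closure)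
  · obtain ⟨A, B, hA, hB, hd, hAO, hBO, hc⟩ := aux_split hni O hO hne
    have h3 : Disjoint O U := by
      rwa [Set.disjoint_iff_inter_eq_empty, ← Set.not_nonempty_iff_eq_empty]
    exact ⟨A, B, hA, hB, hd, hAO, hBO, hc, Or.inr (h3.mono_left hAO), Or.inr (h3.mono_left hBO)⟩

/-- A dyadic scheme of nonempty open sets. -/
theorem aux_scheme {L : Type*} [TopologicalSpace L] [T2Space L] [Nonempty L]
    (hni : ∀ x : L, ¬ IsOpen ({x} : Set L)) (U : ℕ → Set L) (hU : ∀ n, IsOpen (U n)) :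
    ∃ O : List Bool → Set L, O [] = univ ∧ (∀ l, IsOpen (O l)) ∧ (∀ l, (O l).Nonempty) ∧
      (∀ l b, O (b :: l) ⊆ O l) ∧ (∀ l, Disjoint (O (false :: l)) (O (true :: l))) ∧
      (∀ l, O l ⊆ closure (O (false :: l) ∪ O (true :: l))) ∧
      (∀ l b, O (b :: l) ⊆ U l.length ∨ Disjoint (O (b :: l)) (U l.length)) := by
  have key : ∀ (n : ℕ) (O : {O : Set L // IsOpen O ∧ O.Nonempty}),
      ∃ f : Bool → {O : Set L // IsOpen O ∧ O.Nonempty},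
        (∀ b, (f b : Set L) ⊆ O) ∧ Disjoint (f false : Set L) (f true : Set L) ∧
        (O : Set L) ⊆ closure ((f false : Set L) ∪ f true) ∧
        ∀ b, (f b : Set L) ⊆ U n ∨ Disjoint (f b : Set L) (U n) := by
    rintro n ⟨O, hO, hne⟩
    obtain ⟨A, B, hA, hB, hd, hAO, hBO, hc, h1, h2⟩ := aux_split2 hni O hO hne (U n) (hU n)
    refine ⟨fun b => if b then ⟨B, hB⟩ else ⟨A, hA⟩, ?_, ?_, ?_, ?_⟩
    · intro b; cases b
      · exact hAO
      · exact hBO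
    · exact hd
    · exact hc
    · intro b; cases b
      · exact h1
      · exact h2
  choose f h1 h2 h3 h4 using key
  let O : List Bool → {O : Set L // IsOpen O ∧ O.Nonempty} := fun l =>
    List.rec ⟨univ, isOpen_univ, univ_nonempty⟩ (fun b l o => f l.length o b) l
  refine ⟨fun l => (O l).1, rfl, fun l => (O l).2.1, fun l => (O l).2.2, ?_, ?_, ?_, ?_⟩
  · exact fun l b => h1 l.length (O l) b
  · exact fun l => h2 l.length (O l)
  · exact fun l => h3 l.length (O l)
  · exact fun l b => h4 l.length (O l) b

theorem aux_disj {L : Type*} (O : List Bool → Set L) (hsub : ∀ l b, O (b :: l) ⊆ O l)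
    (hd : ∀ l, Disjoint (O (false :: l)) (O (true :: l))) :
    ∀ l l' : List Bool, l.length = l'.length → (O l ∩ O l').Nonempty → l = l' := by
  intro l
  induction l with
  | nil => intro l' h _; exact (List.length_eq_zero_iff.1 h.symm).symm
  | cons b l ih =>
    intro l' h hne
    cases l' with
    | nil => simp at h
    | cons b' l' =>
      obtain ⟨p, hp, hp'⟩ := hne
      have := ih l' (by simpa using h) ⟨p, hsub _ _ hp, hsub _ _ hp'⟩
      subst this
      have h0 := Set.disjoint_left.1 (hd l)
      cases b <;> cases b'
      · rfl
      · exact (h0 hp hp').elim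
      · exact (h0 hp' hp).elim
      · rfl

/-- For every nonempty metrizable compact Hausdorff space `L` without isolated points
there exists a surjective continuous irreducible map from the Cantor space
`C = {0,1}^ℕ` onto `L`. -/
theorem statement5 (L : Type*) [TopologicalSpace L] [CompactSpace L] [T2Space L]
    [TopologicalSpace.MetrizableSpace L] [Nonempty L]
    (hni : ∀ x : L, ¬ IsOpen ({x} : Set L)) :
    ∃ ψ : (ℕ → Bool) → L, Continuous ψ ∧ Surjective ψ ∧ IrreducibleMap ψ := by
  have hsc : SecondCountableTopology L := by
    let _ := TopologicalSpace.metrizableSpaceMetric L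
    infer_instance
  obtain ⟨U, hU⟩ := (TopologicalSpace.countable_countableBasis L).exists_eq_range
    (by
      obtain ⟨v, hv, -⟩ := (TopologicalSpace.isBasis_countableBasis L).exists_subset_of_mem_open
        (mem_univ (Classical.arbitrary L)) isOpen_univ
      exact ⟨v, hv⟩)
  have hbasis := TopologicalSpace.isBasis_countableBasis L
  rw [hU] at hbasis
  obtain ⟨O, hnil, hop, hne, hsub, hd, hcov, hUU⟩ :=
    aux_scheme hni U (fun n => hbasis.isOpen (mem_range_self n))
  have hex : ∀ x : ℕ → Bool, ∃ p, ∀ n, p ∈ closure (O (PiNat.res x n)) := by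
    intro x
    have := IsCompact.nonempty_iInter_of_sequence_nonempty_isCompact_isClosed
      (fun n => closure (O (PiNat.res x n))) (fun n => closure_mono (hsub _ _))
      (fun n => (hne _).closure) isClosed_closure.isCompact (fun n => isClosed_closure)
    simpa [Set.Nonempty] using this
  have huniq : ∀ (x : ℕ → Bool) p q, (∀ n, p ∈ closure (O (PiNat.res x n))) →
      (∀ n, q ∈ closure (O (PiNat.res x n))) → p = q := by
    intro x p q hp hq
    by_contra hpq
    obtain ⟨V, W, hV, hW, hpV, hqW, hdd⟩ := t2_separation hpq
    obtain ⟨_, ⟨n, rfl⟩, hpn, hnV⟩ := hbasis.exists_subset_of_mem_open hpV hV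
    have hqn : q ∉ closure (U n) := fun h =>
      Set.disjoint_left.1 ((hdd.mono_left hnV).closure_left hW) h hqW
    have h := hUU (PiNat.res x n) (x n)
    rw [PiNat.res_length] at h
    rcases h with h | h
    · exact hqn (closure_mono h (hq (n + 1)))
    · exact Set.disjoint_left.1 (h.closure_left (hbasis.isOpen (mem_range_self n)))
        (hp (n + 1)) hpn
  choose ψ hψ using hex
  refine ⟨ψ, ?_, ?_, ?_⟩
  · have hG : IsClosed (⋂ n, {z : (ℕ → Bool) × L | z.2 ∈ closure (O (PiNat.res z.1 n))}) := by
      refine isClosed_iInter fun n => ⟨isOpen_prod_iff.2 fun x p hxp => ?_⟩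
      refine ⟨PiNat.cylinder x n, (closure (O (PiNat.res x n)))ᶜ, PiNat.isOpen_cylinder _ x n,
        isClosed_closure.isOpen_compl, PiNat.self_mem_cylinder x n, hxp, ?_⟩
      rintro ⟨y, q⟩ ⟨hy, hq⟩
      rw [PiNat.cylinder_eq_res] at hy
      change ¬ (q ∈ closure (O (PiNat.res y n)))
      rw [show PiNat.res y n = PiNat.res x n from hy]
      exact hq
    refine continuous_iff_isClosed.2 fun F hF => ?_
    have := isClosedMap_fst_of_compactSpace _ (hG.inter (hF.preimage continuous_snd))
    convert this using 1
    ext x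
    constructor
    · intro hx
      exact ⟨(x, ψ x), ⟨mem_iInter.2 fun n => hψ x n, hx⟩, rfl⟩
    · rintro ⟨⟨y, q⟩, ⟨h1, h2⟩, rfl⟩
      have h3 := huniq y _ q (hψ y) (fun n => mem_iInter.1 h1 n)
      change ψ y ∈ F
      rw [h3]
      exact h2
  · intro p
    have step : ∀ l, ∃ b, p ∈ closure (O l) → p ∈ closure (O (b :: l)) := by
      intro l
      by_cases h : p ∈ closure (O l)
      · have h' := closure_minimal (hcov l) isClosed_closure h
        rw [closure_union] at h'
        rcases h' with h' | h'
        · exact ⟨false, fun _ => h'⟩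
        · exact ⟨true, fun _ => h'⟩
      · exact ⟨false, fun h' => (h h').elim⟩
    choose c hc using step
    let g : ℕ → List Bool := fun n => Nat.rec [] (fun _ l => c l :: l) n
    have hg : ∀ n, PiNat.res (fun n => c (g n)) n = g n := by
      intro n
      induction n with
      | zero => rfl
      | succ n ih => rw [PiNat.res_succ, ih]
    refine ⟨fun n => c (g n), huniq _ _ _ (hψ _) fun n => ?_⟩
    rw [hg]
    induction n with
    | zero => change p ∈ closure (O []); simp [hnil]
    | succ n ih => exact hc _ ih
  · intro Z hZ hZs
    by_contra hne'
    obtain ⟨x, hx⟩ := (Set.ne_univ_iff_exists_notMem Z).1 hne'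
    obtain ⟨_, ⟨y, n, rfl⟩, hxn, hsubn⟩ :=
      (PiNat.isTopologicalBasis_cylinders (fun _ : ℕ => Bool)).exists_subset_of_mem_open
        (show x ∈ Zᶜ from hx) hZ.isOpen_compl
    obtain ⟨p, hp⟩ := hne (PiNat.res y n)
    obtain ⟨z, hz, rfl⟩ : p ∈ ψ '' Z := hZs ▸ mem_univ p
    have h1 := mem_closure_iff.1 (hψ z n) _ (hop _) hp
    have h2 := aux_disj O hsub hd _ _ (by simp [PiNat.res_length]) h1
    refine hsubn (?_ : z ∈ PiNat.cylinder y n) hz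
    rw [PiNat.cylinder_eq_res]
    exact h2.symm
end

section
/- Let X be a totally disconnected Tychonoff space. Then the following are equivalent: (a) C_p(X, 𝔻) is a Baire space; (b) there exists a nonempty disconnected metrizable compact Hausdorff space K such that C_p(X, K) is a Baire space; (c) C_p(X, L) is a Baire space for every metrizable compact Hausdorff space L. -/
open Set Topology

theorem interp {X Y : Type*} [TopologicalSpace X] [TopologicalSpace Y]
    [TotallySeparatedSpace X] (E : Finset X) (y : X → Y) :
    ∃ f : X → Y, Continuous f ∧ ∀ x ∈ E, f x = y x := by
  classical
  induction E using Finset.induction_on with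
  | empty =>
    by_cases h : Nonempty X
    · obtain ⟨x⟩ := h
      exact ⟨fun _ => y x, continuous_const, by simp⟩
    · exact ⟨y, by
        rw [not_nonempty_iff] at h
        exact continuous_of_discreteTopology, by simp⟩
  | insert a E ha ih =>
    obtain ⟨f, hf, hE⟩ := ih
    have key : ∀ b : X, ∃ C : Set X, IsClopen C ∧ a ∈ C ∧ (b ≠ a → b ∉ C) := by
      intro b
      by_cases hb : b = a
      · exact ⟨univ, isClopen_univ, mem_univ _, fun h => absurd hb h⟩
      · obtain ⟨U, hU, h1, h2⟩ := exists_isClopen_of_totally_separated (Ne.symm hb)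
        exact ⟨U, hU, h1, fun _ => h2⟩
    choose C hC haC hbC using key
    have hD : IsClopen (⋂ b ∈ E, C b) := by
      exact E.finite_toSet.isClopen_biInter (fun b _ => hC b)
    refine ⟨(⋂ b ∈ E, C b).piecewise (fun _ => y a) f, ?_, ?_⟩
    · refine Continuous.piecewise ?_ continuous_const hf
      intro x hx
      rw [hD.frontier_eq] at hx
      exact absurd hx (by simp)
    · intro x hx
      rw [Finset.mem_insert] at hx
      rcases hx with rfl | hx
      · rw [Set.piecewise_eq_of_mem]
        simp only [mem_iInter]
        exact fun b _ => haC b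
      · rw [Set.piecewise_eq_of_notMem]
        · exact hE x hx
        · simp only [mem_iInter]
          intro h
          exact hbC x (fun h' => ha (h' ▸ hx)) (h x hx)

/-- basic neighbourhoods -/
theorem cp_nhd {X Y : Type*} [TopologicalSpace X] [TopologicalSpace Y] {O : Set (Cp X Y)}
    (hO : IsOpen O) {f : Cp X Y} (hf : f ∈ O) :
    ∃ (E : Finset X) (V : X → Set Y), (∀ x ∈ E, IsOpen (V x) ∧ f.1 x ∈ V x) ∧
      ∀ g : Cp X Y, (∀ x ∈ E, g.1 x ∈ V x) → g ∈ O := by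
  obtain ⟨S, hS, rfl⟩ := isOpen_induced_iff.1 hO
  obtain ⟨E, V, h1, h2⟩ := isOpen_pi_iff.1 hS f.1 hf
  exact ⟨E, V, h1, fun g hg => h2 (fun x hx => hg x hx)⟩

theorem cp_agree {X Y : Type*} [TopologicalSpace X] [TopologicalSpace Y] {O : Set (Cp X Y)}
    (hO : IsOpen O) {f : Cp X Y} (hf : f ∈ O) :
    ∃ (E : Finset X), ∀ g : Cp X Y, (∀ x ∈ E, g.1 x = f.1 x) → g ∈ O := by
  obtain ⟨E, V, h1, h2⟩ := cp_nhd hO hf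
  exact ⟨E, fun g hg => h2 g fun x hx => by rw [hg x hx]; exact (h1 x hx).2⟩

theorem cp_isOpen {X Y : Type*} [TopologicalSpace X] [TopologicalSpace Y] (E : Finset X)
    (V : X → Set Y) (hV : ∀ x ∈ E, IsOpen (V x)) :
    IsOpen {g : Cp X Y | ∀ x ∈ E, g.1 x ∈ V x} := by
  have : {g : Cp X Y | ∀ x ∈ E, g.1 x ∈ V x} = ⋂ x ∈ E, (fun g : Cp X Y => g.1 x) ⁻¹' V x := by
    ext g; simp
  rw [this]
  refine isOpen_biInter_finset fun x hx => (hV x hx).preimage ?_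
  exact (continuous_apply x).comp continuous_subtype_val

/-- transfer of the Baire property along feebly open surjections -/
theorem transfer {X A B : Type*} [TopologicalSpace X] [TopologicalSpace A] [TopologicalSpace B]
    [TotallySeparatedSpace X] (φ : A → B) (hφ : Continuous φ) (hs : Function.Surjective φ)
    (ho : ∀ O : Set A, IsOpen O → O.Nonempty → (interior (φ '' O)).Nonempty)
    (hA : BaireSpace (Cp X A)) : BaireSpace (Cp X B) := by
  classical
  let Φ : Cp X A → Cp X B := fun f => ⟨φ ∘ f.1, hφ.comp f.2⟩
  have hΦ : Continuous Φ := by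
    refine Continuous.subtype_mk (continuous_pi fun x => ?_) _
    exact hφ.comp ((continuous_apply x).comp continuous_subtype_val)
  have hpre : ∀ U : Set (Cp X B), IsOpen U → Dense U → Dense (Φ ⁻¹' U) := by
    intro U hU hUd
    rw [dense_iff_inter_open]
    rintro O hO ⟨f0, hf0⟩
    obtain ⟨E, V, h1, h2⟩ := cp_nhd hO hf0
    have hb : ∀ x : X, ∃ b : B, x ∈ E → b ∈ interior (φ '' V x) := by
      intro x
      by_cases hx : x ∈ E
      · obtain ⟨b, hb⟩ := ho (V x) (h1 x hx).1 ⟨_, (h1 x hx).2⟩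
        exact ⟨b, fun _ => hb⟩
      · exact ⟨φ (f0.1 x), fun h => absurd h hx⟩
    choose b hb using hb
    obtain ⟨f1, hf1, hf1E⟩ := interp E b
    obtain ⟨g, hgV, hgU⟩ := dense_iff_inter_open.1 hUd _
      (cp_isOpen E (fun x => interior (φ '' V x)) (fun x _ => isOpen_interior))
      ⟨⟨f1, hf1⟩, fun x hx => by
        show f1 x ∈ _
        rw [hf1E x hx]; exact hb x hx⟩
    obtain ⟨E', hE'⟩ := cp_agree hU hgU
    have ha : ∀ x : X, ∃ a : A, φ a = g.1 x ∧ (x ∈ E → a ∈ V x) := by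
      intro x
      by_cases hx : x ∈ E
      · obtain ⟨a, ha, ha'⟩ := interior_subset (hgV x hx)
        exact ⟨a, ha', fun _ => ha⟩
      · obtain ⟨a, ha⟩ := hs (g.1 x)
        exact ⟨a, ha, fun h => absurd h hx⟩
    choose a ha haV using ha
    obtain ⟨h, hh, hhE⟩ := interp (E ∪ E') a
    refine ⟨⟨h, hh⟩, h2 _ fun x hx => ?_, hE' _ fun x hx => ?_⟩
    · show h x ∈ _
      rw [hhE x (Finset.mem_union_left _ hx)]; exact haV x hx
    · show φ (h x) = _
      rw [hhE x (Finset.mem_union_right _ hx)]; exact ha x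
  have hdr : DenseRange Φ := by
    rw [DenseRange, dense_iff_inter_open]
    rintro W hW ⟨g, hg⟩
    obtain ⟨E, hE⟩ := cp_agree hW hg
    choose s hs using hs
    obtain ⟨h, hh, hhE⟩ := interp E (fun x => s (g.1 x))
    exact ⟨Φ ⟨h, hh⟩, hE _ fun x hx => by
      show φ (h x) = _
      rw [hhE x hx, hs], mem_range_self _⟩
  refine ⟨fun U hU hUd => ?_⟩
  have := dense_iInter_of_isOpen_nat (fun n => (hU n).preimage hΦ)
    (fun n => hpre _ (hU n) (hUd n))
  rw [← preimage_iInter] at this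
  have h2 := hdr.dense_image hΦ this
  exact h2.mono (image_preimage_subset _ _)

theorem lemmaT {X : Type*} [TopologicalSpace X] [TotallySeparatedSpace X]
    (hB : BaireSpace (Cp X Bool)) (F : ℕ → Finset X)
    (hF : ∀ m n, m ≠ n → Disjoint (F m) (F n)) (y : X → Bool) (E : Finset X)
    (N : Set ℕ) (hN : N.Infinite) :
    ∃ g : X → Bool, Continuous g ∧ (∀ x ∈ E, g x = y x) ∧
      {n ∈ N | ∀ x ∈ F n, g x = y x}.Infinite := by
  classical
  let U : ℕ → Set (Cp X Bool) := fun m => ⋃ n ∈ {n | n ∈ N ∧ m < n},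
    {g : Cp X Bool | ∀ x ∈ F n, g.1 x ∈ ({y x} : Set Bool)}
  have hU : ∀ m, IsOpen (U m) := fun m =>
    isOpen_biUnion fun n _ => cp_isOpen _ _ fun _ _ => isOpen_discrete _
  have hUd : ∀ m, Dense (U m) := by
    intro m
    rw [dense_iff_inter_open]
    rintro O hO ⟨f, hf⟩
    obtain ⟨G, hG⟩ := cp_agree hO hf
    -- only finitely many `F n` meet `G`
    have hfin : {n | ¬ Disjoint (F n) G}.Finite := by
      have hx : ∀ x : X, {n | x ∈ F n}.Finite := by
        intro x
        refine Set.Subsingleton.finite fun a ha b hb => ?_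
        by_contra hab
        exact Finset.disjoint_left.1 (hF a b hab) ha hb
      refine (G.finite_toSet.biUnion (fun x _ => hx x)).subset ?_
      intro n hn
      obtain ⟨x, h1, h2⟩ := Finset.not_disjoint_iff.1 hn
      exact mem_biUnion (show x ∈ (G : Set X) from h2) h1
    obtain ⟨n, ⟨hnN, hn⟩, hmn⟩ := (hN.sdiff hfin).exists_gt m
    have hn : Disjoint (F n) G := not_not.1 hn
    obtain ⟨h, hh, hhE⟩ := interp (F n ∪ G) (fun x => if x ∈ F n then y x else f.1 x)
    refine ⟨⟨h, hh⟩, hG _ fun x hx => ?_, mem_biUnion (show n ∈ {n | n ∈ N ∧ m < n} from ⟨hnN, hmn⟩) fun x hx => ?_⟩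
    · show h x = _
      rw [hhE x (Finset.mem_union_right _ hx), if_neg (Finset.disjoint_right.1 hn hx)]
    · show h x = _
      rw [hhE x (Finset.mem_union_left _ hx), if_pos hx]
  obtain ⟨h, hh, hhE⟩ := interp E y
  obtain ⟨g, hgE, hg⟩ := dense_iff_inter_open.1 (dense_iInter_of_isOpen_nat hU hUd) _
      (cp_isOpen E (fun x => ({y x} : Set Bool)) (fun x _ => isOpen_discrete _))
      ⟨⟨h, hh⟩, fun x hx => hhE x hx⟩
  refine ⟨g.1, g.2, hgE, Set.infinite_of_forall_exists_gt fun m => ?_⟩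
  obtain ⟨n, ⟨hnN, hmn⟩, hn⟩ := mem_iUnion₂.1 (mem_iInter.1 hg m)
  exact ⟨n, ⟨hnN, hn⟩, hmn⟩

theorem lemmaD {X : Type*} [TopologicalSpace X] [TotallySeparatedSpace X]
    (hB : BaireSpace (Cp X Bool)) (F : ℕ → Finset (X × ℕ))
    (hF : ∀ m n, m ≠ n → Disjoint (F m) (F n)) (y : X × ℕ → Bool) (T0 : Finset (X × ℕ)) :
    ∃ g : ℕ → X → Bool, (∀ i, Continuous (g i)) ∧ (∀ p ∈ T0, g p.2 p.1 = y p) ∧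
      ∀ j, ∃ n, j ≤ n ∧ ∀ p ∈ F n, g p.2 p.1 = y p := by
  classical
  let sl : Finset (X × ℕ) → ℕ → Finset X := fun S j => (S.filter (fun p => p.2 = j)).image Prod.fst
  have hsl : ∀ S j x, x ∈ sl S j ↔ (x, j) ∈ S := by
    intro S j x
    simp [sl]
  have step : ∀ (j : ℕ) (s : {N : Set ℕ // N.Infinite} × Finset (X × ℕ)),
      ∃ (g : X → Bool) (s' : {N : Set ℕ // N.Infinite} × Finset (X × ℕ)),
        Continuous g ∧ s'.1.1 ⊆ s.1.1 ∧ s.2 ⊆ s'.2 ∧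
        (∃ n ∈ s.1.1, j ≤ n ∧ F n ⊆ s'.2) ∧ (∀ x, (x, j) ∈ s'.2 → g x = y (x, j)) ∧
        ∀ n ∈ s'.1.1, ∀ x, (x, j) ∈ F n → g x = y (x, j) := by
    rintro j ⟨⟨N, hN⟩, T⟩
    obtain ⟨n, hnN, hn⟩ := hN.exists_gt j
    obtain ⟨g, hg, hgE, hgi⟩ := lemmaT hB (fun n => sl (F n) j) (by
      intro a b hab
      rw [Finset.disjoint_left]
      intro x h1 h2
      rw [hsl] at h1 h2
      exact Finset.disjoint_left.1 (hF a b hab) h1 h2) (fun x => y (x, j))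
      (sl (T ∪ F n) j) N hN
    refine ⟨g, ⟨⟨_, hgi⟩, T ∪ F n⟩, hg, fun _ h => h.1, Finset.subset_union_left,
      ⟨n, hnN, hn.le, Finset.subset_union_right⟩, fun x hx => hgE x ((hsl _ _ _).2 hx), ?_⟩
    intro k hk x hx
    exact hk.2 x ((hsl _ _ _).2 hx)
  choose g s hg hN hT hn hgT hgN using step
  let st : ℕ → {N : Set ℕ // N.Infinite} × Finset (X × ℕ) := fun j =>
    Nat.rec (⟨univ, infinite_univ⟩, T0) (fun j t => s j t) j
  have hst : ∀ j, st (j + 1) = s j (st j) := fun j => rfl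
  have hNm : Antitone fun j => (st j).1.1 := antitone_nat_of_succ_le fun j => hN j (st j)
  have hTm : Monotone fun j => (st j).2 := monotone_nat_of_le_succ fun j => hT j (st j)
  refine ⟨fun j => g j (st j), fun j => hg _ _, ?_, ?_⟩
  · rintro ⟨x, j⟩ hp
    exact hgT j (st j) x (hTm (Nat.zero_le (j + 1)) hp)
  · intro j
    obtain ⟨n, hnN, hjn, hFn⟩ := hn j (st j)
    refine ⟨n, hjn, ?_⟩
    rintro ⟨x, i⟩ hp
    rcases lt_or_ge i j with hij | hij
    · exact hgN i (st i) n (hNm (show i + 1 ≤ j from hij) hnN) x hp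
    · exact hgT i (st i) x (hTm (show j + 1 ≤ i + 1 by omega) (hFn hp))

theorem interp2 {X : Type*} [TopologicalSpace X] [TotallySeparatedSpace X]
    (E : Finset (X × ℕ)) (q : X × ℕ → Bool) :
    ∃ h : Cp X (ℕ → Bool), ∀ p ∈ E, h.1 p.1 p.2 = q p := by
  classical
  obtain ⟨f, hf, h⟩ := interp (E.image Prod.fst) (fun x n => q (x, n))
  exact ⟨⟨f, hf⟩, fun p hp => by
    show f p.1 p.2 = _
    rw [h p.1 (Finset.mem_image_of_mem _ hp)]⟩

theorem isOpen2 {X : Type*} [TopologicalSpace X]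
    (E : Finset (X × ℕ)) (q : X × ℕ → Bool) :
    IsOpen {h : Cp X (ℕ → Bool) | ∀ p ∈ E, h.1 p.1 p.2 = q p} := by
  have : {h : Cp X (ℕ → Bool) | ∀ p ∈ E, h.1 p.1 p.2 = q p} =
      ⋂ p ∈ E, (fun g : Cp X (ℕ → Bool) => g.1 p.1 p.2) ⁻¹' {q p} := by
    ext g; simp
  rw [this]
  refine isOpen_biInter_finset fun p hp => (isOpen_discrete _).preimage ?_
  exact (continuous_apply p.2).comp ((continuous_apply p.1).comp continuous_subtype_val)

theorem agree2 {X : Type*} [TopologicalSpace X] {O : Set (Cp X (ℕ → Bool))}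
    (hO : IsOpen O) {f : Cp X (ℕ → Bool)} (hf : f ∈ O) :
    ∃ (E : Finset (X × ℕ)), ∀ g : Cp X (ℕ → Bool),
      (∀ p ∈ E, g.1 p.1 p.2 = f.1 p.1 p.2) → g ∈ O := by
  classical
  obtain ⟨E, V, h1, h2⟩ := cp_nhd hO hf
  have : ∀ x, ∃ I : Finset ℕ, x ∈ E → ∀ z : ℕ → Bool, (∀ i ∈ I, z i = f.1 x i) → z ∈ V x := by
    intro x
    by_cases hx : x ∈ E
    · obtain ⟨I, u, h3, h4⟩ := isOpen_pi_iff.1 (h1 x hx).1 _ (h1 x hx).2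
      exact ⟨I, fun _ z hz => h4 fun i hi => by rw [hz i hi]; exact (h3 i hi).2⟩
    · exact ⟨∅, fun h => absurd h hx⟩
  choose I hI using this
  refine ⟨E.biUnion fun x => (I x).image fun i => (x, i), fun g hg => h2 g fun x hx => ?_⟩
  refine hI x hx _ fun i hi => hg (x, i) ?_
  simp only [Finset.mem_biUnion, Finset.mem_image]
  exact ⟨x, hx, i, hi, rfl⟩

theorem lemma1 {X : Type*} [TopologicalSpace X] [TotallySeparatedSpace X]
    (U : Set (Cp X (ℕ → Bool))) (hU : IsOpen U) (hUd : Dense U) (E : Finset (X × ℕ)) :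
    ∃ (F : Finset (X × ℕ)) (y : X × ℕ → Bool), Disjoint E F ∧
      ∀ h : Cp X (ℕ → Bool), (∀ p ∈ F, h.1 p.1 p.2 = y p) → h ∈ U := by
  classical
  have main : ∀ P : Finset (X × ℕ → Bool), ∃ (F : Finset (X × ℕ)) (y : X × ℕ → Bool),
      Disjoint E F ∧ ∀ q ∈ P, ∀ h : Cp X (ℕ → Bool), (∀ p ∈ E, h.1 p.1 p.2 = q p) →
        (∀ p ∈ F, h.1 p.1 p.2 = y p) → h ∈ U := by
    intro P
    induction P using Finset.induction_on with
    | empty => exact ⟨∅, fun _ => false, by simp, by simp⟩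
    | insert q P hq ih =>
      obtain ⟨F, y, hEF, ih⟩ := ih
      obtain ⟨h0, hh0⟩ := interp2 (E ∪ F) (fun p => if p ∈ E then q p else y p)
      obtain ⟨h, hh, hhU⟩ := dense_iff_inter_open.1 hUd _ (isOpen2 (E ∪ F) _) ⟨h0, hh0⟩
      obtain ⟨G, hG⟩ := agree2 hU hhU
      refine ⟨F ∪ (G \ E), fun p => h.1 p.1 p.2, ?_, ?_⟩
      · rw [Finset.disjoint_union_right]
        exact ⟨hEF, Finset.disjoint_sdiff⟩
      · intro q' hq' k hkE hkF
        rw [Finset.mem_insert] at hq'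
        rcases hq' with rfl | hq'
        · refine hG k fun p hp => ?_
          by_cases hpE : p ∈ E
          · rw [hkE p hpE, hh p (Finset.mem_union_left _ hpE), if_pos hpE]
          · exact hkF p (Finset.mem_union_right _ (Finset.mem_sdiff.2 ⟨hp, hpE⟩))
        · refine ih q' hq' k hkE fun p hp => ?_
          rw [hkF p (Finset.mem_union_left _ hp)]
          show h.1 p.1 p.2 = y p
          rw [hh p (Finset.mem_union_right _ hp),
            if_neg (Finset.disjoint_right.1 hEF hp)]
  obtain ⟨F, y, hEF, H⟩ := main ((Finset.univ : Finset (E → Bool)).image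
    fun r p => if hp : p ∈ E then r ⟨p, hp⟩ else false)
  refine ⟨F, y, hEF, fun h hh => H _ (Finset.mem_image_of_mem _
    (Finset.mem_univ (fun p : E => h.1 p.1.1 p.1.2))) h (fun p hp => ?_) hh⟩
  simp [hp]

theorem baire_cantor {X : Type*} [TopologicalSpace X] [TotallySeparatedSpace X]
    (hB : BaireSpace (Cp X Bool)) : BaireSpace (Cp X (ℕ → Bool)) := by
  classical
  refine ⟨fun U hU hUd => ?_⟩
  rw [dense_iff_inter_open]
  rintro W hW ⟨w, hw⟩
  obtain ⟨E0, hE0⟩ := agree2 hW hw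
  have hfin : ∀ n : ℕ, IsOpen (⋂ i ∈ Finset.range (n + 1), U i) ∧
      Dense (⋂ i ∈ Finset.range (n + 1), U i) := by
    intro n
    induction n with
    | zero => simpa using ⟨hU 0, hUd 0⟩
    | succ n ih =>
      rw [Finset.range_add_one, Finset.set_biInter_insert]
      exact ⟨(hU _).inter ih.1, (hUd _).inter_of_isOpen_left ih.2 (hU _)⟩
  choose F y hEF hFU using fun (n : ℕ) (E : Finset (X × ℕ)) =>
    lemma1 _ (hfin n).1 (hfin n).2 E
  let E : ℕ → Finset (X × ℕ) := fun n => Nat.rec E0 (fun n S => S ∪ F n S) n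
  have hE : ∀ n, E (n + 1) = E n ∪ F n (E n) := fun n => rfl
  have hEm : Monotone E := monotone_nat_of_le_succ fun n => by
    rw [hE]; exact Finset.subset_union_left
  have hlt : ∀ m n, m < n → Disjoint (F m (E m)) (F n (E n)) := by
    intro m n hmn
    refine Finset.disjoint_of_subset_left ?_ (hEF n (E n))
    exact Finset.Subset.trans (by rw [hE]; exact Finset.subset_union_right) (hEm (show m + 1 ≤ n from hmn))
  have hdis : ∀ m n, m ≠ n → Disjoint (F m (E m)) (F n (E n)) := by
    intro m n hmn
    rcases lt_or_gt_of_ne hmn with h | h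
    · exact hlt m n h
    · exact (hlt n m h).symm
  let Y : X × ℕ → Bool := fun p => if p ∈ E0 then w.1 p.1 p.2 else
    if h : ∃ n, p ∈ F n (E n) then y h.choose (E h.choose) p else false
  have hY0 : ∀ p ∈ E0, Y p = w.1 p.1 p.2 := fun p hp => if_pos hp
  have hY : ∀ n, ∀ p ∈ F n (E n), Y p = y n (E n) p := by
    intro n p hp
    have h0 : p ∉ E0 := fun h => Finset.disjoint_left.1 (hEF n (E n)) (hEm (Nat.zero_le n) h) hp
    have h : ∃ n, p ∈ F n (E n) := ⟨n, hp⟩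
    have hn : h.choose = n := by
      by_contra hne
      exact Finset.disjoint_left.1 (hdis _ _ hne) h.choose_spec hp
    simp only [Y]
    rw [if_neg h0, dif_pos h, hn]
  obtain ⟨g, hg, hgE, hgF⟩ := lemmaD hB (fun n => F n (E n)) hdis Y E0
  let h : Cp X (ℕ → Bool) := ⟨fun x i => g i x, continuous_pi hg⟩
  refine ⟨h, hE0 h fun p hp => ?_, mem_iInter.2 fun j => ?_⟩
  · rw [← hY0 p hp]; exact hgE p hp
  · obtain ⟨n, hjn, hn⟩ := hgF j
    have := hFU n (E n) h fun p hp => by rw [← hY n p hp]; exact hn p hp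
    exact mem_iInter₂.1 this j (Finset.mem_range.2 (by omega))

open Classical in
/-- one splitting step -/
noncomputable def stp {L : Type*} [TopologicalSpace L] (B : Set L) (V : Set L) (b : Bool) : Set L :=
  if (V ∩ B).Nonempty ∧ (V \ closure B).Nonempty then (if b then V ∩ B else V \ closure B) else V

theorem stp_open {L : Type*} [TopologicalSpace L] {B V : Set L} (hB : IsOpen B) (hV : IsOpen V)
    (b : Bool) : IsOpen (stp B V b) := by
  unfold stp
  split_ifs
  · exact hV.inter hB
  · exact hV.sdiff isClosed_closure
  · exact hV

theorem stp_nonempty {L : Type*} [TopologicalSpace L] {B V : Set L} (hV : V.Nonempty)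
    (b : Bool) : (stp B V b).Nonempty := by
  unfold stp
  split_ifs with h
  · exact h.1
  · exact h.2
  · exact hV

theorem stp_subset {L : Type*} [TopologicalSpace L] (B V : Set L)
    (b : Bool) : stp B V b ⊆ V := by
  unfold stp
  split_ifs with h
  · exact inter_subset_left
  · exact sdiff_subset
  · exact subset_rfl

theorem stp_cover {L : Type*} [TopologicalSpace L] {B V : Set L} (hV : IsOpen V) {p : L}
    (hp : p ∈ closure V) : p ∈ closure (stp B V true) ∨ p ∈ closure (stp B V false) := by
  unfold stp
  by_cases h : (V ∩ B).Nonempty ∧ (V \ closure B).Nonempty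
  · rw [if_pos h, if_pos h]
    have : V ⊆ closure ((V ∩ B) ∪ (V \ closure B)) := by
      intro q hq
      by_cases hqB : q ∈ closure B
      · exact closure_mono subset_union_left (hV.inter_closure ⟨hq, hqB⟩)
      · exact subset_closure (Or.inr ⟨hq, hqB⟩)
    have := closure_minimal this isClosed_closure hp
    rw [closure_union] at this
    simpa using this
  · rw [if_neg h]; exact Or.inl hp

theorem stp_sep {L : Type*} [TopologicalSpace L] (B V : Set L) (b : Bool) :
    stp B V b ⊆ closure B ∨ Disjoint (stp B V b) B := by
  unfold stp
  split_ifs with h hb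
  · exact Or.inl (inter_subset_right.trans subset_closure)
  · right
    rw [Set.disjoint_left]
    exact fun q hq hqB => hq.2 (subset_closure hqB)
  · by_cases h1 : (V ∩ B).Nonempty
    · left
      intro q hq
      by_contra hqB
      exact h ⟨h1, q, hq, hqB⟩
    · right
      rw [Set.disjoint_iff_inter_eq_empty]
      exact not_nonempty_iff_eq_empty.1 h1

theorem exists_phi (L : Type*) [TopologicalSpace L] [CompactSpace L] [T2Space L]
    [SecondCountableTopology L] [Nonempty L] :
    ∃ φ : (ℕ → Bool) → L, Continuous φ ∧ Function.Surjective φ ∧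
      ∀ O : Set (ℕ → Bool), IsOpen O → O.Nonempty → (interior (φ '' O)).Nonempty := by
  classical
  obtain ⟨B, hB⟩ : ∃ B : ℕ → Set L, TopologicalSpace.countableBasis L = range B :=
    (TopologicalSpace.countable_countableBasis L).exists_eq_range
      (by
        obtain ⟨v, hv, _⟩ := (TopologicalSpace.isBasis_countableBasis L).exists_subset_of_mem_open
          (mem_univ (Classical.arbitrary L)) isOpen_univ
        exact ⟨v, hv⟩)
  have hbas : TopologicalSpace.IsTopologicalBasis (range B) :=
    hB ▸ TopologicalSpace.isBasis_countableBasis L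
  have hBo : ∀ n, IsOpen (B n) := fun n => hbas.isOpen (mem_range_self n)
  let V : (ℕ → Bool) → ℕ → Set L := fun x n => Nat.rec univ (fun n S => stp (B n) S (x n)) n
  have hVs : ∀ x n, V x (n + 1) = stp (B n) (V x n) (x n) := fun x n => rfl
  have hVo : ∀ x n, IsOpen (V x n) := by
    intro x n
    induction n with
    | zero => exact isOpen_univ
    | succ n ih => rw [hVs]; exact stp_open (hBo n) ih _
  have hVn : ∀ x n, (V x n).Nonempty := by
    intro x n
    induction n with
    | zero => exact univ_nonempty
    | succ n ih => rw [hVs]; exact stp_nonempty ih _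
  have hVa : ∀ x, Antitone (V x) := fun x => antitone_nat_of_succ_le fun n => by
    rw [hVs]; exact stp_subset _ _ _
  have hVc : ∀ x x' n, (∀ i < n, x i = x' i) → V x n = V x' n := by
    intro x x' n
    induction n with
    | zero => intro _; rfl
    | succ n ih =>
      intro h
      rw [hVs, hVs, ih (fun i hi => h i (by omega)), h n (by omega)]
  have hex : ∀ x, ∃ p, ∀ n, p ∈ closure (V x n) := by
    intro x
    have := IsCompact.nonempty_iInter_of_sequence_nonempty_isCompact_isClosed
      (fun n => closure (V x n)) (fun n => closure_mono (hVa x (Nat.le_succ n)))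
      (fun n => (hVn x n).closure) isClosed_closure.isCompact (fun n => isClosed_closure)
    obtain ⟨p, hp⟩ := this
    exact ⟨p, fun n => mem_iInter.1 hp n⟩
  have huniq : ∀ x p q, (∀ n, p ∈ closure (V x n)) → (∀ n, q ∈ closure (V x n)) → p = q := by
    intro x p q hp hq
    by_contra hne
    obtain ⟨_, ⟨n, rfl⟩, hpB, hcl⟩ := hbas.exists_closure_subset
      (isOpen_compl_singleton.mem_nhds (show p ∈ ({q} : Set L)ᶜ from hne))
    rcases stp_sep (B n) (V x n) (x n) with h | h
    · have := closure_minimal h isClosed_closure (hq (n + 1))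
      exact hcl this rfl
    · exact Set.disjoint_left.1 (h.closure_left (hBo n)) (hp (n + 1)) hpB
  choose φ hφ using hex
  have himg : ∀ x0 n p, p ∈ closure (V x0 n) → ∃ x, (∀ i < n, x i = x0 i) ∧ φ x = p := by
    intro x0 n p hp
    let bit : ℕ → Set L → Bool := fun m S =>
      if m < n then x0 m else decide (p ∈ closure (stp (B m) S true))
    let W : ℕ → Set L := fun m => Nat.rec univ (fun m S => stp (B m) S (bit m S)) m
    have hWs : ∀ m, W (m + 1) = stp (B m) (W m) (bit m (W m)) := fun m => rfl
    let x : ℕ → Bool := fun m => bit m (W m)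
    have hVW : ∀ m, V x m = W m := by
      intro m
      induction m with
      | zero => rfl
      | succ m ih => rw [hVs, hWs, ih]
    have hx : ∀ i < n, x i = x0 i := fun i hi => if_pos hi
    have hge : ∀ k, p ∈ closure (V x (n + k)) := by
      intro k
      induction k with
      | zero => rw [Nat.add_zero, hVc x x0 n hx]; exact hp
      | succ k ih =>
        rw [← Nat.add_assoc, hVs]
        have hxv : x (n + k) = decide (p ∈ closure (stp (B (n + k)) (V x (n + k)) true)) := by
          rw [hVW]; exact if_neg (by omega)
        rw [hxv]
        by_cases h : p ∈ closure (stp (B (n + k)) (V x (n + k)) true)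
        · simpa [h] using h
        · have := (stp_cover (B := B (n + k)) (hVo x (n + k)) ih).resolve_left h
          simpa [h] using this
    refine ⟨x, hx, huniq x _ _ (hφ x) fun m => ?_⟩
    exact closure_mono (hVa x (Nat.le_add_left m n)) (hge m)
  refine ⟨φ, ?_, ?_, ?_⟩
  · rw [continuous_iff_continuousAt]
    intro x O hO
    obtain ⟨n, hn⟩ : ∃ n, closure (V x n) ⊆ O := by
      refine exists_subset_nhds_of_isCompact' (V := fun n => closure (V x n)) ?_
        (fun n => isClosed_closure.isCompact) (fun n => isClosed_closure) ?_
      · exact (antitone_nat_of_succ_le fun n =>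
          closure_mono (hVa x (Nat.le_succ n))).directed_ge
      · intro q hq
        rw [huniq x q (φ x) (fun n => mem_iInter.1 hq n) (hφ x)]
        exact hO
    have hcyl : {x' : ℕ → Bool | ∀ i ∈ Finset.range n, x' i = x i} ∈ 𝓝 x := by
      refine IsOpen.mem_nhds ?_ (fun i _ => rfl)
      have : {x' : ℕ → Bool | ∀ i ∈ Finset.range n, x' i = x i} =
          ⋂ i ∈ Finset.range n, (fun x' : ℕ → Bool => x' i) ⁻¹' {x i} := by
        ext; simp
      rw [this]
      exact isOpen_biInter_finset fun i _ => (isOpen_discrete _).preimage (continuous_apply i)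
    refine Filter.mem_map.2 (Filter.mem_of_superset hcyl fun x' hx' => hn ?_)
    rw [← hVc x' x n (fun i hi => hx' i (Finset.mem_range.2 hi))]
    exact hφ x' n
  · intro p
    obtain ⟨x, _, hx⟩ := himg (fun _ => true) 0 p (subset_closure (mem_univ p))
    exact ⟨x, hx⟩
  · rintro O hO ⟨x0, hx0⟩
    obtain ⟨I, u, h1, h2⟩ := isOpen_pi_iff.1 hO x0 hx0
    obtain ⟨p, hp⟩ := hVn x0 (I.sup id + 1)
    refine ⟨p, mem_interior.2 ⟨V x0 (I.sup id + 1), ?_, hVo x0 (I.sup id + 1), hp⟩⟩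
    intro q hq
    obtain ⟨x, hx, rfl⟩ := himg x0 (I.sup id + 1) q (subset_closure hq)
    refine ⟨x, h2 fun i hi => ?_, rfl⟩
    rw [hx i (Nat.lt_succ_of_le (Finset.le_sup (f := id) hi))]
    exact (h1 i hi).2

/-- For a totally disconnected (totally separated) Tychonoff space `X`, the following are
equivalent: (a) `C_p(X, 𝔻)` is Baire; (b) `C_p(X, K)` is Baire for some nonempty
disconnected metrizable compact Hausdorff space `K`; (c) `C_p(X, L)` is Baire for every
metrizable compact Hausdorff space `L`. Here `𝔻 = {0,1}` is realized as `Bool`. -/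
theorem statement6 (X : Type*) [TopologicalSpace X] [T1Space X] [CompletelyRegularSpace X]
    [TotallySeparatedSpace X] :
    List.TFAE
      [BaireSpace (Cp X Bool),
       ∃ (K : Type) (_ : TopologicalSpace K), Nonempty K ∧ ¬ ConnectedSpace K ∧
         CompactSpace K ∧ T2Space K ∧ TopologicalSpace.MetrizableSpace K ∧
         BaireSpace (Cp X K),
       ∀ (L : Type) (_ : TopologicalSpace L), CompactSpace L → T2Space L →
         TopologicalSpace.MetrizableSpace L → BaireSpace (Cp X L)] := by
  classical
  tfae_have 1 → 3 := by
    intro hB L _ _ _ _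
    rcases isEmpty_or_nonempty L with hL | hL
    · have : Subsingleton (Cp X L) :=
        ⟨fun f g => Subtype.ext (funext fun x => isEmptyElim (f.1 x))⟩
      refine ⟨fun U _ hU g => ?_⟩
      refine subset_closure (mem_iInter.2 fun n => ?_)
      obtain ⟨h, hh⟩ := @Dense.nonempty _ _ _ ⟨g⟩ (hU n)
      rwa [Subsingleton.elim g h]
    · letI := TopologicalSpace.metrizableSpaceMetric L
      obtain ⟨φ, h1, h2, h3⟩ := exists_phi L
      exact transfer φ h1 h2 h3 (baire_cantor hB)
  tfae_have 3 → 2 := by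
    intro h
    refine ⟨Bool, inferInstance, inferInstance, ?_, inferInstance, inferInstance, inferInstance,
      h Bool _ inferInstance inferInstance inferInstance⟩
    intro hc
    have := hc.toPreconnectedSpace
    have h := isClopen_iff.1 (isClopen_discrete ({true} : Set Bool))
    rcases h with h | h
    · exact (singleton_nonempty true).ne_empty h
    · exact absurd (h ▸ mem_univ false : false ∈ ({true} : Set Bool)) (by simp)
  tfae_have 2 → 1 := by
    rintro ⟨K, _, hne, hc, _, _, _, hB⟩
    have hp : ¬ PreconnectedSpace K := fun h => hc { toPreconnectedSpace := h, toNonempty := hne }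
    rw [preconnectedSpace_iff_clopen] at hp
    push Not at hp
    obtain ⟨C, hC, h1, h2⟩ := hp
    have h1 : C.Nonempty := by
      exact h1
    refine transfer (fun k => decide (k ∈ C)) ?_ ?_ ?_ hB
    · rw [continuous_bool_rng true]
      convert hC using 1
      ext; simp
    · intro b
      cases b
      · obtain ⟨k, hk⟩ := (ne_univ_iff_exists_notMem C).1 h2
        exact ⟨k, by simpa using hk⟩
      · obtain ⟨k, hk⟩ := h1
        exact ⟨k, by simpa using hk⟩
    · intro O _ hO
      rw [(isOpen_discrete _).interior_eq]
      exact hO.image _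
  tfae_finish
end

section
/- A compact Hausdorff space X is π-monolithic if, and only if, for every sequence (U_n)_{n∈ℕ} of nonempty open subsets of X there exists a compact metrizable subspace K ⊆ X such that K ∩ U_n ≠ ∅ for every n ∈ ℕ. -/
open Set Topology Function

/-- A compact Hausdorff space `X` is π-monolithic if for every surjective continuous map
`f : X → K` onto a metrizable compact Hausdorff space `K` there exists a metrizable
compact subspace `T ⊆ X` with `f(T) = K`. -/
def PiMonolithic (X : Type*) [TopologicalSpace X] [CompactSpace X] [T2Space X] : Prop :=
  ∀ (K : Type) (_ : TopologicalSpace K), CompactSpace K → T2Space K →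
    TopologicalSpace.MetrizableSpace K →
    ∀ f : X → K, Continuous f → Surjective f →
      ∃ T : Set X, IsCompact T ∧ TopologicalSpace.MetrizableSpace T ∧ f '' T = Set.univ

/-- A compact Hausdorff space `X` is π-monolithic iff for every sequence of nonempty open
subsets `U n` of `X` there is a compact metrizable subspace `K ⊆ X` meeting every `U n`. -/
theorem statement7 (X : Type*) [TopologicalSpace X] [CompactSpace X] [T2Space X] :
    PiMonolithic X ↔
      ∀ U : ℕ → Set X, (∀ n, IsOpen (U n)) → (∀ n, (U n).Nonempty) →
        ∃ K : Set X, IsCompact K ∧ TopologicalSpace.MetrizableSpace K ∧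
          ∀ n, (K ∩ U n).Nonempty := by
  constructor
  · intro h U hU hne
    choose x hx using hne
    have hg : ∀ n, ∃ g : C(X, ℝ), EqOn g 0 (U n)ᶜ ∧ EqOn g 1 {x n} ∧ ∀ y, g y ∈ Icc (0 : ℝ) 1 := by
      intro n
      refine exists_continuous_zero_one_of_isClosed (hU n).isClosed_compl isClosed_singleton ?_
      rw [Set.disjoint_singleton_right]
      exact fun hc => hc (hx n)
    choose g hg0 hg1 _ using hg
    let F : X → (ℕ → ℝ) := fun y n => g n y
    have hF : Continuous F := continuous_pi fun n => (g n).continuous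
    obtain ⟨T, hT, hTm, hTF⟩ := h (range F) inferInstance
      (isCompact_iff_compactSpace.mp (isCompact_range hF)) inferInstance inferInstance
      (rangeFactorization F) (hF.subtype_mk _) rangeFactorization_surjective
    refine ⟨T, hT, hTm, fun n => ?_⟩
    have hmem : rangeFactorization F (x n) ∈ rangeFactorization F '' T := by
      rw [hTF]; trivial
    obtain ⟨t, ht, hte⟩ := hmem
    refine ⟨t, ht, ?_⟩
    by_contra hc
    have h1 : F t = F (x n) := congrArg Subtype.val hte
    have h2 : g n t = g n (x n) := congrFun h1 n
    have h3 : g n t = 0 := hg0 n hc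
    have h4 : g n (x n) = 1 := hg1 n rfl
    rw [h3, h4] at h2
    exact zero_ne_one h2
  · intro h K _ _ _ _ f hf hs
    letI := TopologicalSpace.metrizableSpaceMetric K
    obtain ⟨b, hbc, hb0, hb⟩ := TopologicalSpace.exists_countable_basis K
    rcases b.eq_empty_or_nonempty with rfl | hbn
    · refine ⟨∅, isCompact_empty, inferInstance, ?_⟩
      rw [image_empty]
      have := hb.sUnion_eq
      simpa using this
    · obtain ⟨V, rfl⟩ := hbc.exists_eq_range hbn
      have hV : ∀ n, IsOpen (V n) := fun n => hb.isOpen (mem_range_self n)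
      have hVn : ∀ n, (V n).Nonempty := fun n =>
        nonempty_iff_ne_empty.mpr fun he => hb0 ⟨n, he⟩
      obtain ⟨T, hT, hTm, hTV⟩ := h (fun n => f ⁻¹' V n) (fun n => (hV n).preimage hf)
        (fun n => (hVn n).preimage hs)
      refine ⟨T, hT, hTm, ?_⟩
      have hd : Dense (f '' T) := by
        rw [hb.dense_iff]
        rintro _ ⟨n, rfl⟩ _
        obtain ⟨t, ht, htV⟩ := hTV n
        exact ⟨f t, htV, t, ht, rfl⟩
      rw [← (hT.image hf).isClosed.closure_eq, hd.closure_eq]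
end

section
/- For a compact Hausdorff space K the following are equivalent: (a) K is π-monolithic; (b) for every totally disconnected Tychonoff space X such that C_p(X, 𝔻) is a Baire space, the space C_p(X, K) is a Baire space. -/
open Set Topology Function

/-! ### Boolean cubes -/

lemma bool_nhd {Y : Type*} {O : Set (Y → Bool)} (hO : IsOpen O) {f : Y → Bool} (hf : f ∈ O) :
    ∃ F : Finset Y, ∀ g : Y → Bool, (∀ x ∈ F, g x = f x) → g ∈ O := by
  obtain ⟨F, u, hu, h⟩ := isOpen_pi_iff.1 hO f hf
  refine ⟨F, fun g hg => h ?_⟩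
  intro x hx
  rw [hg x hx]
  exact (hu x hx).2

lemma bool_box_open {Y : Type*} (F : Finset Y) (f : Y → Bool) :
    IsOpen {g : Y → Bool | ∀ x ∈ F, g x = f x} := by
  have : {g : Y → Bool | ∀ x ∈ F, g x = f x} = ⋂ x ∈ F, {g : Y → Bool | g x = f x} := by
    ext g; simp
  rw [this]
  refine isOpen_biInter_finset fun x _ => ?_
  exact (isOpen_discrete ({f x} : Set Bool)).preimage (continuous_apply (A := fun _ : Y => Bool) x)

lemma fin_ext {X K : Type*} [TopologicalSpace X] [TotallySeparatedSpace X] [TopologicalSpace K]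
    [Nonempty K] (F : Finset X) (g : X → K) :
    ∃ f : X → K, Continuous f ∧ ∀ x ∈ F, f x = g x := by
  classical
  induction F using Finset.induction_on with
  | empty => exact ⟨fun _ => Classical.arbitrary K, continuous_const, by simp⟩
  | insert a s ha ih =>
    obtain ⟨f, hf, hfs⟩ := ih
    have hcl : ∀ y ∈ s, ∃ U : Set X, IsClopen U ∧ a ∈ U ∧ y ∉ U := by
      intro y hy
      have hne : a ≠ y := fun h => ha (h ▸ hy)
      obtain ⟨U, hU, h1, h2⟩ := exists_isClopen_of_totally_separated hne
      exact ⟨U, hU, h1, h2⟩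
    choose! U hU haU hyU using hcl
    let V : Set X := ⋂ y ∈ s, U y
    have hV : IsClopen V := isClopen_biInter_finset hU
    refine ⟨V.piecewise (fun _ => g a) f, ?_, ?_⟩
    · apply Continuous.piecewise _ continuous_const hf
      intro x hx
      rw [hV.frontier_eq] at hx
      exact hx.elim
    · intro x hx
      rcases Finset.mem_insert.1 hx with rfl | hx
      · rw [Set.piecewise_eq_of_mem]
        exact mem_iInter₂.2 haU
      · rw [Set.piecewise_eq_of_notMem]
        · exact hfs x hx
        · intro h
          exact hyU x hx (mem_iInter₂.1 h x hx)

/-- One step: a finite set disjoint from `F` deciding membership in `V`. -/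
lemma decide_step {Y : Type*} {V : Set (Y → Bool)} (hV : IsOpen V) (hd : Dense V) (F : Finset Y) :
    ∃ (D : Finset Y) (g : Y → Bool), Disjoint D F ∧
      ∀ f : Y → Bool, (∀ x ∈ D, f x = g x) → f ∈ V := by
  classical
  have key : ∀ H : Finset (Finset Y), ∃ (D : Finset Y) (g : Y → Bool), Disjoint D F ∧
      ∀ s ∈ H, ∀ f : Y → Bool, (∀ x ∈ F, f x = decide (x ∈ s)) → (∀ x ∈ D, f x = g x) → f ∈ V := by
    intro H
    induction H using Finset.induction_on with
    | empty => exact ⟨∅, fun _ => false, by simp, by simp⟩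
    | insert s H hs ih =>
      obtain ⟨D, g, hDF, hD⟩ := ih
      let h : Y → Bool := fun x => if x ∈ F then decide (x ∈ s) else g x
      obtain ⟨f1, hf1, hf1V⟩ := hd.inter_open_nonempty _ (bool_box_open (F ∪ D) h) ⟨h, by simp⟩
      obtain ⟨G, hG⟩ := bool_nhd hV hf1V
      refine ⟨D ∪ (G \ F), f1, ?_, ?_⟩
      · rw [Finset.disjoint_union_left]
        exact ⟨hDF, Finset.sdiff_disjoint⟩
      · have hf1D : ∀ x ∈ D, f1 x = g x := by
          intro x hx
          have hxF : x ∉ F := fun h => (Finset.disjoint_left.1 hDF hx h)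
          rw [hf1 x (Finset.mem_union_right _ hx)]
          simp [h, hxF]
        have hf1F : ∀ x ∈ F, f1 x = decide (x ∈ s) := by
          intro x hx
          rw [hf1 x (Finset.mem_union_left _ hx)]
          simp [h, hx]
        intro t ht f hfF hfD
        rcases Finset.mem_insert.1 ht with rfl | ht
        · apply hG
          intro x hx
          by_cases hxF : x ∈ F
          · rw [hfF x hxF, hf1F x hxF]
          · exact hfD x (by simp [hx, hxF])
        · apply hD t ht f hfF
          intro x hx
          rw [hfD x (by simp [hx]), hf1D x hx]
  obtain ⟨D, g, h1, h2⟩ := key F.powerset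
  refine ⟨D, g, h1, fun f hf => h2 (F.filter (fun x => f x = true)) (by simp) f ?_ hf⟩
  intro x hx
  simp [hx]

lemma generic_seq {Y : Type*} (V : ℕ → Set (Y → Bool)) (hV : ∀ n, IsOpen (V n))
    (hd : ∀ n, Dense (V n)) (F₀ : Finset Y) :
    ∃ (D : ℕ → Finset Y) (g : ℕ → Y → Bool), (∀ n, Disjoint (D n) F₀) ∧
      (∀ i j, i < j → Disjoint (D i) (D j)) ∧
      ∀ f : Y → Bool, (∀ N, ∃ n ≥ N, ∀ x ∈ D n, f x = g n x) → ∀ n, f ∈ V n := by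
  classical
  have hW : ∀ n, IsOpen (⋂ i ∈ Finset.range (n+1), V i) ∧ Dense (⋂ i ∈ Finset.range (n+1), V i) := by
    intro n
    induction n with
    | zero => simpa using ⟨hV 0, hd 0⟩
    | succ n ih =>
      rw [Finset.range_add_one, Finset.set_biInter_insert]
      exact ⟨(hV _).inter ih.1, (hd _).inter_of_isOpen_left ih.2 (hV _)⟩
  choose D g h1 h2 using fun n F => decide_step (hW n).1 (hW n).2 F
  let E : ℕ → Finset Y := fun n => Nat.rec F₀ (fun n F => F ∪ D n F) n
  have hE : ∀ n, E (n+1) = E n ∪ D n (E n) := fun n => rfl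
  have hmono : Monotone E := monotone_nat_of_le_succ fun n => by
    rw [hE]; exact Finset.subset_union_left
  refine ⟨fun n => D n (E n), fun n => g n (E n), ?_, ?_, ?_⟩
  · intro n
    exact (h1 n (E n)).mono_right (hmono (Nat.zero_le n))
  · intro i j hij
    refine ((h1 j (E j)).mono_right ?_).symm
    refine le_trans ?_ (hmono hij)
    show _ ⊆ E (i+1)
    rw [hE]; exact Finset.subset_union_right
  · intro f hf n
    obtain ⟨m, hm, hfm⟩ := hf n
    have := h2 m (E m) f hfm
    simp only [Finset.mem_range, mem_iInter] at this
    exact this n (by omega)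

/-- From the Baire property of `C_p(X, 2)`. -/
lemma match_inf {X : Type*} [TopologicalSpace X] [TotallySeparatedSpace X]
    [BaireSpace (Cp X Bool)] (D : ℕ → Finset X) (hD : ∀ i j, i < j → Disjoint (D i) (D j))
    (g : ℕ → X → Bool) (E : Finset X) (h : X → Bool) (A : Set ℕ) (hA : ∀ N, ∃ n ≥ N, n ∈ A) :
    ∃ f : X → Bool, Continuous f ∧ (∀ x ∈ E, f x = h x) ∧
      ∀ N, ∃ n ≥ N, n ∈ A ∧ ∀ x ∈ D n, f x = g n x := by
  classical
  let G : ℕ → Set (Cp X Bool) := fun N => {f | ∃ n ≥ N, n ∈ A ∧ ∀ x ∈ D n, f.1 x = g n x}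
  have hbox : ∀ (F : Finset X) (k : X → Bool), IsOpen {f : Cp X Bool | ∀ x ∈ F, f.1 x = k x} :=
    fun F k => (bool_box_open F k).preimage continuous_subtype_val
  have hGo : ∀ N, IsOpen (G N) := by
    intro N
    have : G N = ⋃ n ∈ {n | n ≥ N ∧ n ∈ A}, {f : Cp X Bool | ∀ x ∈ D n, f.1 x = g n x} := by
      ext f; simp [G, and_assoc]
    rw [this]
    exact isOpen_biUnion fun n _ => hbox _ _
  have hGd : ∀ N, Dense (G N) := by
    intro N
    rw [dense_iff_inter_open]
    rintro U hU ⟨f0, hf0⟩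
    obtain ⟨U', hU', rfl⟩ := isOpen_induced_iff.1 hU
    obtain ⟨F, hF⟩ := bool_nhd hU' hf0
    have : ∃ n ≥ N, n ∈ A ∧ Disjoint (D n) F := by
      by_contra hcon
      push Not at hcon
      have h2 : ∀ n : {n // n ≥ N ∧ n ∈ A}, ∃ x ∈ F, x ∈ D n := by
        rintro ⟨n, hn, hnA⟩
        have := hcon n hn hnA
        rw [Finset.not_disjoint_iff] at this
        obtain ⟨x, h1, h2⟩ := this
        exact ⟨x, h2, h1⟩
      choose y hyF hyD using h2
      have hinf : Infinite {n // n ≥ N ∧ n ∈ A} := by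
        rw [← Set.coe_ofPred, Set.infinite_coe_iff]
        apply Set.infinite_of_forall_exists_gt
        intro a
        obtain ⟨n, hn, hnA⟩ := hA (max N (a+1))
        exact ⟨n, ⟨le_trans (le_max_left _ _) hn, hnA⟩, lt_of_lt_of_le (Nat.lt_succ_self a)
          (le_trans (le_max_right _ _) hn)⟩
      obtain ⟨a, b, hab, heq⟩ := Finite.exists_ne_map_eq_of_infinite
        (fun n => (⟨y n, hyF n⟩ : F))
      have heq' : y a = y b := by simpa using heq
      have hne : a.1 ≠ b.1 := fun h => hab (Subtype.ext h)
      rcases lt_or_gt_of_ne hne with h | h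
      · exact Finset.disjoint_left.1 (hD _ _ h) (hyD a) (heq' ▸ hyD b)
      · exact Finset.disjoint_left.1 (hD _ _ h) (hyD b) (heq' ▸ hyD a)
    obtain ⟨n, hn, hnA, hdis⟩ := this
    obtain ⟨f, hf, hfx⟩ := fin_ext (F ∪ D n) (fun x => if x ∈ F then f0.1 x else g n x)
    refine ⟨⟨f, hf⟩, hF f ?_, n, hn, hnA, ?_⟩
    · intro x hx
      rw [hfx x (by simp [hx])]; simp [hx]
    · intro x hx
      have : x ∉ F := Finset.disjoint_left.1 hdis hx
      show f x = _
      rw [hfx x (by simp [hx])]; simp [this]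
  obtain ⟨f, hf, hfE⟩ := fin_ext E h
  obtain ⟨k, hkE, hkG⟩ := (dense_iInter_of_isOpen_nat hGo hGd).inter_open_nonempty _ (hbox E h)
    ⟨⟨f, hf⟩, hfE⟩
  exact ⟨k.1, k.2, hkE, fun N => mem_iInter.1 hkG N⟩

/-- Sequential matching for `C_p(X, 2^ω)`. -/
lemma match_prod {X : Type*} [TopologicalSpace X] [TotallySeparatedSpace X]
    [BaireSpace (Cp X Bool)] (D : ℕ → Finset (X × ℕ)) (hD : ∀ i j, i < j → Disjoint (D i) (D j))
    (g : ℕ → X × ℕ → Bool) (E : Finset (X × ℕ)) (h : X × ℕ → Bool) :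
    ∃ f : X × ℕ → Bool, (∀ i, Continuous fun x => f (x, i)) ∧ (∀ x ∈ E, f x = h x) ∧
      ∀ N, ∃ n ≥ N, ∀ x ∈ D n, f x = g n x := by
  classical
  let sl : Finset (X × ℕ) → ℕ → Finset X := fun F i => (F.filter (fun p => p.2 = i)).image Prod.fst
  have hsl : ∀ F i x, x ∈ sl F i ↔ (x, i) ∈ F := by
    intro F i x; simp [sl]
  let St := {s : Finset (X × ℕ) × (X × ℕ → Bool) × Set ℕ // (∀ N, ∃ n ≥ N, n ∈ s.2.2)}
  have step : ∀ (i : ℕ) (s : St), ∃ (f : X → Bool) (n : ℕ) (s' : St), Continuous f ∧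
      (∀ x, (x, i) ∈ s.1.1 → f x = s.1.2.1 (x, i)) ∧
      s'.1.2.2 ⊆ s.1.2.2 ∧ (∀ m ∈ s'.1.2.2, ∀ x, (x, i) ∈ D m → f x = g m (x, i)) ∧
      n ∈ s'.1.2.2 ∧ i ≤ n ∧ s'.1.1 = s.1.1 ∪ D n ∧ (∀ p ∈ s.1.1, s'.1.2.1 p = s.1.2.1 p) ∧
      (∀ p ∈ D n, s'.1.2.1 p = g n p) := by
    rintro i ⟨⟨E, H, A⟩, hA⟩
    obtain ⟨f, hf, hfE, hfA⟩ := match_inf (fun n => sl (D n) i) (by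
      intro a b hab
      rw [Finset.disjoint_left]
      intro x hx hx'
      rw [hsl] at hx hx'
      exact Finset.disjoint_left.1 (hD a b hab) hx hx') (fun n x => g n (x, i)) (sl E i)
      (fun x => H (x, i)) A hA
    let A' : Set ℕ := {n | n ∈ A ∧ ∀ x ∈ sl (D n) i, f x = g n (x, i)}
    -- find `n` with `D n` disjoint from `E`
    have : ∃ n ≥ i, n ∈ A' ∧ Disjoint (D n) E := by
      by_contra hcon
      push Not at hcon
      have h2 : ∀ n : {n // n ≥ i ∧ n ∈ A'}, ∃ x ∈ E, x ∈ D n := by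
        rintro ⟨n, hn, hnA⟩
        have := hcon n hn hnA
        rw [Finset.not_disjoint_iff] at this
        obtain ⟨x, h1, h2⟩ := this
        exact ⟨x, h2, h1⟩
      choose y hyF hyD using h2
      have hinf : Infinite {n // n ≥ i ∧ n ∈ A'} := by
        rw [← Set.coe_ofPred, Set.infinite_coe_iff]
        apply Set.infinite_of_forall_exists_gt
        intro a
        obtain ⟨n, hn, hnA⟩ := hfA (max i (a+1))
        exact ⟨n, ⟨le_trans (le_max_left _ _) hn, hnA⟩, lt_of_lt_of_le (Nat.lt_succ_self a)
          (le_trans (le_max_right _ _) hn)⟩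
      obtain ⟨a, b, hab, heq⟩ := Finite.exists_ne_map_eq_of_infinite
        (fun n => (⟨y n, hyF n⟩ : E))
      have heq' : y a = y b := by simpa using heq
      have hne : a.1 ≠ b.1 := fun h => hab (Subtype.ext h)
      rcases lt_or_gt_of_ne hne with h | h
      · exact Finset.disjoint_left.1 (hD _ _ h) (hyD a) (heq' ▸ hyD b)
      · exact Finset.disjoint_left.1 (hD _ _ h) (hyD b) (heq' ▸ hyD a)
    obtain ⟨n, hn, hnA, hdis⟩ := this
    refine ⟨f, n, ⟨⟨E ∪ D n, fun p => if p ∈ E then H p else g n p, A'⟩, hfA⟩, hf, ?_, ?_, ?_, hnA,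
      hn, rfl, ?_, ?_⟩
    · intro x hx
      exact hfE x ((hsl _ _ _).2 hx)
    · exact fun m hm => hm.1
    · intro m hm x hx
      exact hm.2 x ((hsl _ _ _).2 hx)
    · intro p hp
      have hp' : p ∈ E := hp
      simp [hp']
    · intro p hp
      have hp' : p ∉ E := Finset.disjoint_left.1 hdis hp
      simp [hp']
  choose f n s' hf hfE hA hm hn hin hs hH hg using step
  let S : ℕ → St := fun i => Nat.rec ⟨⟨E, h, univ⟩, fun N => ⟨N, le_rfl, trivial⟩⟩ s' i
  have hS : ∀ i, S (i+1) = s' i (S i) := fun i => rfl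
  have hEm : ∀ i j, i ≤ j → (S i).1.1 ⊆ (S j).1.1 ∧ (S j).1.2.2 ⊆ (S i).1.2.2 ∧
      ∀ p ∈ (S i).1.1, (S j).1.2.1 p = (S i).1.2.1 p := by
    intro i j hij
    induction j, hij using Nat.le_induction with
    | base => exact ⟨subset_rfl, subset_rfl, fun _ _ => rfl⟩
    | succ j hij ih =>
      obtain ⟨h1, h2, h3⟩ := ih
      refine ⟨?_, ?_, ?_⟩
      · rw [hS, hs]; exact h1.trans Finset.subset_union_left
      · rw [hS]; exact (hA j (S j)).trans h2
      · intro p hp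
        rw [hS, hH _ _ _ (h1 hp), h3 p hp]
  refine ⟨fun p => f p.2 (S p.2) p.1, fun i => hf i (S i), ?_, ?_⟩
  · rintro ⟨x, i⟩ hx
    have := hEm 0 i (Nat.zero_le i)
    show f i (S i) x = _
    rw [hfE i (S i) x (this.1 hx), this.2.2 _ hx]
    rfl
  · intro N
    refine ⟨n N (S N), hin N (S N), ?_⟩
    rintro ⟨x, i⟩ hx
    show f i (S i) x = _
    rcases Nat.lt_or_ge N i with hNi | hNi
    · have h1 := hEm (N+1) i hNi
      have hx' : (x, i) ∈ (S (N+1)).1.1 := by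
        rw [hS, hs]; exact Finset.mem_union_right _ hx
      rw [hfE i (S i) x (h1.1 hx'), h1.2.2 _ hx', hS]
      exact hg N (S N) _ hx
    · have h1 := hEm (i+1) (N+1) (by omega)
      have h2 := hn N (S N)
      rw [← hS] at h2
      have h3 := h1.2.1 h2
      rw [hS] at h3
      exact hm i (S i) _ h3 x hx

lemma generic_cantor {X : Type*} [TopologicalSpace X] [TotallySeparatedSpace X]
    [BaireSpace (Cp X Bool)] (V : ℕ → Set (X → ℕ → Bool)) (hV : ∀ n, IsOpen (V n))
    (hd : ∀ n, Dense (V n)) (O : Set (X → ℕ → Bool)) (hO : IsOpen O) (hne : O.Nonempty) :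
    ∃ f : X → ℕ → Bool, Continuous f ∧ f ∈ O ∧ ∀ n, f ∈ V n := by
  let e : (X × ℕ → Bool) ≃ₜ (X → ℕ → Bool) := Homeomorph.piCurry
  obtain ⟨h, hh⟩ := hne
  obtain ⟨E, hE⟩ := bool_nhd (hO.preimage e.continuous) (f := e.symm h) (by simpa using hh)
  obtain ⟨D, g, -, hD, hDV⟩ := generic_seq (fun n => e ⁻¹' V n)
    (fun n => (hV n).preimage e.continuous) (fun n => (hd n).preimage e.isOpenMap) E
  obtain ⟨f, hf, hfE, hfD⟩ := match_prod D hD g E (e.symm h)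
  refine ⟨e f, ?_, hE f hfE, hDV f hfD⟩
  refine continuous_pi fun i => hf i

/-! ### Metrizability of images -/

lemma metrizable_range {S K : Type*} [TopologicalSpace S] [CompactSpace S]
    [SecondCountableTopology S] [TopologicalSpace K] [T2Space K] (p : S → K) (hp : Continuous p)
    [LocallyCompactSpace S] :
    TopologicalSpace.MetrizableSpace (range p) := by
  let T := range p
  have hT : CompactSpace T := isCompact_iff_compactSpace.1 (isCompact_range hp)
  let q : C(S, T) := ⟨rangeFactorization p, hp.subtype_mk _⟩
  have hq : Surjective q := rangeFactorization_surjective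
  let c : C(T, ℝ) → C(S, ℝ) := fun f => f.comp q
  have hci : Isometry c := by
    refine Isometry.of_dist_eq fun f g => ?_
    apply le_antisymm
    · rw [ContinuousMap.dist_le dist_nonneg]
      intro x
      exact ContinuousMap.dist_apply_le_dist (q x)
    · rw [ContinuousMap.dist_le dist_nonneg]
      intro x
      obtain ⟨s, rfl⟩ := hq x
      exact ContinuousMap.dist_apply_le_dist (f := c f) (g := c g) s
  have : SecondCountableTopology C(T, ℝ) := hci.isEmbedding.secondCountableTopology
  let f := TopologicalSpace.denseSeq C(T, ℝ)
  refine Metric.PiNatEmbed.TopologicalSpace.MetrizableSpace.of_countable_separating (fun n => (f n : T → ℝ))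
    (fun n => (f n).continuous) ?_
  intro x y hxy
  by_contra hcon
  push Not at hcon
  have hall : ∀ φ : C(T, ℝ), φ x = φ y := by
    have hcl : IsClosed {φ : C(T, ℝ) | φ x = φ y} :=
      isClosed_eq (continuous_eval_const x) (continuous_eval_const y)
    intro φ
    have := (TopologicalSpace.denseRange_denseSeq C(T, ℝ)).closure_range
    have h2 : closure (range f) ⊆ {φ : C(T, ℝ) | φ x = φ y} := by
      apply closure_minimal _ hcl
      rintro _ ⟨n, rfl⟩
      exact hcon n
    exact h2 (this ▸ mem_univ φ)
  obtain ⟨φ, h0, h1, -⟩ := exists_continuous_zero_one_of_isClosed (isClosed_singleton (x := x))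
    (isClosed_singleton (x := y)) (by simpa using hxy)
  have := hall φ
  rw [h0 rfl, h1 rfl] at this
  simp at this

/-! ### The universal matrix space -/

inductive WW : Type
  | leaf : WW
  | mk (s : ℕ → WW) (g : ℕ → Bool) : WW

namespace WW

/-- `isCh v u n`: `v` is the `n`-th child of `u`. -/
def isCh : WW → WW → ℕ → Prop
  | _, leaf, _ => False
  | v, mk s _, n => s n = v

def val : WW → ℕ → Bool
  | leaf, _ => false
  | mk _ g, n => g n

noncomputable def rk : WW → Ordinal.{0}
  | leaf => 0
  | mk s _ => ⨆ n, (rk (s n) + 1)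

lemma rk_lt {v u : WW} {n : ℕ} (h : isCh v u n) : rk v < rk u := by
  cases u with
  | leaf => exact h.elim
  | mk s g =>
    have h' : s n = v := h
    subst h'
    have : rk (s n) + 1 ≤ rk (mk s g) := by
      rw [rk]
      exact Ordinal.le_iSup (fun n => rk (s n) + 1) n
    exact lt_of_lt_of_le (by simp) this

open Classical in
noncomputable def m (u v : WW) : Bool :=
  if h : ∃ n, isCh v u n then val u (Nat.find h)
  else if h : ∃ n, isCh u v n then val v (Nat.find h)
  else false

lemma m_symm (u v : WW) : m u v = m v u := by
  unfold m
  by_cases h : ∃ n, isCh v u n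
  · have h' : ¬ ∃ n, isCh u v n := by
      rintro ⟨k, hk⟩
      obtain ⟨n, hn⟩ := h
      exact lt_asymm (rk_lt hk) (rk_lt hn)
    simp [h, h']
  · simp [h]

/-- every countable prescription is realized -/
lemma exists_row (A : Set WW) (hA : A.Countable) (b : WW → Bool) : ∃ u, ∀ v ∈ A, m u v = b v := by
  rcases A.eq_empty_or_nonempty with rfl | hne
  · exact ⟨leaf, by simp⟩
  obtain ⟨s, rfl⟩ := hA.exists_eq_range hne
  refine ⟨mk s (fun n => b (s n)), ?_⟩
  rintro _ ⟨n, rfl⟩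
  have h : ∃ k, isCh (s n) (mk s (fun n => b (s n))) k := ⟨n, rfl⟩
  classical
  have h2 : s (Nat.find h) = s n := Nat.find_spec h
  unfold m
  rw [dif_pos h]
  simp only [val]
  convert congrArg b h2

lemma exists_col (A : Set WW) (hA : A.Countable) (b : WW → Bool) : ∃ v, ∀ u ∈ A, m u v = b u := by
  obtain ⟨v, hv⟩ := exists_row A hA b
  exact ⟨v, fun u hu => by rw [m_symm]; exact hv u hu⟩

noncomputable instance : TopologicalSpace WW := TopologicalSpace.induced m inferInstance

lemma ind : IsInducing m := ⟨rfl⟩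

lemma m_inj : Injective m := by
  classical
  intro u u' h
  by_contra hne
  obtain ⟨v, hv⟩ := exists_col {u, u'} (by simp) (fun x => decide (x = u))
  have h1 := hv u (by simp)
  have h2 := hv u' (by simp)
  rw [h, h2] at h1
  simp [Ne.symm hne] at h1

lemma emb : IsEmbedding m := ⟨ind, m_inj⟩

instance : T2Space WW := emb.t2Space
instance : CompletelyRegularSpace WW := ind.completelyRegularSpace

lemma cont_m (v : WW) : Continuous (fun u => m u v) :=
  (continuous_apply v).comp ind.continuous

instance : TotallySeparatedSpace WW := by
  rw [totallySeparatedSpace_iff_exists_isClopen]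
  intro x y hxy
  have : m x ≠ m y := fun h => hxy (m_inj h)
  obtain ⟨v, hv⟩ := Function.ne_iff.1 this
  refine ⟨(fun u => m u v) ⁻¹' {m x v}, (isClopen_discrete _).preimage (cont_m v), rfl, ?_⟩
  intro h
  exact hv (Eq.symm h)

lemma dense_m : DenseRange m := by
  rw [DenseRange, dense_iff_inter_open]
  rintro U hU ⟨f, hf⟩
  obtain ⟨F, hF⟩ := bool_nhd hU hf
  obtain ⟨u, hu⟩ := exists_row F F.countable_toSet f
  exact ⟨m u, hF _ hu, u, rfl⟩

instance inf : Infinite WW := by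
  by_contra h
  rw [not_infinite_iff_finite] at h
  have hc : (univ : Set WW).Countable := Set.to_countable _
  -- the map to columns would be onto all of `2^WW`
  have : Surjective m := by
    intro b
    obtain ⟨u, hu⟩ := exists_row univ hc b
    exact ⟨u, funext fun v => hu v (mem_univ v)⟩
  exact Function.cantor_surjective (fun u => {v | m u v = true}) (by
    intro s
    classical
    obtain ⟨u, hu⟩ := this (fun v => decide (v ∈ s))
    exact ⟨u, by ext v; simp [hu]⟩)

instance baire2 : BaireSpace (Cp WW Bool) := by
  classical
  constructor
  intro V hVo hVd
  rw [dense_iff_inter_open]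
  rintro O hO ⟨f0, hf0⟩
  have nb : ∀ (U : Set (Cp WW Bool)), IsOpen U → ∀ f ∈ U, ∃ F : Finset WW, ∀ g : Cp WW Bool,
      (∀ x ∈ F, g.1 x = f.1 x) → g ∈ U := by
    intro U hU f hf
    obtain ⟨U', hU', rfl⟩ := isOpen_induced_iff.1 hU
    obtain ⟨F, hF⟩ := bool_nhd hU' hf
    exact ⟨F, fun g hg => hF _ hg⟩
  have hbox : ∀ (F : Finset WW) (k : WW → Bool), IsOpen {f : Cp WW Bool | ∀ x ∈ F, f.1 x = k x} :=
    fun F k => (bool_box_open F k).preimage continuous_subtype_val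
  have step : ∀ (n : ℕ) (s : Finset WW × (Cp WW Bool)), ∃ s' : Finset WW × (Cp WW Bool),
      s.1 ⊆ s'.1 ∧ (∀ x ∈ s.1, s'.2.1 x = s.2.1 x) ∧
      ∀ g : Cp WW Bool, (∀ x ∈ s'.1, g.1 x = s'.2.1 x) → g ∈ V n := by
    rintro n ⟨F, f⟩
    obtain ⟨f', hf', hfV⟩ := (hVd n).inter_open_nonempty _ (hbox F f.1) ⟨f, fun _ _ => rfl⟩
    obtain ⟨G, hG⟩ := nb _ (hVo n) f' hfV
    exact ⟨⟨F ∪ G, f'⟩, Finset.subset_union_left, hf', fun g hg => hG g fun x hx =>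
      hg x (Finset.mem_union_right _ hx)⟩
  choose s' h1 h2 h3 using step
  obtain ⟨F0, hF0⟩ := nb O hO f0 hf0
  let S : ℕ → Finset WW × (Cp WW Bool) := fun n => Nat.rec (F0, f0) s' n
  have hS : ∀ n, S (n+1) = s' n (S n) := fun _ => rfl
  have hmono : ∀ i j, i ≤ j → (S i).1 ⊆ (S j).1 ∧ ∀ x ∈ (S i).1, (S j).2.1 x = (S i).2.1 x := by
    intro i j hij
    induction j, hij using Nat.le_induction with
    | base => exact ⟨subset_rfl, fun _ _ => rfl⟩
    | succ j hij ih =>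
      refine ⟨ih.1.trans (h1 j (S j)), fun x hx => ?_⟩
      rw [hS, h2 _ _ _ (ih.1 hx), ih.2 x hx]
  let b : WW → Bool := fun x => if h : ∃ n, x ∈ (S n).1 then (S (Nat.find h)).2.1 x else false
  have hb : ∀ n, ∀ x ∈ (S n).1, b x = (S n).2.1 x := by
    intro n x hx
    have h : ∃ n, x ∈ (S n).1 := ⟨n, hx⟩
    simp only [b, dif_pos h]
    exact ((hmono _ n (Nat.find_min' h hx)).2 x (Nat.find_spec h)).symm
  obtain ⟨v, hv⟩ := exists_col (⋃ n, ((S n).1 : Set WW))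
    (countable_iUnion fun n => (S n).1.countable_toSet) b
  have hv' : ∀ n, ∀ x ∈ (S n).1, m x v = (S n).2.1 x := by
    intro n x hx
    rw [hv x (mem_iUnion.2 ⟨n, hx⟩), hb n x hx]
  refine ⟨⟨fun u => m u v, cont_m v⟩, hF0 _ (hv' 0), mem_iInter.2 fun n => ?_⟩
  exact h3 n (S n) _ (hv' (n+1))

/-- If `b` is in the closure of the image of an open set `P`, then countably many coordinates
witness that. -/
lemma closure_countable (P : Set WW) (hP : IsOpen P) (b : WW → Bool) (hb : b ∈ closure (m '' P)) :
    ∃ A : Set WW, A.Countable ∧ ∀ x : WW, (∀ v ∈ A, m x v = b v) → x ∈ closure P := by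
  classical
  obtain ⟨P', hP', rfl⟩ := ind.isOpen_iff.1 hP
  have step : ∀ F : Finset WW, ∃ (G : Finset WW) (t : WW → Bool), F ⊆ G ∧
      (∀ v ∈ F, t v = b v) ∧ ∀ t' : WW → Bool, (∀ v ∈ G, t' v = t v) → t' ∈ P' := by
    intro F
    obtain ⟨t, ht, u, hu, rfl⟩ := mem_closure_iff.1 hb _ (bool_box_open F b) (by simp)
    obtain ⟨G, hG⟩ := bool_nhd hP' hu
    exact ⟨F ∪ G, m u, Finset.subset_union_left, ht, fun t' h => hG t' fun v hv =>
      h v (Finset.mem_union_right _ hv)⟩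
  choose G t hFG ht hP'' using step
  obtain ⟨S, hS⟩ : ∃ S : ℕ → Finset WW, ∀ n, S (n+1) = G (S n) :=
    ⟨fun n => Nat.rec ∅ (fun _ F => G F) n, fun _ => rfl⟩
  have hmono : Monotone S := monotone_nat_of_le_succ fun n => by rw [hS]; exact hFG (S n)
  have hcount : (⋃ n, ((S n : Finset WW) : Set WW)).Countable :=
    Set.countable_iUnion fun n => Finset.countable_toSet (S n)
  refine ⟨_, hcount, ?_⟩
  intro x hx
  rw [mem_closure_iff]
  intro O hO hxO
  obtain ⟨O', hO', rfl⟩ := ind.isOpen_iff.1 hO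
  obtain ⟨F, hF⟩ := bool_nhd hO' hxO
  -- `F ∩ S n` stabilizes
  obtain ⟨n, hn⟩ : ∃ n, ∀ v ∈ F, v ∈ S (n+1) → v ∈ S n := by
    have : ∀ v : WW, ∃ n, ∀ k, v ∈ S k → v ∈ S n := by
      intro v
      by_cases h : ∃ k, v ∈ S k
      · obtain ⟨k, hk⟩ := h
        exact ⟨k, fun _ _ => hk⟩
      · exact ⟨0, fun k hk => (h ⟨k, hk⟩).elim⟩
    choose N hN using this
    refine ⟨F.sup N, fun v hv hvS => ?_⟩
    exact hmono (Finset.le_sup hv) (hN v _ hvS)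
  let w : WW → Bool := fun v => if v ∈ S (n+1) then t (S n) v else m x v
  obtain ⟨u, hu⟩ := exists_row ((F : Set WW) ∪ S (n+1)) (F.countable_toSet.union
    (S (n+1)).countable_toSet) w
  refine ⟨u, hF _ ?_, hP'' (S n) _ ?_⟩
  · intro v hv
    rw [hu v (Or.inl hv)]
    by_cases h : v ∈ S (n+1)
    · simp only [w, if_pos h]
      rw [ht _ _ (hn v hv h), hx v (mem_iUnion.2 ⟨n, hn v hv h⟩)]
    · simp only [w, if_neg h]
  · intro v hv
    rw [← hS] at hv
    rw [hu v (Or.inr hv)]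
    simp only [w, if_pos hv]

lemma extend_tendsto {K : Type*} [TopologicalSpace K] [CompactSpace K] [T2Space K] (φ : WW → K)
    (hφ : Continuous φ) (b : WW → Bool) :
    ∃ c, Filter.Tendsto φ (Filter.comap m (𝓝 b)) (𝓝 c) := by
  have di : IsDenseInducing m := ⟨ind, dense_m⟩
  have : (Filter.comap m (𝓝 b)).NeBot := di.comap_nhds_neBot b
  obtain ⟨c, hc⟩ := exists_clusterPt_of_compactSpace (Filter.map φ (Filter.comap m (𝓝 b)))
  refine ⟨c, ?_⟩
  refine le_nhds_of_unique_clusterPt (fun c' hc' => ?_)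
  by_contra hne
  obtain ⟨θ, h0, h1, -⟩ := exists_continuous_zero_one_of_isClosed (isClosed_singleton (x := c))
    (isClosed_singleton (x := c')) (by simpa using Ne.symm hne)
  have key : ∀ (c : K), ClusterPt c (Filter.map φ (Filter.comap m (𝓝 b))) → ∀ O : Set K, IsOpen O →
      c ∈ O → b ∈ closure (m '' (φ ⁻¹' O)) := by
    intro c hc O hO hcO
    rw [mem_closure_iff]
    intro U hU hbU
    have h := clusterPt_iff_nonempty.1 hc (hO.mem_nhds hcO)
      (V := φ '' (m ⁻¹' U)) (Filter.image_mem_map (Filter.preimage_mem_comap (hU.mem_nhds hbU)))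
    obtain ⟨_, h1, x, hx, rfl⟩ := h
    exact ⟨m x, hx, x, h1, rfl⟩
  have ho1 : IsOpen (θ ⁻¹' Iio (1/3 : ℝ)) := isOpen_Iio.preimage θ.continuous
  have ho2 : IsOpen (θ ⁻¹' Ioi (2/3 : ℝ)) := isOpen_Ioi.preimage θ.continuous
  obtain ⟨A, hA, hAx⟩ := closure_countable _ (ho1.preimage hφ) b (key c hc _ ho1 (by
    simp [h0 (mem_singleton c)]))
  obtain ⟨B, hB, hBx⟩ := closure_countable _ (ho2.preimage hφ) b (key c' hc' _ ho2 (by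
    simp only [mem_preimage, h1 (mem_singleton c')]; norm_num))
  obtain ⟨x, hx⟩ := exists_row (A ∪ B) (hA.union hB) b
  have hx1 := hAx x fun v hv => hx v (Or.inl hv)
  have hx2 := hBx x fun v hv => hx v (Or.inr hv)
  have c1 : θ (φ x) ≤ 1/3 := by
    have : IsClosed {x | θ (φ x) ≤ 1/3} := isClosed_le (θ.continuous.comp hφ) continuous_const
    exact closure_minimal (fun y (hy : θ (φ y) < 1/3) => hy.le) this hx1
  have c2 : 2/3 ≤ θ (φ x) := by
    have : IsClosed {x | 2/3 ≤ θ (φ x)} := isClosed_le continuous_const (θ.continuous.comp hφ)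
    exact closure_minimal (fun y (hy : 2/3 < θ (φ y)) => hy.le) this hx2
  linarith

end WW

lemma part2 (K : Type*) [TopologicalSpace K] [CompactSpace K] [T2Space K]
    (hB : BaireSpace (Cp WW K)) : PiMonolithic K := by
  classical
  intro M _ _ _ _ f hf hs
  rcases isEmpty_or_nonempty K with hK | hK
  · refine ⟨∅, isCompact_empty, inferInstance, ?_⟩
    ext y
    obtain ⟨x, -⟩ := hs y
    exact hK.elim x
  have : SecondCountableTopology M := inferInstance
  let Bs := TopologicalSpace.countableBasis M
  have hBc : Bs.Countable := TopologicalSpace.countable_countableBasis M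
  have hBb := TopologicalSpace.isBasis_countableBasis M
  have hne : ∀ O ∈ Bs, O.Nonempty := fun O hO => TopologicalSpace.nonempty_of_mem_countableBasis hO
  let U : Set M → Set (Cp WW K) := fun O => {φ | ∃ x, f (φ.1 x) ∈ O}
  have hUo : ∀ O ∈ Bs, IsOpen (U O) := by
    intro O hO
    have : U O = ⋃ x, {φ : Cp WW K | f (φ.1 x) ∈ O} := by ext; simp [U]
    rw [this]
    refine isOpen_iUnion fun x => ?_
    exact (hBb.isOpen hO).preimage (hf.comp ((continuous_apply x).comp continuous_subtype_val))
  have hUd : ∀ O ∈ Bs, Dense (U O) := by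
    intro O hO
    rw [dense_iff_inter_open]
    rintro G hG ⟨φ, hφ⟩
    obtain ⟨G', hG', rfl⟩ := isOpen_induced_iff.1 hG
    obtain ⟨F, u, hu, hFu⟩ := isOpen_pi_iff.1 hG' φ.1 hφ
    obtain ⟨y, hy⟩ := Infinite.exists_notMem_finset F
    obtain ⟨z, hz⟩ := hne O hO
    obtain ⟨k, rfl⟩ := hs z
    obtain ⟨ψ, hψ, hψF⟩ := fin_ext (insert y F) (fun x => if x = y then k else φ.1 x)
    refine ⟨⟨ψ, hψ⟩, hFu ?_, y, ?_⟩
    · intro x hx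
      show ψ x ∈ u x
      have hxy : x ≠ y := fun h => hy (h ▸ hx)
      rw [hψF x (Finset.mem_insert_of_mem hx), if_neg hxy]
      exact (hu x hx).2
    · show f (ψ y) ∈ O
      rw [hψF y (Finset.mem_insert_self _ _), if_pos rfl]
      exact hz
  have hdense := dense_biInter_of_isOpen hUo hBc hUd
  have : Nonempty (Cp WW K) := ⟨⟨fun _ => Classical.arbitrary K, continuous_const⟩⟩
  obtain ⟨φ, hφ⟩ := hdense.nonempty
  have di : IsDenseInducing WW.m := ⟨WW.ind, WW.dense_m⟩
  let Φ : (WW → Bool) → K := di.extend φ.1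
  have hΦ : Continuous Φ := di.continuous_extend (WW.extend_tendsto φ.1 φ.2)
  have hΦm : ∀ x, Φ (WW.m x) = φ.1 x := fun x => di.extend_eq φ.2 x
  have hpt : ∀ O ∈ Bs, ∃ (c : WW → Bool) (G : Finset WW), ∀ c' : WW → Bool,
      (∀ v ∈ G, c' v = c v) → f (Φ c') ∈ O := by
    intro O hO
    obtain ⟨x, hx⟩ := mem_iInter₂.1 hφ O hO
    have hop : IsOpen ((f ∘ Φ) ⁻¹' O) := (hBb.isOpen hO).preimage (hf.comp hΦ)
    obtain ⟨G, hG⟩ := bool_nhd hop (f := WW.m x) (by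
      show f (Φ (WW.m x)) ∈ O
      rw [hΦm]; exact hx)
    exact ⟨WW.m x, G, hG⟩
  choose! c G hG using hpt
  let A : Set WW := ⋃ O ∈ Bs, (G O : Set WW)
  have hA : A.Countable := hBc.biUnion fun O _ => (G O).countable_toSet
  have : Countable A := hA.to_subtype
  let e : (A → Bool) → (WW → Bool) := fun a v => if h : v ∈ A then a ⟨v, h⟩ else false
  have he : Continuous e := by
    refine continuous_pi fun v => ?_
    by_cases h : v ∈ A
    · simp only [e, dif_pos h]; exact continuous_apply _
    · simp only [e, dif_neg h]; exact continuous_const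
  have hcont : Continuous (Φ ∘ e) := hΦ.comp he
  refine ⟨range (Φ ∘ e), isCompact_range hcont, metrizable_range _ hcont, ?_⟩
  have hcl : IsClosed (f '' range (Φ ∘ e)) := ((isCompact_range hcont).image hf).isClosed
  rw [← hcl.closure_eq]
  apply Dense.closure_eq
  rw [hBb.dense_iff]
  intro O hO _
  refine ⟨f (Φ (e fun a => c O a)), ?_, _, ⟨fun a => c O a, rfl⟩, rfl⟩
  apply hG O hO
  intro v hv
  have : v ∈ A := mem_iUnion₂.2 ⟨O, hO, hv⟩
  simp [e, this]

/-! ### Open retraction of the Cantor cube -/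

lemma cantor_open_onto (S : Set (ℕ → Bool)) (hS : IsClosed S) (hne : S.Nonempty) :
    ∃ ψ : (ℕ → Bool) → (ℕ → Bool), Continuous ψ ∧ range ψ = S ∧
      ∀ O : Set (ℕ → Bool), IsOpen O → ∃ O₁ : Set (ℕ → Bool), IsOpen O₁ ∧ ψ '' O = O₁ ∩ S := by
  classical
  obtain ⟨s0, hs0⟩ := hne
  let nx : ℕ → Bool → (ℕ → Bool) → (ℕ → Bool) := fun n β s =>
    if h : ∃ t ∈ S, (∀ i < n, t i = s i) ∧ t n = β then h.choose else s
  have nx1 : ∀ n β s, s ∈ S → nx n β s ∈ S := by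
    intro n β s hs
    by_cases h : ∃ t ∈ S, (∀ i < n, t i = s i) ∧ t n = β
    · simp only [nx, dif_pos h]; exact h.choose_spec.1
    · simp only [nx, dif_neg h]; exact hs
  have nx2 : ∀ n β s, ∀ i < n, nx n β s i = s i := by
    intro n β s i hi
    by_cases h : ∃ t ∈ S, (∀ i < n, t i = s i) ∧ t n = β
    · simp only [nx, dif_pos h]; exact h.choose_spec.2.1 i hi
    · simp only [nx, dif_neg h]
  have nx3 : ∀ n β s, (∃ t ∈ S, (∀ i < n, t i = s i) ∧ t n = β) → nx n β s n = β := by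
    intro n β s h
    simp only [nx, dif_pos h]; exact h.choose_spec.2.2
  let σ : (ℕ → Bool) → ℕ → (ℕ → Bool) := fun b n => Nat.rec s0 (fun n s => nx n (b n) s) n
  have hσ : ∀ b n, σ b (n+1) = nx n (b n) (σ b n) := fun _ _ => rfl
  have hσS : ∀ b n, σ b n ∈ S := by
    intro b n
    induction n with
    | zero => exact hs0
    | succ n ih => rw [hσ]; exact nx1 _ _ _ ih
  let ψ : (ℕ → Bool) → (ℕ → Bool) := fun b n => σ b (n+1) n
  have hψσ : ∀ b n, ∀ i < n, σ b n i = ψ b i := by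
    intro b n i hi
    induction n, hi using Nat.le_induction with
    | base => rfl
    | succ n hn ih => rw [hσ, nx2 _ _ _ _ hn, ih]
  have hdep : ∀ b b' n, (∀ i < n, b i = b' i) → σ b n = σ b' n := by
    intro b b' n
    induction n with
    | zero => intro _; rfl
    | succ n ih =>
      intro h
      rw [hσ, hσ, ih fun i hi => h i (by omega), h n (by omega)]
  have hψS : ∀ b, ψ b ∈ S := by
    intro b
    have ht : Filter.Tendsto (σ b) Filter.atTop (𝓝 (ψ b)) := by
      rw [tendsto_pi_nhds]
      intro i
      apply tendsto_const_nhds.congr'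
      filter_upwards [Filter.eventually_gt_atTop i] with n hn
      exact (hψσ b n i hn).symm
    exact hS.mem_of_tendsto ht (Filter.Eventually.of_forall (hσS b))
  have hlift : ∀ b n, ∀ s ∈ S, (∀ i < n, s i = ψ b i) → ∃ b', (∀ i < n, b' i = b i) ∧ ψ b' = s := by
    intro b n s hs hag
    let b' : ℕ → Bool := fun i => if i < n then b i else s i
    have hb' : ∀ i < n, b' i = b i := fun i hi => by simp [b', hi]
    refine ⟨b', hb', ?_⟩
    have hk : ∀ k, ∀ i < k, σ b' k i = s i := by
      intro k
      induction k with
      | zero => intro i hi; omega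
      | succ k ih =>
        intro i hi
        by_cases hkn : k < n
        · have : σ b' (k+1) = σ b (k+1) := hdep _ _ (k+1) fun j hj => hb' j (by omega)
          rw [this, hψσ b (k+1) i hi, hag i (by omega)]
        · rcases Nat.lt_or_ge i k with h | h
          · rw [hσ, nx2 _ _ _ _ h, ih i h]
          · have hik : i = k := by omega
            subst hik
            rw [hσ, nx3]
            · simp [b', hkn]
            · exact ⟨s, hs, fun j hj => (ih j hj).symm, by simp [b', hkn]⟩
    funext i
    exact hk (i+1) i (by omega)
  refine ⟨ψ, ?_, ?_, ?_⟩
  · refine continuous_pi fun i => ?_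
    let R : (ℕ → Bool) → (Fin (i+1) → Bool) := fun b j => b j
    let F : (Fin (i+1) → Bool) → Bool := fun c => ψ (fun j => if h : j < i+1 then c ⟨j, h⟩ else false) i
    have hRc : Continuous R := continuous_pi fun j => continuous_apply _
    have hF : Continuous F := continuous_of_discreteTopology
    have : (fun b => ψ b i) = F ∘ R := by
      funext b
      show σ b (i+1) i = σ _ (i+1) i
      rw [hdep b _ (i+1)]
      intro j hj
      simp [R, hj]
    rw [this]
    exact hF.comp hRc
  · apply Subset.antisymm
    · rintro _ ⟨b, rfl⟩; exact hψS b
    · intro s hs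
      obtain ⟨b', -, h⟩ := hlift s0 0 s hs (by simp)
      exact ⟨b', h⟩
  · intro O hO
    refine ⟨⋃ (p : (ℕ → Bool) × ℕ) (_ : ∀ b', (∀ i < p.2, b' i = p.1 i) → b' ∈ O),
      {s | ∀ i ∈ Finset.range p.2, s i = ψ p.1 i}, ?_, ?_⟩
    · exact isOpen_iUnion fun p => isOpen_iUnion fun _ => bool_box_open _ _
    · apply Subset.antisymm
      · rintro _ ⟨b, hb, rfl⟩
        refine ⟨?_, hψS b⟩
        obtain ⟨F, hF⟩ := bool_nhd hO hb
        refine mem_iUnion₂.2 ⟨(b, F.sup id + 1), fun b' h => hF b' fun i hi => h i ?_, ?_⟩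
        · exact Nat.lt_succ_of_le (Finset.le_sup (f := id) hi)
        · intro i _; rfl
      · rintro s ⟨h1, hs⟩
        obtain ⟨⟨b, n⟩, h2, h3⟩ := mem_iUnion₂.1 h1
        obtain ⟨b', hb', rfl⟩ := hlift b n s hs fun i hi => h3 i (Finset.mem_range.2 hi)
        exact ⟨b', h2 b' hb', rfl⟩

lemma cantor_irred {M : Type} [TopologicalSpace M] [T2Space M] [Nonempty M] (P : (ℕ → Bool) → M)
    (hP : Continuous P) (hs : Surjective P) :
    ∃ ψ : (ℕ → Bool) → (ℕ → Bool), Continuous ψ ∧ Surjective (P ∘ ψ) ∧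
      ∀ O : Set (ℕ → Bool), IsOpen O → O.Nonempty → ∃ O' : Set M, IsOpen O' ∧ O'.Nonempty ∧
        O' ⊆ (P ∘ ψ) '' O := by
  obtain ⟨S, hSc, hSonto, hmin⟩ := exists_compact_surjective_zorn_subset hP hs
  have hSc' : IsCompact S := isCompact_iff_compactSpace.2 hSc
  have hSne : S.Nonempty := by
    have : (P '' S).Nonempty := by rw [hSonto]; exact univ_nonempty
    exact this.of_image
  obtain ⟨ψ, hψ, hr, hopen⟩ := cantor_open_onto S hSc'.isClosed hSne
  refine ⟨ψ, hψ, ?_, ?_⟩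
  · intro y
    have : y ∈ P '' S := by rw [hSonto]; trivial
    obtain ⟨s, hs, rfl⟩ := this
    rw [← hr] at hs
    obtain ⟨b, rfl⟩ := hs
    exact ⟨b, rfl⟩
  · rintro O hO ⟨b, hb⟩
    obtain ⟨O₁, hO₁, him⟩ := hopen O hO
    let C : Set S := Subtype.val ⁻¹' O₁ᶜ
    have hC : IsClosed C := hO₁.isClosed_compl.preimage continuous_subtype_val
    have hbm : ψ b ∈ O₁ ∩ S := by rw [← him]; exact ⟨b, hb, rfl⟩
    have hCne : C ≠ univ := by
      intro h
      have : (⟨ψ b, hbm.2⟩ : S) ∈ C := by rw [h]; trivial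
      exact this hbm.1
    have h1 := hmin C hCne hC
    refine ⟨(S.domRestrict P '' C)ᶜ, ?_, ?_, ?_⟩
    · exact (hC.isCompact.image (hP.comp continuous_subtype_val)).isClosed.isOpen_compl
    · exact nonempty_compl.2 h1
    · intro y hy
      have : y ∈ P '' S := by rw [hSonto]; trivial
      obtain ⟨s, hs, rfl⟩ := this
      have hsO : s ∈ O₁ := by
        by_contra hns
        exact hy ⟨⟨s, hs⟩, hns, rfl⟩
      have : s ∈ ψ '' O := by rw [him]; exact ⟨hsO, hs⟩
      obtain ⟨b', hb', rfl⟩ := this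
      exact ⟨b', hb', rfl⟩

/-! ### Closing off -/

lemma closing {α : Type*} (s : Finset α → Set α) (hs : ∀ p, (s p).Countable) (p₀ : Finset α) :
    ∃ Z : Set α, Z.Countable ∧ (p₀ : Set α) ⊆ Z ∧ ∀ p : Finset α, (p : Set α) ⊆ Z → s p ⊆ Z := by
  classical
  obtain ⟨Zn, hZ0, hZ⟩ : ∃ Zn : ℕ → Set α, Zn 0 = (p₀ : Set α) ∧
      ∀ n, Zn (n+1) = Zn n ∪ ⋃ p ∈ {p : Finset α | (p : Set α) ⊆ Zn n}, s p :=
    ⟨fun n => Nat.rec (p₀ : Set α)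
      (fun _ Z => Z ∪ ⋃ p ∈ {p : Finset α | (p : Set α) ⊆ Z}, s p) n, rfl, fun _ => rfl⟩
  have hmono : Monotone Zn := monotone_nat_of_le_succ fun n => by
    rw [hZ]; exact subset_union_left
  have hc : ∀ n, (Zn n).Countable := by
    intro n
    induction n with
    | zero => rw [hZ0]; exact p₀.countable_toSet
    | succ n ih =>
      rw [hZ]
      refine ih.union (Set.Countable.biUnion ?_ fun p _ => hs p)
      have : Countable (Zn n) := ih.to_subtype
      refine (Set.countable_range (fun q : Finset (Zn n) => q.map (Embedding.subtype _))).mono ?_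
      intro p hp
      refine ⟨p.subtype (· ∈ Zn n), ?_⟩
      exact (Finset.subtype_map _).trans (Finset.filter_true_of_mem fun x hx => hp hx)
  refine ⟨⋃ n, Zn n, countable_iUnion hc, by rw [← hZ0]; exact subset_iUnion Zn 0, ?_⟩
  intro p hp
  have hN : ∃ N, (p : Set α) ⊆ Zn N := by
    have : ∀ x ∈ p, ∃ n, x ∈ Zn n := fun x hx => mem_iUnion.1 (hp hx)
    choose! N hN using this
    exact ⟨p.sup N, fun x hx => hmono (Finset.le_sup hx) (hN x hx)⟩
  obtain ⟨N, hN⟩ := hN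
  refine Subset.trans ?_ (subset_iUnion Zn (N+1))
  rw [hZ]
  exact subset_union_of_subset_right (subset_biUnion_of_mem (u := s) hN) _

/-- Finitely many constraints on a function `X → K`. -/
def Sat {X K : Type*} [TopologicalSpace K] (p : Finset (X × C(K, ℝ) × ℚ × ℚ)) (f : X → K) : Prop :=
  ∀ c ∈ p, (c.2.2.1 : ℝ) < c.2.1 (f c.1) ∧ c.2.1 (f c.1) < (c.2.2.2 : ℝ)

lemma sat_open {X K : Type*} [TopologicalSpace K] (p : Finset (X × C(K, ℝ) × ℚ × ℚ)) :
    IsOpen {f : X → K | Sat p f} := by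
  have : {f : X → K | Sat p f} = ⋂ c ∈ p, {f : X → K | (c.2.2.1 : ℝ) < c.2.1 (f c.1) ∧
    c.2.1 (f c.1) < (c.2.2.2 : ℝ)} := by ext f; simp [Sat]
  rw [this]
  refine isOpen_biInter_finset fun c _ => ?_
  have h : Continuous fun f : X → K => c.2.1 (f c.1) := c.2.1.continuous.comp (continuous_apply _)
  exact (isOpen_lt continuous_const h).inter (isOpen_lt h continuous_const)

lemma sat_base {X K : Type*} [TopologicalSpace K] [CompactSpace K] [T2Space K]
    {U : Set (X → K)} (hU : IsOpen U) {f : X → K} (hf : f ∈ U) :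
    ∃ p : Finset (X × C(K, ℝ) × ℚ × ℚ), Sat p f ∧ ∀ g, Sat p g → g ∈ U := by
  classical
  obtain ⟨F, u, hu, hFu⟩ := isOpen_pi_iff.1 hU f hf
  have : ∀ x ∈ F, ∃ φ : C(K, ℝ), φ (f x) = 0 ∧ ∀ y ∉ u x, φ y = 1 := by
    intro x hx
    obtain ⟨φ, h0, h1, -⟩ := exists_continuous_zero_one_of_isClosed
      (isClosed_singleton (x := f x)) (hu x hx).1.isClosed_compl (by simpa using (hu x hx).2)
    exact ⟨φ, h0 rfl, fun y hy => h1 hy⟩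
  choose! φ h0 h1 using this
  refine ⟨F.image fun x => (x, φ x, -1, 1), ?_, ?_⟩
  · intro c hc
    obtain ⟨x, hx, rfl⟩ := Finset.mem_image.1 hc
    simp [h0 x hx]
  · intro g hg
    apply hFu
    intro x hx
    by_contra hn
    have h2 := (hg _ (Finset.mem_image_of_mem _ hx)).2
    simp only [h1 x hx _ hn] at h2
    norm_num at h2

lemma part1 (K : Type*) [TopologicalSpace K] [CompactSpace K] [T2Space K] (hK : PiMonolithic K)
    (X : Type*) [TopologicalSpace X] [TotallySeparatedSpace X] (hB : BaireSpace (Cp X Bool)) :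
    BaireSpace (Cp X K) := by
  classical
  rcases isEmpty_or_nonempty X with hXe | ⟨⟨x₀⟩⟩
  · have : Subsingleton (Cp X K) := ⟨fun f g => Subtype.ext (funext fun x => hXe.elim x)⟩
    exact baire_of_finite
  rcases isEmpty_or_nonempty K with hKe | hKn
  · have : Subsingleton (Cp X K) := ⟨fun f g => hKe.elim (f.1 x₀)⟩
    exact baire_of_finite
  constructor
  intro U hUo hUd
  have hdense : Dense {f : X → K | Continuous f} := by
    rw [dense_iff_inter_open]
    rintro G hG ⟨φ, hφ⟩
    obtain ⟨F, u, hu, hFu⟩ := isOpen_pi_iff.1 hG φ hφ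
    obtain ⟨ψ, hψ, hψF⟩ := fin_ext F φ
    refine ⟨ψ, hFu fun x hx => ?_, hψ⟩
    rw [hψF x hx]; exact (hu x hx).2
  choose V hVo hVd hVU using fun n => exists_open_dense_of_open_dense_subtype hdense (hUo n) (hUd n)
  rw [dense_iff_inter_open]
  rintro G hG ⟨f₀, hf₀⟩
  obtain ⟨G', hG', rfl⟩ := isOpen_induced_iff.1 hG
  suffices H : ∃ f : X → K, Continuous f ∧ f ∈ G' ∧ ∀ n, f ∈ V n by
    obtain ⟨f, hf, h1, h2⟩ := H
    refine ⟨⟨f, hf⟩, h1, mem_iInter.2 fun n => ?_⟩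
    rw [← hVU n]; exact h2 n
  obtain ⟨p₁, hp₁, hp₁G⟩ := sat_base hG' (f := f₀.1) hf₀
  let p₀ : Finset (X × C(K, ℝ) × ℚ × ℚ) := insert (x₀, 0, -1, 1) p₁
  have hp₀ : Sat p₀ f₀.1 := by
    intro c hc
    rcases Finset.mem_insert.1 hc with rfl | hc
    · simp
    · exact hp₁ c hc
  have hp₀G : ∀ g, Sat p₀ g → g ∈ G' := fun g hg => hp₁G g fun c hc =>
    hg c (Finset.mem_insert_of_mem hc)
  -- extension step
  have ext : ∀ (n : ℕ) (p : Finset (X × C(K, ℝ) × ℚ × ℚ)), ∃ p' : Finset (X × C(K, ℝ) × ℚ × ℚ),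
      p ⊆ p' ∧ ((∃ f, Sat p f) → (∃ f, Sat p' f) ∧ ∀ g, Sat p' g → g ∈ V n) := by
    intro n p
    by_cases h : ∃ f : X → K, Sat p f
    · obtain ⟨f, hf, hfV⟩ := (hVd n).inter_open_nonempty _ (sat_open p) h
      obtain ⟨q, hq, hqV⟩ := sat_base (hVo n) hfV
      refine ⟨p ∪ q, Finset.subset_union_left, fun _ => ⟨⟨f, ?_⟩, ?_⟩⟩
      · intro c hc
        rcases Finset.mem_union.1 hc with hc | hc
        · exact hf c hc
        · exact hq c hc
      · exact fun g hg => hqV g fun c hc => hg c (Finset.mem_union_right _ hc)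
    · exact ⟨p, subset_rfl, fun h' => (h h').elim⟩
  choose p' hpp' hp' using ext
  let s : Finset (X × C(K, ℝ) × ℚ × ℚ) → Set (X × C(K, ℝ) × ℚ × ℚ) := fun p =>
    ⋃ n, ((p' n p).image Prod.fst : Set X) ×ˢ
      (((p' n p).image (fun c => c.2.1) : Set (C(K, ℝ))) ×ˢ (univ : Set (ℚ × ℚ)))
  have hs : ∀ p, (s p).Countable := by
    intro p
    refine countable_iUnion fun n => ?_
    exact (Finset.countable_toSet _).prod ((Finset.countable_toSet _).prod (Set.to_countable _))
  obtain ⟨Z, hZc, hZ0, hZs⟩ := closing s hs p₀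
  have hZp' : ∀ (n : ℕ) (p : Finset (X × C(K, ℝ) × ℚ × ℚ)), (p : Set (X × C(K, ℝ) × ℚ × ℚ)) ⊆ Z →
      (p' n p : Set (X × C(K, ℝ) × ℚ × ℚ)) ⊆ Z := by
    intro n p hp c hc
    apply hZs p hp
    refine mem_iUnion.2 ⟨n, ?_, ?_, trivial⟩
    · exact Finset.mem_coe.2 (Finset.mem_image_of_mem Prod.fst hc)
    · exact Finset.mem_coe.2 (Finset.mem_image_of_mem (fun c => c.2.1) hc)
  have hZprod : ∀ c ∈ Z, ∀ d ∈ Z, ∀ a b : ℚ, (c.1, d.2.1, a, b) ∈ Z := by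
    intro c hc d hd a b
    have hsub : (({c, d} : Finset (X × C(K, ℝ) × ℚ × ℚ)) : Set (X × C(K, ℝ) × ℚ × ℚ)) ⊆ Z := by
      intro e he
      simp at he
      rcases he with rfl | rfl <;> assumption
    apply hZs {c, d} hsub
    refine mem_iUnion.2 ⟨0, ?_, ?_, trivial⟩
    · exact Finset.mem_coe.2 (Finset.mem_image.2 ⟨c, hpp' 0 _ (by simp), rfl⟩)
    · exact Finset.mem_coe.2 (Finset.mem_image.2 ⟨d, hpp' 0 _ (by simp), rfl⟩)
  let E : Set X := Prod.fst '' Z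
  let Φ : Set C(K, ℝ) := (fun c => c.2.1) '' Z
  have hZne : Z.Nonempty := ⟨(x₀, 0, -1, 1), hZ0 (Finset.mem_coe.2 (Finset.mem_insert_self _ _))⟩
  obtain ⟨q, hq⟩ := (hZc.image (fun c => c.2.1)).exists_eq_range (hZne.image _)
  have hqZ : ∀ x ∈ E, ∀ j, ∀ a b : ℚ, (x, q j, a, b) ∈ Z := by
    rintro _ ⟨c, hc, rfl⟩ j a b
    have : q j ∈ (fun c : X × C(K, ℝ) × ℚ × ℚ => c.2.1) '' Z := by rw [hq]; exact ⟨j, rfl⟩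
    obtain ⟨d, hd, hdj⟩ := this
    rw [← hdj]
    exact hZprod c hc d hd a b
  let Q : K → (ℕ → ℝ) := fun k n => q n k
  have hQ : Continuous Q := continuous_pi fun n => (q n).continuous
  have hcM : CompactSpace (range Q) := isCompact_iff_compactSpace.1 (isCompact_range hQ)
  obtain ⟨T, hTc, hTm, hTonto⟩ := hK (range Q) inferInstance hcM inferInstance inferInstance
    (rangeFactorization Q) (hQ.subtype_mk _) rangeFactorization_surjective
  have : CompactSpace T := isCompact_iff_compactSpace.1 hTc
  have hMne : Nonempty (range Q) := ⟨⟨_, Classical.arbitrary K, rfl⟩⟩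
  have : Nonempty T := by
    have : (rangeFactorization Q '' T).Nonempty := by rw [hTonto]; exact univ_nonempty
    exact this.of_image.to_subtype
  let _ : MetricSpace T := TopologicalSpace.metrizableSpaceMetric T
  obtain ⟨r₀, hr₀, hr₀s⟩ := exists_nat_bool_continuous_surjective_of_compact T
  have hQc : Continuous (rangeFactorization Q) := hQ.subtype_mk _
  obtain ⟨ψ, hψ, hψs, hψo⟩ := cantor_irred (fun b => rangeFactorization Q (r₀ b : K))
    (hQc.comp (continuous_subtype_val.comp hr₀)) (by
      intro y
      have : y ∈ rangeFactorization Q '' T := by rw [hTonto]; trivial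
      obtain ⟨t, ht, rfl⟩ := this
      obtain ⟨b, hb⟩ := hr₀s ⟨t, ht⟩
      exact ⟨b, by simp [hb]⟩)
  let r : (ℕ → Bool) → K := fun b => r₀ (ψ b)
  have hr : Continuous r := continuous_subtype_val.comp (hr₀.comp hψ)
  have hrs : ∀ k, ∃ b, Q (r b) = Q k := by
    intro k
    obtain ⟨b, hb⟩ := hψs (rangeFactorization Q k)
    exact ⟨b, congrArg Subtype.val hb⟩
  have hro : ∀ O : Set (ℕ → Bool), IsOpen O → O.Nonempty → ∃ O' : Set (ℕ → ℝ), IsOpen O' ∧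
      (∃ k, Q k ∈ O') ∧ ∀ k, Q k ∈ O' → ∃ b ∈ O, Q (r b) = Q k := by
    intro O hO hOne
    obtain ⟨O', hO', ⟨⟨_, k, rfl⟩, hk⟩, hsub⟩ := hψo O hO hOne
    obtain ⟨O'', hO'', rfl⟩ := isOpen_induced_iff.1 hO'
    refine ⟨O'', hO'', ⟨k, hk⟩, fun k' hk' => ?_⟩
    obtain ⟨b, hb, hbk⟩ := hsub (a := rangeFactorization Q k') hk'
    exact ⟨b, hb, congrArg Subtype.val hbk⟩
  -- satisfaction of constraints from `Z` only depends on `Q`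
  have hsatQ : ∀ p : Finset (X × C(K, ℝ) × ℚ × ℚ), (p : Set (X × C(K, ℝ) × ℚ × ℚ)) ⊆ Z →
      ∀ f g : X → K, (∀ x ∈ E, Q (f x) = Q (g x)) → Sat p f → Sat p g := by
    intro p hp f g hfg hf c hc
    have hcZ : c ∈ Z := hp hc
    have h1 : c.2.1 ∈ range q := by rw [← hq]; exact ⟨c, hcZ, rfl⟩
    obtain ⟨j, hj⟩ := h1
    have h2 : c.2.1 (g c.1) = c.2.1 (f c.1) := by
      rw [← hj]; exact (congrFun (hfg c.1 ⟨c, hcZ, rfl⟩) j).symm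
    rw [h2]; exact hf c hc
  -- constraints inside an open set of `ℕ → ℝ`
  have hin : ∀ x ∈ E, ∀ (O' : Set (ℕ → ℝ)), IsOpen O' → ∀ k, Q k ∈ O' →
      ∃ p : Finset (X × C(K, ℝ) × ℚ × ℚ), (p : Set (X × C(K, ℝ) × ℚ × ℚ)) ⊆ Z ∧
        (∀ c ∈ p, c.1 = x) ∧ (∀ f : X → K, f x = k → Sat p f) ∧
        ∀ f : X → K, Sat p f → Q (f x) ∈ O' := by
    intro x hx O' hO' k hk
    obtain ⟨J, u, hu, hJu⟩ := isOpen_pi_iff.1 hO' _ hk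
    have : ∀ j ∈ J, ∃ a b : ℚ, (a : ℝ) < Q k j ∧ Q k j < b ∧ Ioo (a : ℝ) b ⊆ u j := by
      intro j hj
      obtain ⟨l, v, hlv, hsub⟩ := mem_nhds_iff_exists_Ioo_subset.1 ((hu j hj).1.mem_nhds (hu j hj).2)
      obtain ⟨a, ha1, ha2⟩ := exists_rat_btwn hlv.1
      obtain ⟨b, hb1, hb2⟩ := exists_rat_btwn hlv.2
      exact ⟨a, b, ha2, hb1, (Ioo_subset_Ioo ha1.le hb2.le).trans hsub⟩
    choose! a b ha hb hab using this
    refine ⟨J.image fun j => (x, q j, a j, b j), ?_, ?_, ?_, ?_⟩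
    · intro c hc
      obtain ⟨j, hj, rfl⟩ := Finset.mem_image.1 (Finset.mem_coe.1 hc)
      exact hqZ x hx j _ _
    · intro c hc
      obtain ⟨j, hj, rfl⟩ := Finset.mem_image.1 hc
      rfl
    · intro f hf c hc
      obtain ⟨j, hj, rfl⟩ := Finset.mem_image.1 hc
      show (a j : ℝ) < q j (f x) ∧ q j (f x) < b j
      rw [hf]
      exact ⟨ha j hj, hb j hj⟩
    · intro f hf
      apply hJu
      intro j hj
      exact hab j hj (hf _ (Finset.mem_image_of_mem _ hj))
  choose! lift hlift using hrs
  obtain ⟨f, hf, hfO, hfV⟩ := generic_cantor (X := X) (fun n => {f | (fun x => r (f x)) ∈ V n})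
    (fun n => (hVo n).preimage (continuous_pi fun x => hr.comp (continuous_apply x)))
    (by
      intro n
      rw [dense_iff_inter_open]
      rintro O hO ⟨h, hh⟩
      obtain ⟨F, u, hu, hFu⟩ := isOpen_pi_iff.1 hO h hh
      have h1 : ∀ x ∈ F, ∃ O' : Set (ℕ → ℝ), IsOpen O' ∧
        (∃ k, Q k ∈ O') ∧ ∀ k, Q k ∈ O' → ∃ b ∈ u x, Q (r b) = Q k :=
        fun x hx => hro (u x) (hu x hx).1 ⟨_, (hu x hx).2⟩
      choose! O' hO' hk hOb using h1
      choose! k hk using hk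
      have h2 : ∀ x, x ∈ F ∧ x ∈ E → ∃ p : Finset (X × C(K, ℝ) × ℚ × ℚ),
          (p : Set (X × C(K, ℝ) × ℚ × ℚ)) ⊆ Z ∧
          (∀ c ∈ p, c.1 = x) ∧ (∀ f : X → K, f x = k x → Sat p f) ∧
          ∀ f : X → K, Sat p f → Q (f x) ∈ O' x :=
        fun x hx => hin x hx.2 (O' x) (hO' x hx.1) (k x) (hk x hx.1)
      choose! px hpZ hp1 hpk hpO using h2
      let p : Finset (X × C(K, ℝ) × ℚ × ℚ) := (F.filter (· ∈ E)).biUnion px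
      have hpZ' : (p : Set (X × C(K, ℝ) × ℚ × ℚ)) ⊆ Z := by
        intro c hc
        obtain ⟨x, hx, hcx⟩ := Finset.mem_biUnion.1 (Finset.mem_coe.1 hc)
        exact hpZ x (Finset.mem_filter.1 hx) hcx
      have hpcons : ∃ f, Sat p f := by
        refine ⟨k, fun c hc => ?_⟩
        obtain ⟨x, hx, hcx⟩ := Finset.mem_biUnion.1 hc
        exact hpk x (Finset.mem_filter.1 hx) k rfl c hcx
      obtain ⟨⟨w, hw⟩, hwV⟩ := hp' n p hpcons
      have h3 : ∀ x, ∃ b, (x ∈ F → b ∈ u x) ∧ (x ∈ E → Q (r b) = Q (w x)) := by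
        intro x
        by_cases hxE : x ∈ E
        · by_cases hxF : x ∈ F
          · have hsat : Sat (px x) w := fun c hc => hw c (hpp' n p
              (Finset.mem_biUnion.2 ⟨x, Finset.mem_filter.2 ⟨hxF, hxE⟩, hc⟩))
            obtain ⟨b, hb, hbQ⟩ := hOb x hxF (w x) (hpO x ⟨hxF, hxE⟩ w hsat)
            exact ⟨b, fun _ => hb, fun _ => hbQ⟩
          · exact ⟨lift (w x), fun h => (hxF h).elim, fun _ => hlift (w x)⟩
        · exact ⟨h x, fun hx => (hu x hx).2, fun h => (hxE h).elim⟩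
      choose b hbF hbE using h3
      refine ⟨b, hFu fun x hx => hbF x hx, hwV _ ?_⟩
      exact hsatQ (p' n p) (hZp' n p hpZ') w _ (fun x hx => (hbE x hx).symm) hw)
    {f | Sat p₀ (fun x => r (f x))}
    ((sat_open p₀).preimage (continuous_pi fun x => hr.comp (continuous_apply x)))
    ⟨fun x => lift (f₀.1 x), hsatQ p₀ hZ0 f₀.1 _ (fun x _ => (hlift _).symm) hp₀⟩
  exact ⟨fun x => r (f x), hr.comp hf, hp₀G _ hfO, hfV⟩


/-- A compact Hausdorff space `K` is π-monolithic iff for every totally disconnected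
(totally separated) Tychonoff space `X` such that `C_p(X, 𝔻)` is Baire, the space
`C_p(X, K)` is Baire. Here `𝔻 = {0,1}` is realized as `Bool`. -/
theorem statement8 (K : Type*) [TopologicalSpace K] [CompactSpace K] [T2Space K] :
    PiMonolithic K ↔
      ∀ (X : Type) (_ : TopologicalSpace X), T1Space X → CompletelyRegularSpace X →
        TotallySeparatedSpace X → BaireSpace (Cp X Bool) → BaireSpace (Cp X K) := by
  constructor
  · intro h X _ _ _ _ hB
    exact part1 K h X hB
  · intro h
    exact part2 K (h WW inferInstance inferInstance inferInstance inferInstance inferInstance)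
end

section
/- For every nonempty Polish space L there exists a surjective continuous open map φ : ℕ^ℕ → L, where ℕ^ℕ is the Baire space of sequences of natural numbers with the product topology. -/
open Set Topology Function

lemma step_aux {L : Type*} [MetricSpace L] [SecondCountableTopology L]
    (U : Set L) (δ : ℝ) : ∃ V : ℕ → Set L, IsOpen U → U.Nonempty → 0 < δ →
      (∀ a, IsOpen (V a)) ∧ (∀ a, (V a).Nonempty) ∧ (∀ a, closure (V a) ⊆ U) ∧
      (∀ a, Metric.ediam (V a) ≤ ENNReal.ofReal (2 * δ)) ∧ (∀ y ∈ U, ∃ a, y ∈ V a) := by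
  by_cases h : IsOpen U ∧ U.Nonempty ∧ 0 < δ
  swap
  · exact ⟨fun _ => ∅, fun h1 h2 h3 => absurd ⟨h1, h2, h3⟩ h⟩
  obtain ⟨hU, hne, hδ⟩ := h
  have H : ∀ x, ∃ r : ℝ, x ∈ U → 0 < r ∧ r ≤ δ ∧ Metric.closedBall x r ⊆ U := by
    intro x
    by_cases hx : x ∈ U
    · obtain ⟨r, hr, hs⟩ := Metric.nhds_basis_closedBall.mem_iff.1 (hU.mem_nhds hx)
      exact ⟨min r δ, fun _ => ⟨lt_min hr hδ, min_le_right _ _,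
        (Metric.closedBall_subset_closedBall (min_le_left _ _)).trans hs⟩⟩
    · exact ⟨0, fun h => absurd h hx⟩
  choose r hr using H
  obtain ⟨t, htU, htc, hcov⟩ := TopologicalSpace.countable_cover_nhdsWithin
    (f := fun x => Metric.ball x (r x)) (s := U)
    (fun x hx => mem_nhdsWithin_of_mem_nhds (Metric.ball_mem_nhds x (hr x hx).1))
  have htne : t.Nonempty := by
    obtain ⟨y, hy⟩ := hne
    have := hcov hy
    simp only [mem_iUnion] at this
    obtain ⟨x, hx, _⟩ := this
    exact ⟨x, hx⟩
  obtain ⟨e, rfl⟩ := htc.exists_eq_range htne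
  have heU : ∀ a, e a ∈ U := fun a => htU ⟨a, rfl⟩
  refine ⟨fun a => Metric.ball (e a) (r (e a)), fun _ _ _ => ⟨fun a => Metric.isOpen_ball,
    fun a => ⟨e a, Metric.mem_ball_self (hr _ (heU a)).1⟩,
    fun a => Metric.closure_ball_subset_closedBall.trans (hr _ (heU a)).2.2, fun a => ?_, ?_⟩⟩
  · apply Metric.ediam_le_of_forall_dist_le
    intro x hx y hy
    have h1 := Metric.mem_ball.1 hx
    have h2 := Metric.mem_ball'.1 hy
    have h3 := (hr _ (heU a)).2.1
    linarith [dist_triangle x (e a) y]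
  · intro y hy
    have := hcov hy
    simp only [mem_iUnion] at this
    obtain ⟨x, ⟨a, rfl⟩, hx⟩ := this
    exact ⟨a, hx⟩

/-- The scheme obtained by iterating `V`. -/
def schemeAux {L : Type*} (V : Set L → ℝ → ℕ → Set L) : List ℕ → Set L
  | [] => univ
  | a :: l => V (schemeAux V l) ((1 / 2 : ℝ) ^ l.length) a

/-- For every nonempty Polish space `L` there is a surjective continuous open map
`φ : ℕ^ℕ → L` from the Baire space of sequences of natural numbers onto `L`. -/
theorem statement9 (L : Type*) [TopologicalSpace L] [PolishSpace L] [Nonempty L] :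
    ∃ φ : (ℕ → ℕ) → L, Continuous φ ∧ Surjective φ ∧ IsOpenMap φ := by
  letI := TopologicalSpace.upgradeIsCompletelyMetrizable L
  choose V hV using step_aux (L := L)
  set A := schemeAux V with hAdef
  have hA : ∀ l, IsOpen (A l) ∧ (A l).Nonempty := by
    intro l
    induction l with
    | nil => exact ⟨isOpen_univ, univ_nonempty⟩
    | cons a l ih =>
      have := hV _ ((1 / 2 : ℝ) ^ l.length) ih.1 ih.2 (by positivity)
      exact ⟨this.1 a, this.2.1 a⟩
  have hS := fun l : List ℕ => hV _ ((1 / 2 : ℝ) ^ l.length) (hA l).1 (hA l).2 (by positivity)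
  have hanti : CantorScheme.ClosureAntitone A := fun l a => (hS l).2.2.1 a
  have hcov : ∀ l, ∀ y, ∃ a, y ∈ A l → y ∈ A (a :: l) := by
    intro l y
    by_cases hy : y ∈ A l
    · obtain ⟨a, ha⟩ := (hS l).2.2.2.2 y hy
      exact ⟨a, fun _ => ha⟩
    · exact ⟨0, fun h => absurd h hy⟩
  have hdiam : CantorScheme.VanishingDiam A := by
    intro x
    rw [← Filter.tendsto_add_atTop_iff_nat 1]
    have hlim : Filter.Tendsto (fun n : ℕ => ENNReal.ofReal (2 * (1 / 2 : ℝ) ^ n))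
        Filter.atTop (𝓝 0) := by
      have h1 := (tendsto_pow_atTop_nhds_zero_of_lt_one (r := (1 / 2 : ℝ))
        (by norm_num) (by norm_num)).const_mul 2
      have h2 := ENNReal.tendsto_ofReal h1
      simpa using h2
    refine tendsto_of_tendsto_of_tendsto_of_le_of_le tendsto_const_nhds hlim
      (fun _ => zero_le) (fun n => ?_)
    have := (hS (PiNat.res x n)).2.2.2.1 (x n)
    rw [PiNat.res_length] at this
    have h2 : A (PiNat.res x (n + 1))
      = V (A (PiNat.res x n)) ((1 / 2 : ℝ) ^ n) (x n) := by
      rw [PiNat.res_succ, hAdef, schemeAux, PiNat.res_length]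
    simp only [h2]
    exact this
  have hdom := hanti.map_of_vanishingDiam hdiam (fun l => (hA l).2)
  have hin : ∀ x, x ∈ (CantorScheme.inducedMap A).1 := fun x => hdom ▸ mem_univ x
  set φ : (ℕ → ℕ) → L := fun x => (CantorScheme.inducedMap A).2 ⟨x, hin x⟩ with hφ
  have hmem : ∀ x n, φ x ∈ A (PiNat.res x n) := fun x n => CantorScheme.map_mem ⟨x, hin x⟩ n
  have huniq : ∀ x y, (∀ n, y ∈ A (PiNat.res x n)) → φ x = y := by
    intro x y hy
    refine eq_of_forall_dist_le fun ε hε => ?_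
    obtain ⟨n, hn⟩ := hdiam.dist_lt ε hε x
    exact (hn _ (hmem x n) _ (hy n)).le
  have key : ∀ x n, ∀ y ∈ A (PiNat.res x n), ∃ z ∈ PiNat.cylinder x n, φ z = y := by
    intro x n y hy
    choose c hc using fun l => hcov l y
    let l : ℕ → List ℕ := fun k => Nat.rec (PiNat.res x n) (fun _ l => c l :: l) k
    have hl : ∀ k, y ∈ A (l k) := by
      intro k
      induction k with
      | zero => exact hy
      | succ k ih => exact hc _ ih
    let z : ℕ → ℕ := fun m => if m < n then x m else c (l (m - n))
    have hz : ∀ m < n, z m = x m := fun m hm => if_pos hm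
    have hres : ∀ k, PiNat.res z (n + k) = l k := by
      intro k
      induction k with
      | zero => exact PiNat.res_eq_res.2 fun m hm => hz m hm
      | succ k ih =>
        rw [← add_assoc, PiNat.res_succ, ih]
        have : z (n + k) = c (l k) := by simp [z]
        rw [this]
    refine ⟨z, hz, huniq z y fun m => ?_⟩
    have hant : Antitone fun n : ℕ => A (PiNat.res z n) :=
      antitone_nat_of_succ_le fun n => hanti.antitone _ _
    apply hant (Nat.le_add_left m n)
    simp only [hres]
    exact hl m
  refine ⟨φ, hdiam.map_continuous.comp (by fun_prop), fun y => ?_, fun U hU => ?_⟩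
  · obtain ⟨z, _, hz⟩ := key (fun _ => 0) 0 y (mem_univ y)
    exact ⟨z, hz⟩
  · rw [isOpen_iff_mem_nhds]
    rintro _ ⟨x, hx, rfl⟩
    obtain ⟨_, ⟨w, n, rfl⟩, hxw, hsub⟩ :=
      (PiNat.isTopologicalBasis_cylinders (fun _ : ℕ => ℕ)).mem_nhds_iff.1 (hU.mem_nhds hx)
    rw [← PiNat.mem_cylinder_iff_eq.1 hxw] at hsub
    refine Filter.mem_of_superset ((hA (PiNat.res x n)).1.mem_nhds (hmem x n)) fun y hy => ?_
    obtain ⟨z, hz, rfl⟩ := key x n y hy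
    exact ⟨z, hsub hz, rfl⟩
end

section
/- Let X be a totally disconnected Tychonoff space. Then the following are equivalent: (a) C_p(X, ℕ) is a Baire space; (b) there exists a complete metric space M that is non-compact and zero-dimensional (has a base consisting of clopen sets) such that C_p(X, M) is a Baire space; (c) C_p(X, K) is a Baire space for every complete metric space K. -/
open Set Topology

section helpers

variable {X : Type*} [TopologicalSpace X]

lemma cp_nhd_s10 {K : Type*} [PseudoMetricSpace K] {G : Set (Cp X K)} (hG : IsOpen G) {g : Cp X K}
    (hg : g ∈ G) : ∃ (T : Finset X) (r : ℝ), 0 < r ∧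
      ∀ g' : Cp X K, (∀ x ∈ T, dist (g'.1 x) (g.1 x) < r) → g' ∈ G := by
  obtain ⟨O, hO, rfl⟩ := isOpen_induced_iff.1 hG
  obtain ⟨T, u, hu, hsub⟩ := isOpen_pi_iff.1 hO g.1 hg
  have h1 : ∀ x : X, ∃ r : ℝ, 0 < r ∧ (x ∈ T → Metric.ball (g.1 x) r ⊆ u x) := by
    intro x
    by_cases hx : x ∈ T
    · obtain ⟨r, hr, h⟩ := Metric.isOpen_iff.1 (hu x hx).1 _ (hu x hx).2
      exact ⟨r, hr, fun _ => h⟩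
    · exact ⟨1, one_pos, fun h => absurd h hx⟩
  choose r hr hsub2 using h1
  have h2 : ∃ ρ : ℝ, 0 < ρ ∧ ∀ x ∈ T, ρ ≤ r x := by
    clear hsub hu hsub2
    classical
    induction T using Finset.induction_on with
    | empty => exact ⟨1, one_pos, by simp⟩
    | insert a T _ ih =>
      obtain ⟨ρ, h0, h⟩ := ih
      refine ⟨min (r a) ρ, lt_min (hr a) h0, fun x hx => ?_⟩
      rcases Finset.mem_insert.1 hx with rfl | hx
      · exact min_le_left _ _
      · exact (min_le_right _ _).trans (h x hx)
  obtain ⟨ρ, h0, hρ⟩ := h2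
  refine ⟨T, ρ, h0, fun g' hg' => hsub ?_⟩
  intro x hx
  exact hsub2 x hx ((hg' x hx).trans_le (hρ x hx))

lemma cp_open {K : Type*} [PseudoMetricSpace K] (T : Finset X) (p : X → K) (r : ℝ) :
    IsOpen {g : Cp X K | ∀ x ∈ T, dist (g.1 x) (p x) < r} := by
  have : {g : Cp X K | ∀ x ∈ T, dist (g.1 x) (p x) < r}
      = ⋂ x ∈ T, {g : Cp X K | dist (g.1 x) (p x) < r} := by
    ext g; simp
  rw [this]
  refine isOpen_biInter_finset fun x _ => ?_
  refine isOpen_lt ?_ continuous_const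
  exact (((continuous_apply x).comp continuous_subtype_val).dist continuous_const)

lemma clopen_sep [TotallySeparatedSpace X] (a : X) (T : Finset X) (ha : a ∉ T) :
    ∃ W : Set X, IsClopen W ∧ a ∈ W ∧ ∀ x ∈ T, x ∉ W := by
  classical
  induction T using Finset.induction_on with
  | empty => exact ⟨univ, isClopen_univ, trivial, by simp⟩
  | insert b T _ ih =>
    simp only [Finset.mem_insert, not_or] at ha
    obtain ⟨W, hW, haW, h⟩ := ih ha.2
    obtain ⟨U, hU, haU, hbU⟩ := exists_isClopen_of_totally_separated ha.1
    refine ⟨W ∩ U, hW.inter hU, ⟨haW, haU⟩, ?_⟩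
    intro x hx hxW
    rcases Finset.mem_insert.1 hx with rfl | hx
    · exact hbU hxW.2
    · exact h x hx hxW.1

lemma patch [TotallySeparatedSpace X] {Z : Type*} (T : Finset X) (O : X → Set X)
    (hO : ∀ x ∈ T, IsClopen (O x) ∧ x ∈ O x) (h : X → Z) (hh : IsLocallyConstant h) (ψ : X → Z) :
    ∃ h' : X → Z, IsLocallyConstant h' ∧ (∀ x ∈ T, h' x = ψ x) ∧
      ∀ y, h' y = h y ∨ ∃ x ∈ T, y ∈ O x ∧ h' y = ψ x := by
  classical
  induction T using Finset.induction_on with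
  | empty => exact ⟨h, hh, by simp, fun y => Or.inl rfl⟩
  | insert a T haT ih =>
    obtain ⟨h', h1, h2, h3⟩ := ih fun x hx => hO x (Finset.mem_insert_of_mem hx)
    obtain ⟨W, hW, haW, hTW⟩ := clopen_sep a T haT
    obtain ⟨hOa, haO⟩ := hO a (Finset.mem_insert_self _ _)
    have hC : IsClopen (O a ∩ W) := hOa.inter hW
    refine ⟨fun y => if y ∈ O a ∩ W then ψ a else h' y, ?_, ?_, ?_⟩
    · intro s
      have : (fun y => if y ∈ O a ∩ W then ψ a else h' y) ⁻¹' s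
          = ((O a ∩ W) ∩ {_y | ψ a ∈ s}) ∪ ((O a ∩ W)ᶜ ∩ h' ⁻¹' s) := by
        ext y
        change (if y ∈ O a ∩ W then ψ a else h' y) ∈ s ↔
          (y ∈ O a ∩ W ∧ ψ a ∈ s) ∨ (¬ y ∈ O a ∩ W ∧ h' y ∈ s)
        split_ifs with hy <;> tauto
      rw [this]
      exact (hC.isOpen.inter isOpen_const).union (hC.compl.isOpen.inter (h1 s))
    · intro x hx
      rcases Finset.mem_insert.1 hx with rfl | hx
      · exact if_pos ⟨haO, haW⟩
      · have : x ∉ O a ∩ W := fun h => hTW x hx h.2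
        simp only [this, if_false]
        exact h2 x hx
    · intro y
      by_cases hy : y ∈ O a ∩ W
      · right
        exact ⟨a, Finset.mem_insert_self _ _, hy.1, if_pos hy⟩
      · simp only [hy, if_false]
        rcases h3 y with h | ⟨x, hx, h⟩
        · exact Or.inl h
        · exact Or.inr ⟨x, Finset.mem_insert_of_mem hx, h⟩

/-- noncompact zero-dimensional complete: retraction onto an infinite discrete set -/
lemma exists_retr (M : Type*) [MetricSpace M] [CompleteSpace M] (hM : ¬ CompactSpace M)
    (B : Set (Set M)) (hB : ∀ s ∈ B, IsClopen s) (hB' : TopologicalSpace.IsTopologicalBasis B) :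
    ∃ (p : M → ℕ) (s : ℕ → M), Continuous p ∧ ∀ n, p (s n) = n := by
  classical
  have h1 : ¬ TotallyBounded (univ : Set M) := by
    intro h
    exact hM ⟨isCompact_iff_totallyBounded_isComplete.2 ⟨h, isComplete_univ⟩⟩
  rw [Metric.totallyBounded_iff] at h1
  push Not at h1
  obtain ⟨ε, hε, h1⟩ := h1
  obtain ⟨s, hs⟩ : ∃ s : ℕ → M, ∀ m n, m < n → ε ≤ dist (s m) (s n) := by
    obtain ⟨s, _, hs⟩ := exists_seq_of_forall_finset_exists (fun _ : M => True)
      (fun x y => ε ≤ dist x y) (by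
        intro t _
        have := h1 t t.finite_toSet
        rw [not_subset] at this
        obtain ⟨y, _, hy⟩ := this
        refine ⟨y, trivial, fun x hx => ?_⟩
        simp only [mem_iUnion, Metric.mem_ball, not_exists, not_lt] at hy
        rw [dist_comm]
        exact hy x hx)
    exact ⟨s, hs⟩
  have hs' : ∀ m n, dist (s m) (s n) < ε → m = n := by
    intro m n h
    rcases lt_trichotomy m n with h' | h' | h'
    · exact absurd h (not_lt.2 (hs m n h'))
    · exact h'
    · rw [dist_comm] at h
      exact absurd h (not_lt.2 (hs n m h'))
  have hU : ∀ n, ∃ U : Set M, IsClopen U ∧ s n ∈ U ∧ U ⊆ Metric.ball (s n) (ε / 3) := by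
    intro n
    obtain ⟨U, hU, h1, h2⟩ := hB'.exists_subset_of_mem_open
      (Metric.mem_ball_self (x := s n) (by positivity : 0 < ε / 3)) Metric.isOpen_ball
    exact ⟨U, hB U hU, h1, h2⟩
  choose U hUc hsU hUb using hU
  have hclose : ∀ y z w m n, z ∈ Metric.ball y (ε / 6) → w ∈ Metric.ball y (ε / 6) →
      z ∈ U m → w ∈ U n → m = n := by
    intro y z w m n hz hw hm hn
    apply hs'
    have a1 := Metric.mem_ball'.1 (hUb m hm)
    have a2 := Metric.mem_ball.1 (hUb n hn)
    rw [Metric.mem_ball] at hz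
    rw [Metric.mem_ball'] at hw
    have := dist_triangle (s m) z (s n)
    have := dist_triangle z y (s n)
    have := dist_triangle y w (s n)
    linarith
  have huniq : ∀ y m n, y ∈ U m → y ∈ U n → m = n := fun y m n hm hn =>
    hclose y y y m n (Metric.mem_ball_self (by positivity)) (Metric.mem_ball_self (by positivity))
      hm hn
  let p : M → ℕ := fun y => if h : ∃ n, y ∈ U n then h.choose else 0
  have hp : ∀ y n, y ∈ U n → p y = n := by
    intro y n hn
    have h : ∃ n, y ∈ U n := ⟨n, hn⟩
    simp only [p, dif_pos h]
    exact huniq y _ _ h.choose_spec hn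
  have hp0 : ∀ y, (∀ n, y ∉ U n) → p y = 0 := by
    intro y hn
    have h : ¬ ∃ n, y ∈ U n := by push Not; exact hn
    simp only [p, dif_neg h]
  refine ⟨p, s, ?_, fun n => hp _ _ (hsU n)⟩
  apply IsLocallyConstant.continuous
  rw [IsLocallyConstant.iff_exists_open]
  intro y
  have hball : y ∈ Metric.ball y (ε / 6) := Metric.mem_ball_self (by positivity)
  by_cases hy : ∃ n, y ∈ U n
  · obtain ⟨n, hn⟩ := hy
    refine ⟨U n, (hUc n).isOpen, hn, fun z hz => ?_⟩
    rw [hp _ _ hn, hp _ _ hz]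
  · push Not at hy
    by_cases hm : ∃ m, ∃ z ∈ Metric.ball y (ε / 6), z ∈ U m
    · obtain ⟨m, z, hz, hzm⟩ := hm
      refine ⟨Metric.ball y (ε / 6) ∩ (U m)ᶜ, Metric.isOpen_ball.inter (hUc m).compl.isOpen,
        ⟨hball, hy m⟩, ?_⟩
      rintro w ⟨hw, hwm⟩
      rw [hp0 y hy, hp0 w]
      intro n hn
      have := hclose y z w m n hz hw hzm hn
      subst this
      exact hwm hn
    · push Not at hm
      refine ⟨Metric.ball y (ε / 6), Metric.isOpen_ball, hball, fun w hw => ?_⟩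
      rw [hp0 y hy, hp0 w fun n => hm n w hw]

lemma b_to_a [TotallySeparatedSpace X] (M : Type*) [MetricSpace M] [BaireSpace (Cp X M)]
    (p : M → ℕ) (s : ℕ → M) (hp : Continuous p) (hs : ∀ n, p (s n) = n) :
    BaireSpace (Cp X ℕ) := by
  classical
  constructor
  intro G hGo hGd
  let P : Cp X M → Cp X ℕ := fun f => ⟨p ∘ f.1, hp.comp f.2⟩
  have hP : Continuous P := by
    refine Continuous.subtype_mk ?_ _
    refine continuous_pi fun x => ?_
    exact hp.comp ((continuous_apply x).comp continuous_subtype_val)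
  have hsurj : Function.Surjective P := by
    intro g
    refine ⟨⟨s ∘ g.1, continuous_of_discreteTopology.comp g.2⟩, ?_⟩
    ext x
    exact hs _
  have hd : Dense (⋂ n, P ⁻¹' (G n)) := by
    apply BaireSpace.baire_property
    · exact fun n => (hGo n).preimage hP
    · intro n
      rw [dense_iff_inter_open]
      rintro W hW ⟨f, hf⟩
      obtain ⟨T, r, hr, hT⟩ := cp_nhd_s10 hW hf
      obtain ⟨g, hg1, hg2⟩ := (hGd n).inter_open_nonempty _ (cp_open T (P f).1 1)
        ⟨P f, fun x _ => by simp⟩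
      have hgT : ∀ x ∈ T, g.1 x = p (f.1 x) := by
        intro x hx
        have := hg1 x hx
        by_contra hne
        have h2 := Nat.pairwise_one_le_dist hne
        exact absurd this (not_lt.2 h2)
      have hgl : IsLocallyConstant g.1 := (IsLocallyConstant.iff_continuous _).2 g.2
      obtain ⟨h', h1, h2, h3⟩ := patch T (fun x => g.1 ⁻¹' {g.1 x})
        (fun x _ => ⟨(isClopen_discrete _).preimage g.2, rfl⟩) (s ∘ g.1) (hgl.comp s) f.1
      refine ⟨⟨h', h1.continuous⟩, hT _ ?_, ?_⟩
      · intro x hx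
        simp only [h2 x hx, dist_self]
        exact hr
      · have : P ⟨h', h1.continuous⟩ = g := by
          ext y
          change p (h' y) = g.1 y
          rcases h3 y with h | ⟨x, hx, hy, h⟩
          · rw [h]; exact hs _
          · rw [h, ← hgT x hx]; exact hy.symm
        rw [mem_preimage, this]
        exact hg2
  have := hsurj.denseRange.dense_image hP hd
  refine this.mono ?_
  rintro _ ⟨f, hf, rfl⟩
  rw [mem_iInter] at hf ⊢
  exact hf

lemma generic_nat [TotallySeparatedSpace X] [BaireSpace (Cp X ℕ)] (S : ℕ → Finset X)
    (hS : Monotone S) : ∃ f : X → ℕ, Continuous f ∧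
      ∀ m, ∃ n, m ≤ n ∧ ∀ x ∈ S (n + 1), x ∉ S n → f x = n := by
  classical
  let G : ℕ → Set (Cp X ℕ) := fun m => {f | ∃ n, m ≤ n ∧ ∀ x ∈ S (n + 1), x ∉ S n → f.1 x = n}
  have hd : Dense (⋂ n, G n) := by
    apply BaireSpace.baire_property
    · intro m
      rw [isOpen_iff_forall_mem_open]
      rintro f ⟨n, hmn, hn⟩
      refine ⟨_, ?_, cp_open (S (n + 1)) f.1 1, fun x _ => by simp⟩
      intro g hg
      refine ⟨n, hmn, fun x hx hx' => ?_⟩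
      rw [← hn x hx hx']
      by_contra hne
      exact absurd (hg x hx) (not_lt.2 (Nat.pairwise_one_le_dist hne))
    · intro m
      rw [dense_iff_inter_open]
      rintro W hW ⟨g, hg⟩
      obtain ⟨T, r, hr, hT⟩ := cp_nhd_s10 hW hg
      have hn : ∃ n, m ≤ n ∧ ∀ x ∈ T, ∀ k, x ∈ S k → x ∈ S n := by
        clear hT
        induction T using Finset.induction_on with
        | empty => exact ⟨m, le_rfl, by simp⟩
        | insert a T _ ih =>
          obtain ⟨n, hmn, hn⟩ := ih
          by_cases ha : ∃ k, a ∈ S k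
          · obtain ⟨k, hk⟩ := ha
            refine ⟨max n k, hmn.trans (le_max_left _ _), fun x hx j hj => ?_⟩
            rcases Finset.mem_insert.1 hx with rfl | hx
            · exact hS (le_max_right _ _) hk
            · exact hS (le_max_left _ _) (hn x hx j hj)
          · refine ⟨n, hmn, fun x hx j hj => ?_⟩
            rcases Finset.mem_insert.1 hx with rfl | hx
            · exact absurd ⟨j, hj⟩ ha
            · exact hn x hx j hj
      obtain ⟨n, hmn, hn⟩ := hn
      obtain ⟨h', h1, h2, -⟩ := patch (T ∪ S (n + 1)) (fun _ => univ)
        (fun x _ => ⟨isClopen_univ, trivial⟩) g.1 ((IsLocallyConstant.iff_continuous _).2 g.2)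
        (fun x => if x ∈ S (n + 1) ∧ x ∉ S n then n else g.1 x)
      refine ⟨⟨h', h1.continuous⟩, hT _ fun x hx => ?_, n, hmn, fun x hx hx' => ?_⟩
      · simp only [h2 x (Finset.mem_union_left _ hx)]
        rw [if_neg, dist_self]
        · exact hr
        · rintro ⟨a, b⟩
          exact b (hn x hx _ a)
      · simp only [h2 x (Finset.mem_union_right _ hx)]
        rw [if_pos ⟨hx, hx'⟩]
  obtain ⟨f, -, hf⟩ := hd.inter_open_nonempty univ isOpen_univ
    ⟨⟨fun _ => 0, continuous_const⟩, trivial⟩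
  exact ⟨f.1, f.2, fun m => mem_iInter.1 hf m⟩

lemma stage_step [TotallySeparatedSpace X] {K : Type*} [MetricSpace K] [Nonempty K]
    (G : Set (Cp X K)) (hGo : IsOpen G) (hGd : Dense G) (S : Finset X) (P : Finset K) (ε : ℝ)
    (hε : 0 < ε) : ∃ (S' : Finset X) (P' : Finset K) (ε' : ℝ), S ⊆ S' ∧ P ⊆ P' ∧ 0 < ε' ∧
      ε' ≤ ε / 2 ∧ ∀ φ : X → K, (∀ x, φ x ∈ P) → ∃ ψ : X → K, (∀ x ∈ S', ψ x ∈ P') ∧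
        (∀ x ∈ S, dist (ψ x) (φ x) ≤ ε) ∧
        ∀ g : Cp X K, (∀ x ∈ S', dist (g.1 x) (ψ x) < 4 * ε') → g ∈ G := by
  classical
  obtain ⟨k0⟩ := ‹Nonempty K›
  have key : ∀ θ : S → P, ∃ (g : Cp X K) (T : Finset X) (r : ℝ), 0 < r ∧
      (∀ x : S, dist (g.1 x) (θ x) < ε) ∧
      ∀ g' : Cp X K, (∀ x ∈ T, dist (g'.1 x) (g.1 x) < r) → g' ∈ G := by
    intro θ
    let φ : X → K := fun x => if h : x ∈ S then θ ⟨x, h⟩ else k0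
    obtain ⟨h', h1, h2, -⟩ := patch S (fun _ => univ)
        (fun x _ => ⟨isClopen_univ, trivial⟩) (fun _ => k0) (IsLocallyConstant.const _) φ
    obtain ⟨g, hg1, hg2⟩ := hGd.inter_open_nonempty _ (cp_open S φ ε)
      ⟨⟨h', h1.continuous⟩, fun x hx => by simp only [h2 x hx, dist_self]; exact hε⟩
    obtain ⟨T, r, hr, hT⟩ := cp_nhd_s10 hGo hg2
    refine ⟨g, T, r, hr, fun x => ?_, hT⟩
    have := hg1 x.1 x.2
    simpa [φ] using this
  choose g T r hr hg hG using key
  have hmin : ∃ ρ : ℝ, 0 < ρ ∧ ∀ θ, ρ ≤ r θ := by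
    by_cases hne : Nonempty (S → P)
    · obtain ⟨θ, hθ⟩ := Finite.exists_min r
      exact ⟨r θ, hr θ, hθ⟩
    · exact ⟨1, one_pos, fun θ => absurd ⟨θ⟩ hne⟩
  obtain ⟨ρ, hρ, hρr⟩ := hmin
  let S' : Finset X := S ∪ Finset.univ.biUnion T
  refine ⟨S', P ∪ Finset.univ.biUnion (fun θ => S'.image (g θ).1), min (ε / 2) (ρ / 4),
    Finset.subset_union_left, Finset.subset_union_left, by positivity, min_le_left _ _, ?_⟩
  intro φ hφ
  let θ : S → P := fun x => ⟨φ x, hφ x⟩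
  refine ⟨(g θ).1, ?_, ?_, ?_⟩
  · intro x hx
    refine Finset.mem_union_right _ (Finset.mem_biUnion.2 ⟨θ, Finset.mem_univ _, ?_⟩)
    exact Finset.mem_image_of_mem _ hx
  · intro x hx
    exact (hg θ ⟨x, hx⟩).le
  · intro g' hg'
    apply hG θ
    intro x hx
    have h1 : x ∈ S' :=
      Finset.mem_union_right _ (Finset.mem_biUnion.2 ⟨θ, Finset.mem_univ _, hx⟩)
    have h2 := hg' x h1
    have h3 := hρr θ
    have h4 := min_le_right (ε / 2) (ρ / 4)
    linarith

lemma dep_seq {T : ℕ → Type*} (R : ∀ n, T n → T (n + 1) → Prop) (t0 : T 0)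
    (H : ∀ n t, ∃ t', R n t t') : ∃ t : ∀ n, T n, t 0 = t0 ∧ ∀ n, R n (t n) (t (n + 1)) := by
  choose F hF using H
  exact ⟨fun n => Nat.rec t0 (fun n t => F n t) n, rfl, fun n => hF n _⟩

lemma tail_bound {K : Type*} [PseudoMetricSpace K] (u : ℕ → K) (ε : ℕ → ℝ) (hpos : ∀ n, 0 < ε n)
    (hε : ∀ n, ε (n + 1) ≤ ε n / 2) (N : ℕ) (hu : ∀ n, N ≤ n → dist (u (n + 1)) (u n) ≤ ε n) :
    ∀ n, N ≤ n → ∀ k, dist (u (n + k)) (u n) ≤ 2 * ε n - 2 * ε (n + k) := by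
  intro n hn k
  induction k with
  | zero => simp
  | succ k ih =>
    have h1 := hu (n + k) (by omega)
    have h2 := dist_triangle (u (n + k + 1)) (u (n + k)) (u n)
    have h3 := hε (n + k)
    have h4 := hpos (n + k)
    rw [← add_assoc]
    linarith

lemma eps_small (ε : ℕ → ℝ) (hε : ∀ n, ε (n + 1) ≤ ε n / 2) (δ : ℝ) (hδ : 0 < δ) (N : ℕ) :
    ∃ n, N ≤ n ∧ ε n < δ := by
  have h : ∀ n, ε n ≤ (1 / 2) ^ n * ε 0 := by
    intro n
    induction n with
    | zero => simp
    | succ n ih =>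
      have := hε n
      rw [pow_succ]
      linarith
  have h2 : Filter.Tendsto (fun n : ℕ => (1 / 2 : ℝ) ^ n * ε 0) Filter.atTop (𝓝 (0 * ε 0)) :=
    (tendsto_pow_atTop_nhds_zero_of_lt_one (by norm_num) (by norm_num)).mul_const _
  rw [zero_mul] at h2
  obtain ⟨n, hn1, hn2⟩ := ((h2.eventually (gt_mem_nhds hδ)).and (Filter.eventually_ge_atTop N)).exists
  exact ⟨n, hn2, (h n).trans_lt hn1⟩

lemma a_to_c_aux [TotallySeparatedSpace X] [BaireSpace (Cp X ℕ)] {K : Type*} [MetricSpace K]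
    [CompleteSpace K] [Nonempty K] (G : ℕ → Set (Cp X K)) (hGo : ∀ n, IsOpen (G n))
    (hGd : ∀ n, Dense (G n)) (hG : Antitone G) : Dense (⋂ n, G n) := by
  classical
  rw [dense_iff_inter_open]
  rintro W hW ⟨w, hw⟩
  obtain ⟨S0, r, hr, hS0⟩ := cp_nhd_s10 hW hw
  obtain ⟨k0⟩ := id ‹Nonempty K›
  obtain ⟨t, ht0, ht⟩ := dep_seq (T := fun _ => {s : Finset X × Finset K × ℝ // 0 < s.2.2})
    (fun n s s' => s.1.1 ⊆ s'.1.1 ∧ s.1.2.1 ⊆ s'.1.2.1 ∧ s'.1.2.2 ≤ s.1.2.2 / 2 ∧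
      ∀ φ : X → K, (∀ x, φ x ∈ s.1.2.1) → ∃ ψ : X → K, (∀ x ∈ s'.1.1, ψ x ∈ s'.1.2.1) ∧
        (∀ x ∈ s.1.1, dist (ψ x) (φ x) ≤ s.1.2.2) ∧
        ∀ g : Cp X K, (∀ x ∈ s'.1.1, dist (g.1 x) (ψ x) < 4 * s'.1.2.2) → g ∈ G n)
    ⟨(S0, insert k0 (S0.image w.1), r / 4), by positivity⟩
    (by
      rintro n ⟨⟨S, P, ε⟩, hε⟩
      obtain ⟨S', P', ε', h1, h2, h3, h4, h5⟩ := stage_step (G n) (hGo n) (hGd n) S P ε hε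
      exact ⟨⟨(S', P', ε'), h3⟩, h1, h2, h4, h5⟩)
  let S : ℕ → Finset X := fun n => (t n).1.1
  let P : ℕ → Finset K := fun n => (t n).1.2.1
  let ε : ℕ → ℝ := fun n => (t n).1.2.2
  have hSs : ∀ n, S n ⊆ S (n + 1) := fun n => (ht n).1
  have hPs : ∀ n, P n ⊆ P (n + 1) := fun n => (ht n).2.1
  have hεs : ∀ n, ε (n + 1) ≤ ε n / 2 := fun n => (ht n).2.2.1
  have hεp : ∀ n, 0 < ε n := fun n => (t n).2
  have hst : ∀ n, ∀ φ : X → K, (∀ x, φ x ∈ P n) → ∃ ψ : X → K, (∀ x ∈ S (n + 1), ψ x ∈ P (n + 1)) ∧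
        (∀ x ∈ S n, dist (ψ x) (φ x) ≤ ε n) ∧
        ∀ g : Cp X K, (∀ x ∈ S (n + 1), dist (g.1 x) (ψ x) < 4 * ε (n + 1)) → g ∈ G n :=
    fun n => (ht n).2.2.2
  have hS0' : S 0 = S0 := by simp only [S, ht0]
  have hP0' : P 0 = insert k0 (S0.image w.1) := by simp only [P, ht0]
  have hε0' : ε 0 = r / 4 := by simp only [ε, ht0]
  clear_value S P ε
  clear ht ht0 t
  have hSm : Monotone S := monotone_nat_of_le_succ hSs
  obtain ⟨f, hf, hfn⟩ := generic_nat S hSm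
  obtain ⟨h00, h01, h02, h03⟩ := patch S0 (fun _ => univ)
        (fun x _ => ⟨isClopen_univ, trivial⟩) (fun _ => k0) (IsLocallyConstant.const _) w.1
  obtain ⟨h, hh0, hh⟩ := dep_seq (T := fun n => {h : X → K // IsLocallyConstant h ∧ ∀ x, h x ∈ P n})
    (fun n h h' => (∀ y, (f y ≠ n ∨ y ∈ S n) → dist (h'.1 y) (h.1 y) ≤ ε n) ∧
      ((∀ x ∈ S (n + 1), x ∉ S n → f x = n) →
        ∀ g : Cp X K, (∀ x ∈ S (n + 1), dist (g.1 x) (h'.1 x) < 4 * ε (n + 1)) → g ∈ G n))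
    ⟨h00, h01, by
      intro x
      rw [hP0']
      rcases h03 x with h | ⟨y, hy, -, h⟩
      · rw [h]; simp
      · rw [h]; exact Finset.mem_insert_of_mem (Finset.mem_image_of_mem _ hy)⟩
    (by
      rintro n ⟨h, hlc, hP⟩
      by_cases good : ∀ x ∈ S (n + 1), x ∉ S n → f x = n
      · obtain ⟨ψ, hψ1, hψ2, hψ3⟩ := hst n h hP
        obtain ⟨h', h1, h2, h3⟩ := patch (S (n + 1))
          (fun x => h ⁻¹' {h x} ∩ f ⁻¹' (if x ∈ S n then univ else {n}))
          (by
            intro x hx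
            refine ⟨(hlc.isClopen_fiber _).inter ((isClopen_discrete _).preimage hf), rfl, ?_⟩
            by_cases hxS : x ∈ S n
            · simp [hxS]
            · simp [hxS, good x hx hxS]) h hlc ψ
        refine ⟨⟨h', h1, ?_⟩, ?_, ?_⟩
        · intro y
          rcases h3 y with e | ⟨x, hx, -, e⟩
          · rw [e]; exact hPs n (hP y)
          · rw [e]; exact hψ1 x hx
        · rintro y hy
          change dist (h' y) (h y) ≤ ε n
          by_cases hyS : y ∈ S n
          · rw [h2 y (hSs n hyS)]
            exact hψ2 y hyS
          · have hfy : f y ≠ n := hy.resolve_right hyS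
            rcases h3 y with e | ⟨x, hx, ⟨hy1, hy2⟩, e⟩
            · rw [e, dist_self]; exact (hεp n).le
            · by_cases hxS : x ∈ S n
              · have : h y = h x := hy1
                rw [e, this]
                exact hψ2 x hxS
              · simp only [hxS, if_false, mem_preimage] at hy2
                exact absurd hy2 hfy
        · intro _ g hg
          apply hψ3
          intro x hx
          rw [← h2 x hx]
          exact hg x hx
      · refine ⟨⟨h, hlc, fun x => hPs n (hP x)⟩, ?_, fun h => absurd h good⟩
        intro y _
        change dist (h y) (h y) ≤ ε n
        rw [dist_self]
        exact (hεp n).le)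
  let u : ℕ → X → K := fun n => (h n).1
  have huc : ∀ n, Continuous (u n) := fun n => (h n).2.1.continuous
  have hu0 : u 0 = h00 := by simp only [u, hh0]
  have hu1 : ∀ n y, (f y ≠ n ∨ y ∈ S n) → dist (u (n + 1) y) (u n y) ≤ ε n := fun n => (hh n).1
  have hu2 : ∀ n, (∀ x ∈ S (n + 1), x ∉ S n → f x = n) →
        ∀ g : Cp X K, (∀ x ∈ S (n + 1), dist (g.1 x) (u (n + 1) x) < 4 * ε (n + 1)) → g ∈ G n :=
    fun n => (hh n).2
  clear_value u
  clear hh hh0 h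
  -- the limit
  have hlim : ∀ y, ∃ l, Filter.Tendsto (fun n => u n y) Filter.atTop (𝓝 l) := by
    intro y
    apply cauchySeq_tendsto_of_complete
    rw [Metric.cauchySeq_iff']
    intro δ hδ
    obtain ⟨n, hn, hnδ⟩ := eps_small ε hεs (δ / 2) (by positivity) (f y + 1)
    refine ⟨n, fun m hm => ?_⟩
    obtain ⟨k, rfl⟩ := Nat.exists_eq_add_of_le hm
    have := tail_bound (fun n => u n y) ε hεp hεs (f y + 1)
      (fun n hn => hu1 n y (Or.inl (by omega))) n hn k
    have := hεp (n + k)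
    linarith
  choose l hl using hlim
  have hbound : ∀ y N, (∀ n, N ≤ n → f y ≠ n ∨ y ∈ S n) → ∀ n, N ≤ n →
      dist (l y) (u n y) ≤ 2 * ε n := by
    intro y N hN n hn
    refine le_of_tendsto ((hl y).dist tendsto_const_nhds) ?_
    filter_upwards [Filter.eventually_ge_atTop n] with m hm
    obtain ⟨k, rfl⟩ := Nat.exists_eq_add_of_le hm
    have := tail_bound (fun n => u n y) ε hεp hεs N (fun n hn => hu1 n y (hN n hn)) n hn k
    have := hεp (n + k)
    linarith
  have hlc : Continuous l := by
    rw [continuous_iff_continuousAt]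
    intro y
    rw [Metric.continuousAt_iff']
    intro δ hδ
    obtain ⟨n, hn, hnδ⟩ := eps_small ε hεs (δ / 6) (by positivity) (f y + 1)
    have e1 : ∀ᶠ z in 𝓝 y, f z = f y :=
      ((isOpen_discrete {f y}).preimage hf).mem_nhds rfl
    have e2 := Metric.continuousAt_iff'.1 ((huc n).continuousAt (x := y)) (δ / 3) (by positivity)
    filter_upwards [e1, e2] with z hz1 hz2
    have b1 := hbound y (f y + 1) (fun n hn => Or.inl (by omega)) n hn
    have b2 := hbound z (f y + 1) (fun n hn => Or.inl (by omega)) n hn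
    have := dist_triangle (l z) (u n z) (l y)
    have := dist_triangle (u n z) (u n y) (l y)
    rw [dist_comm] at b1
    linarith
  refine ⟨⟨l, hlc⟩, hS0 _ ?_, ?_⟩
  · intro x hx
    have := hbound x 0 (fun n _ => Or.inr (hSm (Nat.zero_le n) (hS0' ▸ hx))) 0 le_rfl
    rw [hu0, h02 x hx, hε0'] at this
    change dist (l x) (w.1 x) < r
    linarith
  · rw [mem_iInter]
    intro m
    obtain ⟨n, hmn, hn⟩ := hfn m
    apply hG hmn
    apply hu2 n hn
    intro x hx
    have := hbound x (n + 1) (fun k hk => Or.inr (hSm hk hx)) (n + 1) le_rfl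
    have := hεp (n + 1)
    change dist (l x) _ < _
    linarith

lemma a_to_c [TotallySeparatedSpace X] [BaireSpace (Cp X ℕ)] (K : Type*) [MetricSpace K]
    [CompleteSpace K] : BaireSpace (Cp X K) := by
  constructor
  intro G hGo hGd
  by_cases hK : Nonempty K
  · have hfin : ∀ n, IsOpen (⋂ i ≤ n, G i) ∧ Dense (⋂ i ≤ n, G i) := by
      intro n
      induction n with
      | zero => simpa using ⟨hGo 0, hGd 0⟩
      | succ n ih =>
        have : (⋂ i ≤ n + 1, G i) = (⋂ i ≤ n, G i) ∩ G (n + 1) := by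
          ext x
          simp only [mem_iInter, mem_inter_iff]
          constructor
          · exact fun h => ⟨fun i hi => h i (by omega), h _ le_rfl⟩
          · rintro ⟨h1, h2⟩ i hi
            rcases Nat.lt_or_ge n i with h | h
            · have : i = n + 1 := by omega
              exact this ▸ h2
            · exact h1 i h
        rw [this]
        exact ⟨ih.1.inter (hGo _), ih.2.inter_of_isOpen_left (hGd _) ih.1⟩
    have := a_to_c_aux (fun n => ⋂ i ≤ n, G i) (fun n => (hfin n).1) (fun n => (hfin n).2)
      (fun m n hmn x hx => by
        simp only [mem_iInter] at hx ⊢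
        exact fun i hi => hx i (hi.trans hmn))
    refine this.mono fun x hx => ?_
    simp only [mem_iInter] at hx ⊢
    exact fun n => hx n n le_rfl
  · intro w
    have hX : IsEmpty X := ⟨fun x => hK ⟨w.1 x⟩⟩
    have : Subsingleton (Cp X K) := ⟨fun a b => by ext x; exact hX.elim x⟩
    apply subset_closure
    rw [mem_iInter]
    intro n
    obtain ⟨g, -, hg⟩ := (hGd n).inter_open_nonempty univ isOpen_univ ⟨w, trivial⟩
    exact Subsingleton.elim g w ▸ hg

end helpers

/-- For a totally disconnected (totally separated) Tychonoff space `X`, the following are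
equivalent: (a) `C_p(X, ℕ)` is Baire (`ℕ` discrete); (b) `C_p(X, M)` is Baire for some
non-compact zero-dimensional complete metric space `M` (zero-dimensional: `M` has a base
of clopen sets); (c) `C_p(X, K)` is Baire for every complete metric space `K`. -/
theorem statement10 (X : Type*) [TopologicalSpace X] [T1Space X] [CompletelyRegularSpace X]
    [TotallySeparatedSpace X] :
    List.TFAE
      [BaireSpace (Cp X ℕ),
       ∃ (M : Type) (_ : MetricSpace M), CompleteSpace M ∧ ¬ CompactSpace M ∧
         (∃ B : Set (Set M), (∀ s ∈ B, IsClopen s) ∧ TopologicalSpace.IsTopologicalBasis B) ∧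
         BaireSpace (Cp X M),
       ∀ (K : Type) (_ : MetricSpace K), CompleteSpace K → BaireSpace (Cp X K)] := by
  tfae_have 1 → 3 := by
    intro h K _ hK
    exact a_to_c K
  tfae_have 3 → 2 := by
    intro h
    refine ⟨ℕ, inferInstance, inferInstance, ?_, ⟨{s | IsOpen s}, fun s _ => isClopen_discrete s,
      TopologicalSpace.isTopologicalBasis_opens⟩, h ℕ inferInstance inferInstance⟩
    intro hc
    exact not_finite_iff_infinite.2 (inferInstance : Infinite ℕ) finite_of_compact_of_discrete
  tfae_have 2 → 1 := by
    rintro ⟨M, _, hc, hn, ⟨B, hB, hB'⟩, hBaire⟩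
    obtain ⟨p, s, hp, hs⟩ := exists_retr M hn B hB hB'
    exact b_to_a M p s hp hs
  tfae_finish
end

section
/- Let X be an infinite pseudocompact Tychonoff space and let Y be a topological space such that C_p(X, Y) is dense in the product space Y^X. If C_p(X, Y) is a Baire space, then Y is pseudocompact. -/
open Set Topology

/-- A space is pseudocompact if every continuous real-valued function on it is bounded. -/
def IsPseudocompact (X : Type*) [TopologicalSpace X] : Prop :=
  ∀ f : X → ℝ, Continuous f → ∃ C : ℝ, ∀ x, |f x| ≤ C

/-- Let `X` be an infinite pseudocompact Tychonoff space and `Y` a space such that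
`C_p(X, Y)` is dense in `Y^X`. If `C_p(X, Y)` is Baire, then `Y` is pseudocompact. -/
theorem statement12 (X Y : Type*) [TopologicalSpace X] [T1Space X] [CompletelyRegularSpace X]
    [Infinite X] (hX : IsPseudocompact X) [TopologicalSpace Y]
    (hdense : Dense (Set.range (Subtype.val : Cp X Y → X → Y)))
    (hBaire : BaireSpace (Cp X Y)) :
    IsPseudocompact Y := by
  classical
  intro φ hφ
  by_contra hcon
  push Not at hcon
  obtain ⟨y0, -⟩ := hcon 0
  haveI : Nonempty (Cp X Y) := ⟨⟨fun _ => y0, continuous_const⟩⟩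
  let F : ℕ → Set (Cp X Y) := fun n => {f | ∀ x, |φ (f.1 x)| ≤ n}
  have hcont : ∀ x : X, Continuous (fun f : Cp X Y => |φ (f.1 x)|) := fun x =>
    (hφ.comp ((continuous_apply x).comp continuous_subtype_val)).abs
  have hF : ∀ n, IsClosed (F n) := by
    intro n
    simp only [F, Set.setOf_forall]
    exact isClosed_iInter fun x => isClosed_le (hcont x) continuous_const
  have hU : ⋃ n, F n = univ := by
    refine Set.eq_univ_of_forall fun f => ?_
    obtain ⟨C, hC⟩ := hX (fun x => φ (f.1 x)) (hφ.comp f.2)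
    obtain ⟨n, hn⟩ := exists_nat_ge C
    exact Set.mem_iUnion.2 ⟨n, fun x => (hC x).trans hn⟩
  obtain ⟨n, f, hf⟩ := nonempty_interior_of_iUnion_of_closed hF hU
  obtain ⟨W, hW, hWe⟩ := isOpen_induced_iff.1 (isOpen_interior (s := F n))
  have hfW : f.1 ∈ W := by
    rw [← hWe] at hf
    exact hf
  obtain ⟨I, u, hu, hsub⟩ := isOpen_pi_iff.1 hW f.1 hfW
  obtain ⟨x, hx⟩ := Infinite.exists_notMem_finset I
  obtain ⟨y, hy⟩ := hcon n
  have hV : IsOpen (W ∩ {g : X → Y | (n : ℝ) < |φ (g x)|}) :=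
    hW.inter (isOpen_lt continuous_const (hφ.comp (continuous_apply x)).abs)
  obtain ⟨g, ⟨hgW, hgn⟩, ⟨h, rfl⟩⟩ := hdense.inter_open_nonempty _ hV
    ⟨Function.update f.1 x y, hsub (fun i hi => by
      have hne : i ≠ x := fun e => hx (e ▸ hi)
      rw [Function.update_of_ne hne]
      exact (hu i hi).2), by simpa using hy⟩
  have hh : h ∈ interior (F n) := by
    rw [← hWe]
    exact hgW
  have h2 : |φ (h.1 x)| ≤ n := interior_subset hh x
  exact absurd hgn (not_lt.2 h2)
end
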